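/- arXiv:2504.02290 — 3 statements merged into one kernel-verified Lean document; each statement's English description precedes it below -/
import Mathlib

section
/- Let n be a positive integer and let λ, μ ∈ P[n]. Then in n variables x=(x_1,…,x_n), the product of stable Grothendieck polynomials expands as G_λ(x)·G_μ(x) = Σ_{ν∈P[n]} (−1)^{|ν|−|λ|−|μ|} C^ν_{λ,μ} G_ν(x), where C^ν_{λ,μ} equals the number of μ-dominant set-valued contratableaux of shape λ with entries ≤ n and weight ν−μ. -/
/-!
The proof works with marked Gelfand–Tsetlin patterns (`IsPat`), which encode set-valued tableaux
bijectively (`toT`, `patOf`): row `v` of the pattern records the shape covered by the first `v`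
letters, and the marks record which letters share a box with a smaller one.

*Fibers.* Fix all of a pattern except the first sites `0, …, r` of row `i + 1`, together with the
marks governed by them. The remaining freedom factors into independent sites, and each site has
an explicit generating function, symmetric in `x_i` and `x_{i+1}` up to simple factors `1 - x`
(`siteSum_eq`). Hence the sum over a fiber, even with a lower bound `t` imposed at the site `r`,
is a symmetric factor times an explicit monomial and possibly `1 - x_{i+1}` (`fiber_sum`). With
`r = n` this shows that the Grothendieck polynomial is symmetric (`grothP_symm`).

*Cancellation.* Let `bialt b` be the antisymmetrization of
`∏ v, x_v ^ (b v + v) * (1 - x_v) ^ (n - 1 - v)`, for `b` weakly increasing. By symmetry,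
`G_la * bialt b` is the signed sum of `bialt (b + wt D)` over all patterns `D` of shape `la`.
Group the non-dominant patterns by their first violation `(i, r)` of dominance. The members of a
class that agree off the sites `0, …, r` of row `i + 1` form exactly a fiber with a lower bound,
and that bound makes the fiber sum times the monomial invariant under `x_i ↔ x_{i+1}`; hence its
antisymmetrization vanishes (`sum_not_dom`), and only dominant patterns survive
(`grothP_mul_bialt`).

*Bialternants.* For `b = 0` a single dominant pattern remains (`eq_topPat`), which gives the
bialternant formula `G_la * bialt 0 = bialt (reversal of la)` (`grothP_bialt`). Taking for `b` the
reversal of `mu` and cancelling `bialt 0 ≠ 0` expands `G_la * G_mu` over the dominant patterns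
(`grothP_mul`).

*Translation.* Rotating a tableau and reversing the alphabet (`flipT`) turns dominance of a
pattern into `mu`-dominance of the row word of a contratableau (`lamDominant_flipT_iff`), because
each row word is weakly decreasing. Collecting the dominant patterns by weight then gives the
structure constants (`ncard_eq`).
-/

/-!
Common combinatorial definitions: partitions, (skew) set-valued tableaux,
contratableaux, reading words, dominance, Gelfand-Tsetlin patterns, and the
maps Υ and Ω.  Partitions are encoded as functions `ℕ → ℕ` whose parts are
`lam 1, lam 2, …` (with `lam 0 = 0` as a normalization).  Tableaux are encoded
as functions `ℕ → ℕ → Finset ℕ` assigning to each box (row, column), both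
indexed from `1`, its (finite) set of entries, with value `∅` outside the
shape. -/

/-- `lam` is a partition with at most `n` nonzero parts `lam 1 ≥ lam 2 ≥ ⋯`. -/
def IsPartition (n : ℕ) (lam : ℕ → ℕ) : Prop :=
  lam 0 = 0 ∧ (∀ i, 1 ≤ i → lam (i + 1) ≤ lam i) ∧ (∀ i, n < i → lam i = 0)

/-- `|lam|`, the sum of the parts of a partition in `P[n]`. -/
def sumParts (n : ℕ) (lam : ℕ → ℕ) : ℕ := ∑ i ∈ Finset.Icc 1 n, lam i

/-- The boxes of the skew Young diagram `lam/mu` (rows indexed from the top,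
starting at `1`; columns from the left, starting at `1`). -/
def SkewBox (lam mu : ℕ → ℕ) (i j : ℕ) : Prop :=
  1 ≤ i ∧ mu i < j ∧ j ≤ lam i

/-- The boxes of the straight Young diagram of `mu`. -/
def ShapeBox (mu : ℕ → ℕ) (i j : ℕ) : Prop :=
  1 ≤ i ∧ 1 ≤ j ∧ j ≤ mu i

/-- A semi-standard set-valued tableau with entries in `[n] = {1, …, n}` on a
given set `box` of boxes (rows indexed from the top): every box carries a
nonempty subset of `[n]`, rows weakly increase from left to right, columns
strictly increase from top to bottom, and the filling vanishes off the shape. -/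
def IsSSVT (n : ℕ) (box : ℕ → ℕ → Prop) (T : ℕ → ℕ → Finset ℕ) : Prop :=
  (∀ i j, box i j → (T i j).Nonempty) ∧
  (∀ i j, box i j → T i j ⊆ Finset.Icc 1 n) ∧
  (∀ i j, ¬ box i j → T i j = ∅) ∧
  (∀ i j, box i j → box i (j + 1) → ∀ a ∈ T i j, ∀ b ∈ T i (j + 1), a ≤ b) ∧
  (∀ i j, box i j → box (i + 1) j → ∀ a ∈ T i j, ∀ b ∈ T (i + 1) j, a < b)

/-- The boxes of the rotated shape `C(lam)` (for `lam ∈ P[n]`): the `j`-th row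
from the *bottom* (`1 ≤ j ≤ n`) consists of `lam j` right-justified boxes, in
columns `lam 1 - lam j + 1, …, lam 1`. -/
def ContraBox (n : ℕ) (lam : ℕ → ℕ) (j c : ℕ) : Prop :=
  1 ≤ j ∧ j ≤ n ∧ lam 1 - lam j < c ∧ c ≤ lam 1

/-- A set-valued contratableau of shape `lam` with entries in `[n]`: a
semi-standard set-valued tableau of shape `C(lam)`.  Here `T j c` is the box in
the `j`-th row from the bottom and column `c`; "columns strictly increase from
top to bottom" says entries of row `j+1` (which lies above row `j`) are
strictly smaller than those below them in row `j`. -/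
def IsSVCT (n : ℕ) (lam : ℕ → ℕ) (T : ℕ → ℕ → Finset ℕ) : Prop :=
  (∀ j c, ContraBox n lam j c → (T j c).Nonempty) ∧
  (∀ j c, ContraBox n lam j c → T j c ⊆ Finset.Icc 1 n) ∧
  (∀ j c, ¬ ContraBox n lam j c → T j c = ∅) ∧
  (∀ j c, ContraBox n lam j c → ContraBox n lam j (c + 1) →
    ∀ a ∈ T j c, ∀ b ∈ T j (c + 1), a ≤ b) ∧
  (∀ j c, ContraBox n lam j c → ContraBox n lam (j + 1) c →
    ∀ a ∈ T (j + 1) c, ∀ b ∈ T j c, a < b)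

/-- The entries of one cell, read in decreasing order. -/
def cellWord (S : Finset ℕ) : List ℕ := (S.sort (· ≤ ·)).reverse

/-- The row word: rows are read from top to bottom, each row from right to
left, the entries of each cell in decreasing order (reading over the rectangle
with `R` rows and `W` columns, which covers the shape; cells off the shape are
empty and contribute nothing). -/
def rowWordRect (R W : ℕ) (T : ℕ → ℕ → Finset ℕ) : List ℕ :=
  ((List.range R).map (fun i =>
    (((List.range W).reverse).map (fun j => cellWord (T (i + 1) (j + 1)))).flatten)).flatten

/-- The column word: columns are read from rightmost to leftmost, each column
from top to bottom, the entries of each cell in decreasing order. -/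
def colWordRect (R W : ℕ) (T : ℕ → ℕ → Finset ℕ) : List ℕ :=
  (((List.range W).reverse).map (fun j =>
    ((List.range R).map (fun i => cellWord (T (i + 1) (j + 1)))).flatten)).flatten

/-- The row word of a contratableau whose rows are indexed from the bottom
(`1, …, n`): rows are read from top to bottom (i.e. row `n` first), each row
from right to left, cell entries in decreasing order. -/
def contraRowWord (n W : ℕ) (T : ℕ → ℕ → Finset ℕ) : List ℕ :=
  (((List.range n).reverse).map (fun j =>
    (((List.range W).reverse).map (fun c => cellWord (T (j + 1) (c + 1)))).flatten)).flatten

/-- A word is dominant if every prefix contains at least as many `i`'s as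
`(i+1)`'s, for every `i ≥ 1`. -/
def Dominant (u : List ℕ) : Prop :=
  ∀ t i, 1 ≤ i → (u.take t).count (i + 1) ≤ (u.take t).count i

/-- The row word of the superstandard tableau `T_lam` of shape and weight
`lam` (its `i`-th row consists of `lam i` many `i`'s), for `lam ∈ P[n]`. -/
def superWord (n : ℕ) (lam : ℕ → ℕ) : List ℕ :=
  ((List.range n).map (fun i => List.replicate (lam (i + 1)) (i + 1))).flatten

/-- A word `u` is `lam`-dominant if `r(T_lam) * u` is dominant. -/
def LamDominant (n : ℕ) (lam : ℕ → ℕ) (u : List ℕ) : Prop :=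
  Dominant (superWord n lam ++ u)

/-- The number of occurrences of the entry `v` in row `r` of `T`
(columns `1, …, W`). -/
def rowOcc (W : ℕ) (T : ℕ → ℕ → Finset ℕ) (r v : ℕ) : ℕ :=
  ∑ c ∈ Finset.Icc 1 W, if v ∈ T r c then 1 else 0

/-- The number of occurrences of the entry `v` in `T` (the `v`-th coordinate
of the weight `wt T`), rows `1, …, R` and columns `1, …, W`. -/
def wtT (R W : ℕ) (T : ℕ → ℕ → Finset ℕ) (v : ℕ) : ℕ :=
  ∑ r ∈ Finset.Icc 1 R, rowOcc W T r v

/-- The total number of entries `|T|` of a set-valued tableau. -/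
def sizeT (R W : ℕ) (T : ℕ → ℕ → Finset ℕ) : ℕ :=
  ∑ r ∈ Finset.Icc 1 R, ∑ c ∈ Finset.Icc 1 W, (T r c).card

/-- A Gelfand-Tsetlin pattern of size `n`: a triangular array of integers
`x i j` (`1 ≤ j ≤ i ≤ n`) with `NE_{i,j} = x i j - x (i-1) j ≥ 0` and
`SE_{i,j} = x (i-1) j - x i (j+1) ≥ 0` for all `1 ≤ j < i ≤ n`, normalized to
vanish outside the triangle. -/
def IsGT (n : ℕ) (x : ℕ → ℕ → ℤ) : Prop :=
  (∀ i j, 1 ≤ j → j < i → i ≤ n → x (i - 1) j ≤ x i j ∧ x i (j + 1) ≤ x (i - 1) j) ∧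
  (∀ i j, ¬ (1 ≤ j ∧ j ≤ i ∧ i ≤ n) → x i j = 0)

/-- A GT pattern in `GT_ℤ(lam)`: bottom row equal to `lam`. -/
def IsGTZ (n : ℕ) (lam : ℕ → ℕ) (x : ℕ → ℕ → ℤ) : Prop :=
  IsGT n x ∧ ∀ j, 1 ≤ j → j ≤ n → x n j = (lam j : ℤ)

/-- A valid set of marks on a GT pattern: `M ⊆ {(i,j) : 1 ≤ j < i ≤ n` and
`SE_{i,j}(x) > 0}`. -/
def MarksOK (n : ℕ) (x : ℕ → ℕ → ℤ) (M : Finset (ℕ × ℕ)) : Prop :=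
  ∀ p ∈ M, 1 ≤ p.2 ∧ p.2 < p.1 ∧ p.1 ≤ n ∧ 0 < x (p.1 - 1) p.2 - x p.1 (p.2 + 1)

/-- A marked GT pattern in `MGT_ℤ(lam)`. -/
def IsMGTZ (n : ℕ) (lam : ℕ → ℕ) (x : ℕ → ℕ → ℤ) (M : Finset (ℕ × ℕ)) : Prop :=
  IsGTZ n lam x ∧ MarksOK n x M

/-- The map `Υ` from marked GT patterns to set-valued tableaux, in closed form:
the entry `i` lies in the box in row `r`, column `c` iff `x_{i-1,r} < c ≤ x_{i,r}`
(the horizontal strip `x^{(i)}/x^{(i-1)}` is filled with `i`'s), or `(i,r) ∈ M`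
and `c = x_{i-1,r}` (for a mark, `i` is added to the rightmost box of row `r`
of `X^{(i-1)}`, the box containing `i-1` there). -/
def Upsilon (n : ℕ) (x : ℕ → ℕ → ℤ) (M : Finset (ℕ × ℕ)) : ℕ → ℕ → Finset ℕ :=
  fun r c => (Finset.Icc 1 n).filter (fun i =>
    (x (i - 1) r < (c : ℤ) ∧ (c : ℤ) ≤ x i r) ∨ ((i, r) ∈ M ∧ (c : ℤ) = x (i - 1) r))

/-- The map `Ω` from marked GT patterns to set-valued contratableaux of shape
`lam`, in closed form.  Rows are indexed from the bottom and the box in row `j`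
and column `c` is the `d`-th box from the right where `d = lam 1 + 1 - c`.
The entry `v = n + 1 - i` lies there iff `y_{i-1,j} < d ≤ y_{i,j}` (the boxes
of `C(y^{(i)})/C(y^{(i-1)})` are filled with `n+1-i`), or `(i,j) ∈ M` and
`d = y_{i-1,j}` (for a mark, `n+1-i` is added to the leftmost box of row `j`
of `Y^{(i-1)}`, the box containing `n+2-i` there). -/
def Omega (n : ℕ) (lam : ℕ → ℕ) (y : ℕ → ℕ → ℤ) (M : Finset (ℕ × ℕ)) : ℕ → ℕ → Finset ℕ :=
  fun j c => (Finset.Icc 1 n).filter (fun v =>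
    (y (n - v) j < (lam 1 : ℤ) + 1 - (c : ℤ) ∧ (lam 1 : ℤ) + 1 - (c : ℤ) ≤ y (n + 1 - v) j) ∨
      ((n + 1 - v, j) ∈ M ∧ (lam 1 : ℤ) + 1 - (c : ℤ) = y (n - v) j))

/-- `N_{i,k} = lam i + (number of occurrences of i in the top k rows of T)`. -/
def Ndom (W : ℕ) (lam : ℕ → ℕ) (T : ℕ → ℕ → Finset ℕ) (i k : ℕ) : ℕ :=
  lam i + ∑ r ∈ Finset.Icc 1 k, rowOcc W T r i

/-- `N↑_{i,k} = mu i + (number of occurrences of i in rows k, k+1, …, n from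
the bottom of a contratableau)`. -/
def Nup (n W : ℕ) (mu : ℕ → ℕ) (T : ℕ → ℕ → Finset ℕ) (i k : ℕ) : ℕ :=
  mu i + ∑ r ∈ Finset.Icc k n, rowOcc W T r i

/-- The GT pattern `Y_T` with entries `y_{i,j} = N_{n-i+j, n-i}` (normalized to
`0` outside the triangle). -/
def Ypat (n W : ℕ) (lam : ℕ → ℕ) (T : ℕ → ℕ → Finset ℕ) : ℕ → ℕ → ℤ :=
  fun i j => if 1 ≤ j ∧ j ≤ i ∧ i ≤ n then (Ndom W lam T (n - i + j) (n - i) : ℤ) else 0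

/-- The transported mark set `M' = {(n+1-j, i-j) : (i,j) ∈ M}`. -/
def MarksOf (n : ℕ) (M : Finset (ℕ × ℕ)) : Finset (ℕ × ℕ) :=
  M.image (fun p => (n + 1 - p.2, p.1 - p.2))

/-- The stable Grothendieck polynomial `G_lam(x_1, …, x_n)`, a polynomial in
variables `X 1, …, X n`. -/
noncomputable def Groth (n : ℕ) (lam : ℕ → ℕ) : MvPolynomial ℕ ℤ :=
  ∑ᶠ T ∈ {T : ℕ → ℕ → Finset ℕ | IsSSVT n (ShapeBox lam) T},
    (-1 : MvPolynomial ℕ ℤ) ^ (sizeT n (lam 1) T - sumParts n lam) *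
      ∏ k ∈ Finset.Icc 1 n, MvPolynomial.X k ^ wtT n (lam 1) T k

/-! ### The one-site generating function -/

/-- The symmetric factor of the generating function of one site (see `siteSum_eq`). -/
def symPart {R : Type*} [CommRing R] (p q : Bool) (m : ℕ) (X Y : R) : R :=
  ∑ k ∈ Finset.range (m + 1), X ^ k * Y ^ (m - k) *
    (if p = false ∧ k < m then 1 - X else 1) * (if q = false ∧ 0 < k then 1 - Y else 1)

lemma hsum_comm {R : Type*} [CommRing R] (m : ℕ) (X Y : R) :
    ∑ k ∈ Finset.range (m + 1), X ^ k * Y ^ (m - k)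
      = ∑ k ∈ Finset.range (m + 1), Y ^ k * X ^ (m - k) := by
  rw [← Finset.sum_range_reflect]
  refine Finset.sum_congr rfl fun k hk => ?_
  have hk := Finset.mem_range.1 hk
  rw [show m + 1 - 1 - k = m - k by omega, show m - (m - k) = k by omega, mul_comm]

lemma hsum_mark_comm {R : Type*} [CommRing R] (m : ℕ) (X Y : R) :
    ∑ k ∈ Finset.range (m + 1), X ^ k * Y ^ (m - k) * (if k < m then 1 - X else 1)
      = ∑ k ∈ Finset.range (m + 1), Y ^ k * X ^ (m - k) * (if k < m then 1 - Y else 1) := by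
  have key : ∀ X Y : R,
      ∑ k ∈ Finset.range (m + 1), X ^ k * Y ^ (m - k) * (if k < m then 1 - X else 1)
      = ∑ k ∈ Finset.range (m + 1), X ^ k * Y ^ (m - k)
        - ∑ k ∈ Finset.range m, X ^ (k + 1) * Y ^ (m - k) := by
    intro X Y
    rw [Finset.sum_range_succ, Finset.sum_range_succ]
    have : ∀ k ∈ Finset.range m, X ^ k * Y ^ (m - k) * (if k < m then 1 - X else 1)
        = X ^ k * Y ^ (m - k) - X ^ (k + 1) * Y ^ (m - k) := by
      intro k hk
      rw [if_pos (Finset.mem_range.1 hk)]; ring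
    rw [Finset.sum_congr rfl this, Finset.sum_sub_distrib]
    simp
    ring
  rw [key, key, hsum_comm]
  congr 1
  rw [← Finset.sum_range_reflect]
  refine Finset.sum_congr rfl fun k hk => ?_
  have hk := Finset.mem_range.1 hk
  rw [show m - 1 - k + 1 = m - k by omega, show m - (m - 1 - k) = k + 1 by omega, mul_comm]

lemma symPart_comm {R : Type*} [CommRing R] (p q : Bool) (m : ℕ) (X Y : R) :
    symPart p q m X Y = symPart p q m Y X := by
  have refl : ∀ f : ℕ → R, ∑ k ∈ Finset.range (m + 1), f k
      = ∑ k ∈ Finset.range (m + 1), f (m - k) := by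
    intro f
    rw [← Finset.sum_range_reflect]
    simp
  have key : ∀ X Y : R, ∑ k ∈ Finset.range (m + 1), X ^ k * Y ^ (m - k) *
      (if 0 < k then 1 - Y else 1)
      = ∑ k ∈ Finset.range (m + 1), Y ^ k * X ^ (m - k) * (if k < m then 1 - Y else 1) := by
    intro X Y
    rw [refl]
    refine Finset.sum_congr rfl fun k hk => ?_
    have hk := Finset.mem_range.1 hk
    rw [show m - (m - k) = k by omega, mul_comm (X ^ _)]
    congr 2
    simp
  unfold symPart
  cases p <;> cases q <;> simp [-mul_ite]
  · rw [refl]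
    refine Finset.sum_congr rfl fun k hk => ?_
    have hk := Finset.mem_range.1 hk
    rw [show m - (m - k) = k by omega, mul_comm (X ^ _), mul_right_comm]
    have h1 : (m - k < m) = (0 < k) := by
      apply propext; omega
    have h2 : (0 < m - k) = (k < m) := by
      apply propext; omega
    simp only [h1, h2]
  · exact hsum_mark_comm m X Y
  · rw [key, key, hsum_mark_comm]
  · exact hsum_comm m X Y

/-- The generating function of one site, whose value runs over `l ≤ z ≤ h`; a mark with weight
`-X` is available when `z < A` (for a boundary site, encoded by `b = false`, never), and a mark
with weight `-Y` is available when `B < z`. -/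
lemma siteSum_eq {R : Type*} [CommRing R] (X Y : R) (l h A B : ℕ) (b : Bool)
    (hlh : l ≤ h) (hA : b = true → h ≤ A) (hB : B ≤ l) :
    ∑ z ∈ Finset.Icc l h, X ^ (z - l) * Y ^ (h - z) *
        (if b = true ∧ z < A then 1 - X else 1) * (if B < z then 1 - Y else 1)
      = (if b = true ∧ h < A then 1 - X else 1) * (if B < l then 1 - Y else 1) *
        symPart (decide (b = false ∨ h < A)) (decide (B < l)) (h - l) X Y := by
  unfold symPart
  rw [Finset.mul_sum]
  rw [← Finset.Ico_add_one_right_eq_Icc, Finset.sum_Ico_eq_sum_range,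
    show h + 1 - l = h - l + 1 by omega]
  refine Finset.sum_congr rfl fun k hk => ?_
  have hk := Finset.mem_range.1 hk
  rw [show l + k - l = k by omega, show h - (l + k) = h - l - k by omega]
  have e1 : (if b = true ∧ l + k < A then 1 - X else 1)
      = (if b = true ∧ h < A then 1 - X else 1) *
        (if (decide (b = false ∨ h < A)) = false ∧ k < h - l then 1 - X else 1) := by
    cases b
    · simp
    · have := hA rfl
      by_cases h1 : h < A
      · have h2 : l + k < A := by omega
        simp [h1, h2]
      · have h3 : (l + k < A) ↔ (k < h - l) := by omega
        simp [h1, h3]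
  have e2 : (if B < l + k then 1 - Y else 1)
      = (if B < l then 1 - Y else 1) *
        (if (decide (B < l)) = false ∧ 0 < k then 1 - Y else 1) := by
    by_cases h1 : B < l
    · have h2 : B < l + k := by omega
      simp [h1, h2]
    · have h3 : (B < l + k) ↔ (0 < k) := by omega
      simp [h1, h3]
  rw [e1, e2]; ring

/-! ### Marked Gelfand–Tsetlin patterns -/

/-- Raw data of a marked Gelfand–Tsetlin pattern, indexed from `0`: `D.1 v r` is the number of
boxes in row `r` of a set-valued tableau having an entry among the first `v` letters, and
`D.2 v r` is `1` if letter number `v` lies in a box of row `r` that also contains a smaller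
letter, and `0` otherwise. -/
abbrev Pat := (ℕ → ℕ → ℕ) × (ℕ → ℕ → ℕ)

/-- `D` is a marked Gelfand–Tsetlin pattern with `n` letters and shape `la`.  The field `inter`
combines the interlacing inequality with the condition for a mark to be allowed. -/
structure IsPat (n : ℕ) (la : ℕ → ℕ) (D : Pat) : Prop where
  zero : ∀ r, D.1 0 r = 0
  top : ∀ r, D.1 n r = la r
  out : ∀ v, n < v → ∀ r, D.1 v r = 0
  mout : ∀ v, n ≤ v → ∀ r, D.2 v r = 0
  mle : ∀ v r, D.2 v r ≤ 1
  mono : ∀ v, v < n → ∀ r, D.1 v r ≤ D.1 (v + 1) r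
  inter : ∀ v, v < n → ∀ r, D.1 (v + 1) (r + 1) + D.2 v r ≤ D.1 v r

/-- A partition with at most `n` parts, indexed from `0`. -/
def IsPart (n : ℕ) (la : ℕ → ℕ) : Prop :=
  (∀ r, la (r + 1) ≤ la r) ∧ ∀ r, n ≤ r → la r = 0

lemma IsPat.le_top {n : ℕ} {la : ℕ → ℕ} {D : Pat} (h : IsPat n la D) (v r : ℕ) :
    D.1 v r ≤ la r := by
  by_cases hv : n < v
  · rw [h.out v hv]; exact Nat.zero_le _
  · obtain ⟨d, hd⟩ := Nat.exists_eq_add_of_le (not_lt.1 hv)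
    have : ∀ d v, v + d ≤ n → D.1 v r ≤ D.1 (v + d) r := by
      intro d
      induction d with
      | zero => intro v _; exact le_rfl
      | succ d ih => intro v hv; exact (ih v (by omega)).trans (h.mono (v + d) (by omega) r)
    rw [← h.top r]
    conv_rhs => rw [hd]
    exact this d v hd.ge

lemma IsPat.eq_zero {n : ℕ} {la : ℕ → ℕ} {D : Pat} (h : IsPat n la D) (hla : IsPart n la)
    (v : ℕ) {r : ℕ} (hr : n ≤ r) : D.1 v r = 0 :=
  Nat.le_zero.1 ((h.le_top v r).trans (hla.2 r hr).le)

lemma IsPat.mark_zero {n : ℕ} {la : ℕ → ℕ} {D : Pat} (h : IsPat n la D) (hla : IsPart n la)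
    (v : ℕ) {r : ℕ} (hr : n ≤ r) : D.2 v r = 0 := by
  by_cases hv : v < n
  · have := h.inter v hv r
    rw [h.eq_zero hla v hr] at this
    omega
  · exact h.mout v (not_lt.1 hv) r

lemma IsPart.le_zero {n : ℕ} {la : ℕ → ℕ} (hla : IsPart n la) (r : ℕ) : la r ≤ la 0 := by
  induction r with
  | zero => exact le_rfl
  | succ r ih => exact (hla.1 r).trans ih

lemma finite_pat {n : ℕ} {la : ℕ → ℕ} (hla : IsPart n la) : {D | IsPat n la D}.Finite := by
  let F : Pat → (Fin (n + 1) → Fin n → Fin (la 0 + 1)) × (Fin n → Fin n → Fin 2) := fun D =>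
    (fun v r => Fin.ofNat _ (D.1 v r), fun v r => Fin.ofNat _ (D.2 v r))
  refine Set.Finite.of_finite_image (f := F) (Set.toFinite _) ?_
  intro D hD E hE hDE
  replace hD : IsPat n la D := hD
  replace hE : IsPat n la E := hE
  have h1 := congrArg Prod.fst hDE
  have h2 := congrArg Prod.snd hDE
  refine Prod.ext ?_ ?_
  · funext v r
    by_cases hv : n < v
    · rw [hD.out v hv, hE.out v hv]
    by_cases hr : n ≤ r
    · rw [hD.eq_zero hla v hr, hE.eq_zero hla v hr]
    have := congrFun (congrFun h1 ⟨v, by omega⟩) ⟨r, by omega⟩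
    have := congrArg Fin.val this
    simp only [F, Fin.ofNat] at this
    rwa [Nat.mod_eq_of_lt, Nat.mod_eq_of_lt] at this
    · have := hE.le_top v r; have := hla.le_zero r; omega
    · have := hD.le_top v r; have := hla.le_zero r; omega
  · funext v r
    by_cases hv : n ≤ v
    · rw [hD.mout v hv, hE.mout v hv]
    by_cases hr : n ≤ r
    · rw [hD.mark_zero hla v hr, hE.mark_zero hla v hr]
    have := congrFun (congrFun h2 ⟨v, by omega⟩) ⟨r, by omega⟩
    have := congrArg Fin.val this
    simp only [F, Fin.ofNat] at this
    rwa [Nat.mod_eq_of_lt, Nat.mod_eq_of_lt] at this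
    · have := hE.mle v r; omega
    · have := hD.mle v r; omega

/-- The number of occurrences of letter `v` in row `r`. -/
def cnt (D : Pat) (v r : ℕ) : ℕ := D.1 (v + 1) r - D.1 v r + D.2 v r

/-- The number of occurrences of letter `v` in the rows `r, r + 1, …, n`. -/
def tail (n : ℕ) (D : Pat) (v r : ℕ) : ℕ := ∑ j ∈ Finset.Ico r (n + 1), cnt D v j

/-- The number of occurrences of letter `v`. -/
def wtP (n : ℕ) (D : Pat) (v : ℕ) : ℕ := ∑ j ∈ Finset.range (n + 1), cnt D v j

/-- The number of marks. -/
def nmarks (n : ℕ) (D : Pat) : ℕ :=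
  ∑ v ∈ Finset.range n, ∑ j ∈ Finset.range (n + 1), D.2 v j

open Classical in
/-- The finite set of marked patterns of shape `la` (empty, as a junk value, if `la` is not a
partition with at most `n` parts). -/
noncomputable def pats (n : ℕ) (la : ℕ → ℕ) : Finset Pat :=
  if h : IsPart n la then (finite_pat h).toFinset else ∅

lemma mem_pats {n : ℕ} {la : ℕ → ℕ} (hla : IsPart n la) {D : Pat} :
    D ∈ pats n la ↔ IsPat n la D := by
  simp [pats, hla]

/-- The signed monomial of a marked pattern. -/
noncomputable def patTerm (n : ℕ) (D : Pat) : MvPolynomial (Fin n) ℤ :=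
  (-1) ^ nmarks n D * ∏ v : Fin n, MvPolynomial.X v ^ wtP n D v

/-- The stable Grothendieck polynomial in the variables `X 0, …, X (n - 1)`, as a generating
function of marked patterns. -/
noncomputable def grothP (n : ℕ) (la : ℕ → ℕ) : MvPolynomial (Fin n) ℤ :=
  ∑ D ∈ pats n la, patTerm n D

/-! ### Fibers: varying one row of a pattern -/

lemma IsPat.cast_cnt {n : ℕ} {la : ℕ → ℕ} {D : Pat} (h : IsPat n la D) {v : ℕ} (hv : v < n)
    (r : ℕ) : cnt D v r + D.1 v r = D.1 (v + 1) r + D.2 v r := by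
  have := h.mono v hv r
  unfold cnt; omega

lemma sum_wtP {n : ℕ} {la : ℕ → ℕ} {D : Pat} (h : IsPat n la D) :
    ∑ v ∈ Finset.range n, wtP n D v = ∑ j ∈ Finset.range (n + 1), la j + nmarks n D := by
  have key : ∀ j k, k ≤ n → ∑ v ∈ Finset.range k, cnt D v j
      = D.1 k j + ∑ v ∈ Finset.range k, D.2 v j := by
    intro j k
    induction k with
    | zero => intro _; simp [h.zero]
    | succ k ih =>
      intro hk
      rw [Finset.sum_range_succ, Finset.sum_range_succ, ih (by omega)]
      have := h.cast_cnt (v := k) (by omega) j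
      omega
  unfold wtP nmarks
  rw [Finset.sum_comm, Finset.sum_comm (s := Finset.range n), ← Finset.sum_add_distrib]
  refine Finset.sum_congr rfl fun j _ => ?_
  rw [key j n le_rfl, h.top]

lemma patTerm_eq {n : ℕ} {la : ℕ → ℕ} {D : Pat} (h : IsPat n la D) :
    patTerm n D = (-1) ^ (∑ j ∈ Finset.range (n + 1), la j) *
      ∏ v : Fin n, (-MvPolynomial.X v) ^ wtP n D v := by
  have h1 : ∏ v : Fin n, (-MvPolynomial.X v : MvPolynomial (Fin n) ℤ) ^ wtP n D v
      = (-1) ^ (∑ v : Fin n, wtP n D v) * ∏ v : Fin n, MvPolynomial.X v ^ wtP n D v := by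
    rw [← Finset.prod_pow_eq_pow_sum, ← Finset.prod_mul_distrib]
    refine Finset.prod_congr rfl fun v _ => ?_
    rw [neg_pow]
  rw [h1, ← mul_assoc, ← pow_add, Fin.sum_univ_eq_sum_range (fun v => wtP n D v) n, sum_wtP h,
    ← add_assoc, pow_add, ← two_mul, pow_mul]
  simp [patTerm]

/-- The smallest value of the entry `(i + 1, j)` of a pattern, given the neighbouring rows. -/
def loS (D : Pat) (i j : ℕ) : ℕ := max (D.1 i j) (D.1 (i + 2) (j + 1))

/-- The largest value of the entry `(i + 1, j)` of a pattern, given the neighbouring rows. -/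
def hiS (D : Pat) (i j : ℕ) : ℕ :=
  if j = 0 then D.1 (i + 2) 0 else min (D.1 (i + 2) j) (D.1 i (j - 1))

/-- The lower bound `loS`, replaced by `t` at the site `r`. -/
def lowS (D : Pat) (i r t j : ℕ) : ℕ := if j = r then t else loS D i j

/-- The admissible local configurations at site `j`: the entry `(i + 1, j)` together with the two
marks whose admissibility depends on it. -/
def siteSet (D : Pat) (i r t j : ℕ) : Finset (ℕ × ℕ × ℕ) :=
  (Finset.Icc (lowS D i r t j) (hiS D i j) ×ˢ (Finset.range 2 ×ˢ Finset.range 2)).filter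
    (fun s => (s.2.1 = 1 → 0 < j ∧ s.1 < D.1 i (j - 1)) ∧
      (s.2.2 = 1 → D.1 (i + 2) (j + 1) < s.1))

/-- The local configuration of a pattern at site `j`. -/
def siteOf (D : Pat) (i j : ℕ) : ℕ × ℕ × ℕ :=
  (D.1 (i + 1) j, if j = 0 then 0 else D.2 i (j - 1), D.2 (i + 1) j)

/-- `D` and `E` differ at most in the sites `j ≤ r` of row `i + 1`. -/
def Agree (i r : ℕ) (D E : Pat) : Prop :=
  (∀ v j, ¬ (v = i + 1 ∧ j ≤ r) → D.1 v j = E.1 v j) ∧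
  (∀ v j, ¬ (v = i ∧ j < r) → ¬ (v = i + 1 ∧ j ≤ r) → D.2 v j = E.2 v j)

/-- Replace the sites `j ≤ r` of row `i + 1` by the local configurations `q`. -/
def glue (D : Pat) (i r : ℕ) (q : ℕ → ℕ × ℕ × ℕ) : Pat :=
  (fun v j => if v = i + 1 ∧ j ≤ r then (q j).1 else D.1 v j,
   fun v j => if v = i ∧ j < r then (q (j + 1)).2.1
     else if v = i + 1 ∧ j ≤ r then (q j).2.2 else D.2 v j)

lemma agree_glue (D : Pat) (i r : ℕ) (q : ℕ → ℕ × ℕ × ℕ) : Agree i r (glue D i r q) D := by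
  refine ⟨fun v j h => ?_, fun v j h h' => ?_⟩
  · simp only [glue, if_neg h]
  · simp only [glue, if_neg h, if_neg h']

lemma siteOf_mem {n : ℕ} {la : ℕ → ℕ} {D E : Pat} (hD : IsPat n la D) {i r t : ℕ}
    (hi : i + 1 < n) (hag : Agree i r D E) (ht : t ≤ D.1 (i + 1) r) {j : ℕ} (hj : j ≤ r) :
    siteOf D i j ∈ siteSet E i r t j := by
  have a1 : ∀ j, D.1 i j = E.1 i j := fun j => hag.1 _ _ (by omega)
  have a2 : ∀ j, D.1 (i + 2) j = E.1 (i + 2) j := fun j => hag.1 _ _ (by omega)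
  have m1 := hD.mono i (by omega) j
  have m2 := hD.mono (i + 1) hi j
  have n2 := hD.inter (i + 1) hi j
  have l2 := hD.mle (i + 1) j
  rw [show i + 1 + 1 = i + 2 from rfl] at *
  simp only [siteSet, siteOf, Finset.mem_filter, Finset.mem_product, Finset.mem_Icc,
    Finset.mem_range, lowS, loS, hiS, ← a1, ← a2]
  rcases Nat.eq_zero_or_pos j with rfl | hj0
  · simp only [if_true]
    refine ⟨⟨⟨?_, ?_⟩, ?_, ?_⟩, ?_, ?_⟩ <;> (try split_ifs) <;> (try subst r) <;> omega
  · obtain ⟨j, rfl⟩ := Nat.exists_eq_succ_of_ne_zero hj0.ne'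
    have n1 := hD.inter i (by omega) j
    have l1 := hD.mle i j
    simp only [Nat.succ_eq_add_one, Nat.add_sub_cancel, if_neg (Nat.succ_ne_zero j)] at *
    refine ⟨⟨⟨?_, ?_⟩, ?_, ?_⟩, ?_, ?_⟩ <;> (try split_ifs) <;> (try subst r) <;> omega

lemma glue_isPat {n : ℕ} {la : ℕ → ℕ} {E : Pat} (hE : IsPat n la E) {i r t : ℕ}
    (hi : i + 1 < n) (ht : loS E i r ≤ t) {q : ℕ → ℕ × ℕ × ℕ}
    (hq : ∀ j, j ≤ r → q j ∈ siteSet E i r t j) :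
    IsPat n la (glue E i r q) ∧ t ≤ (glue E i r q).1 (i + 1) r := by
  have hq' : ∀ j, j ≤ r → E.1 i j ≤ (q j).1 ∧ E.1 (i + 2) (j + 1) + (q j).2.2 ≤ (q j).1 ∧
      (q j).1 ≤ E.1 (i + 2) j ∧ (q j).2.1 ≤ 1 ∧ (q j).2.2 ≤ 1 := by
    intro j hj
    have := hq j hj
    simp only [siteSet, Finset.mem_filter, Finset.mem_product, Finset.mem_Icc,
      Finset.mem_range, lowS, loS, hiS] at this ht
    obtain ⟨⟨⟨h1, h2⟩, h3, h4⟩, h5, h6⟩ := this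
    have h7 : E.1 i j ≤ (q j).1 ∧ E.1 (i + 2) (j + 1) ≤ (q j).1 := by
      split_ifs at h1
      · subst j; omega
      · omega
    have h8 : (q j).1 ≤ E.1 (i + 2) j := by
      split_ifs at h2
      · subst j; omega
      · omega
    have := h6
    refine ⟨h7.1, ?_, h8, by omega, by omega⟩
    by_cases h9 : (q j).2.2 = 1
    · have := h6 h9; omega
    · omega
  have hq'' : ∀ j, j < r → (q (j + 1)).1 + (q (j + 1)).2.1 ≤ E.1 i j := by
    intro j hj
    have := hq (j + 1) hj
    simp only [siteSet, Finset.mem_filter, Finset.mem_product, Finset.mem_Icc,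
      Finset.mem_range, hiS, Nat.add_sub_cancel, if_neg (Nat.succ_ne_zero j)] at this
    obtain ⟨⟨⟨h1, h2⟩, h3, h4⟩, h5, h6⟩ := this
    by_cases h9 : (q (j + 1)).2.1 = 1
    · have := h5 h9; omega
    · omega
  refine ⟨⟨?_, ?_, ?_, ?_, ?_, ?_, ?_⟩, ?_⟩
  · intro r'
    simpa [glue] using hE.zero r'
  · intro r'
    have : ¬ (n = i + 1 ∧ r' ≤ r) := by omega
    simpa [glue, this] using hE.top r'
  · intro v hv r'
    have : ¬ (v = i + 1 ∧ r' ≤ r) := by omega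
    simpa [glue, this] using hE.out v hv r'
  · intro v hv r'
    have h1 : ¬ (v = i + 1 ∧ r' ≤ r) := by omega
    have h2 : ¬ (v = i ∧ r' < r) := by omega
    simpa [glue, h1, h2] using hE.mout v hv r'
  · intro v j
    simp only [glue]
    split_ifs with h1 h2
    · exact (hq' (j + 1) h1.2).2.2.2.1
    · exact (hq' j h2.2).2.2.2.2
    · exact hE.mle v j
  · intro v hv j
    simp only [glue]
    split_ifs with h1 h2 h2
    · omega
    · rw [h1.1]; exact (hq' j h1.2).2.2.1
    · obtain rfl : v = i := by omega
      exact (hq' j h2.2).1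
    · exact hE.mono v hv j
  · intro v hv j
    have := hE.inter v hv j
    have h0 := hq' j
    have h0' := hq'' j
    simp only [glue]
    by_cases c1 : v = i
    · subst v
      by_cases c2 : j < r
      · have : j + 1 ≤ r := c2
        simp [c2, this]; exact h0' c2
      · have : ¬ j + 1 ≤ r := c2
        simp [c2, this]; assumption
    · by_cases c2 : v = i + 1
      · subst v
        by_cases c3 : j ≤ r
        · simp [c3]; exact (h0 c3).2.1
        · simp [c3]; assumption
      · simp [c1, c2]; assumption
  · have := hq r le_rfl
    simp only [siteSet, Finset.mem_filter, Finset.mem_product, Finset.mem_Icc, lowS, if_true] at this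
    simpa [glue] using this.1.1.1

lemma glue_siteOf {D E : Pat} {i r : ℕ} (hag : Agree i r D E) {q : ℕ → ℕ × ℕ × ℕ}
    (hq : ∀ j, j ≤ r → q j = siteOf D i j) : glue E i r q = D := by
  refine Prod.ext ?_ ?_
  · funext v j
    simp only [glue]
    split_ifs with h
    · rw [hq j h.2, h.1]; rfl
    · exact (hag.1 v j h).symm
  · funext v j
    simp only [glue]
    split_ifs with h h'
    · rw [hq (j + 1) h.2, h.1]; simp [siteOf]
    · rw [hq j h'.2, h'.1]; rfl
    · exact (hag.2 v j h h').symm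

lemma siteOf_glue {E : Pat} {i r t : ℕ} {q : ℕ → ℕ × ℕ × ℕ}
    (hq : ∀ j, j ≤ r → q j ∈ siteSet E i r t j) {j : ℕ} (hj : j ≤ r) :
    siteOf (glue E i r q) i j = q j := by
  have hqj := hq j hj
  simp only [siteSet, Finset.mem_filter, Finset.mem_product, Finset.mem_range] at hqj
  obtain ⟨⟨_, h3, _⟩, h5, _⟩ := hqj
  refine Prod.ext ?_ (Prod.ext ?_ ?_)
  · simp [siteOf, glue, hj]
  · rcases Nat.eq_zero_or_pos j with rfl | hj0
    · simp only [siteOf, if_true]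
      have : (q 0).2.1 ≠ 1 := fun h => absurd (h5 h).1 (lt_irrefl 0)
      omega
    · have h1 : j - 1 < r := by omega
      have h2 : j - 1 + 1 = j := by omega
      simp [siteOf, glue, hj0.ne', h1, h2]
  · simp [siteOf, glue, hj]

/-! Weights along a fiber. -/

lemma wtP_agree {n : ℕ} {D E : Pat} {i r : ℕ} (hag : Agree i r D E) {v : ℕ} (h1 : v ≠ i)
    (h2 : v ≠ i + 1) : wtP n D v = wtP n E v := by
  refine Finset.sum_congr rfl fun j _ => ?_
  unfold cnt
  rw [hag.1 (v + 1) j (by omega), hag.1 v j (by omega), hag.2 v j (by omega) (by omega)]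

lemma wtP_fiber_left {n : ℕ} {la : ℕ → ℕ} {D E : Pat} (hD : IsPat n la D) {i r t : ℕ}
    (hi : i + 1 < n) (hr : r ≤ n) (hag : Agree i r D E) (ht : t ≤ D.1 (i + 1) r)
    (ht' : loS E i r ≤ t) :
    wtP n D i = (tail n E i (r + 1) + E.2 i r + (t - E.1 i r) +
        ∑ j ∈ Finset.range r, (loS E i j - E.1 i j)) +
      ∑ j ∈ Finset.range (r + 1),
        ((siteOf D i j).1 - lowS E i r t j + (siteOf D i j).2.1) := by
  have a1 : ∀ j, D.1 i j = E.1 i j := fun j => hag.1 _ _ (by omega)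
  have a2 : ∀ j, D.1 (i + 2) j = E.1 (i + 2) j := fun j => hag.1 _ _ (by omega)
  have e1 : wtP n D i = ∑ j ∈ Finset.range (r + 1), cnt D i j + tail n E i (r + 1) := by
    unfold wtP tail
    rw [← Finset.sum_range_add_sum_Ico _ (show r + 1 ≤ n + 1 by omega)]
    congr 1
    refine Finset.sum_congr rfl fun j hj => ?_
    have := (Finset.mem_Ico.1 hj).1
    unfold cnt
    rw [a1, hag.1 (i + 1) j (by omega), hag.2 i j (by omega) (by omega)]
  have e2 : ∑ j ∈ Finset.range (r + 1), ((siteOf D i j).1 - lowS E i r t j + (siteOf D i j).2.1)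
      = ∑ j ∈ Finset.range (r + 1), (D.1 (i + 1) j - lowS E i r t j)
        + ∑ j ∈ Finset.range r, D.2 i j := by
    rw [Finset.sum_add_distrib]
    congr 1
    rw [Finset.sum_range_succ']
    simp [siteOf]
  have e3 : ∑ j ∈ Finset.range (r + 1), cnt D i j
      = ∑ j ∈ Finset.range (r + 1), (D.1 (i + 1) j - E.1 i j)
        + (∑ j ∈ Finset.range r, D.2 i j + E.2 i r) := by
    rw [← hag.2 i r (by omega) (by omega), ← Finset.sum_range_succ, ← Finset.sum_add_distrib]
    refine Finset.sum_congr rfl fun j _ => ?_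
    rw [cnt, a1]
  have e4 : ∑ j ∈ Finset.range (r + 1), (D.1 (i + 1) j - E.1 i j)
      = ∑ j ∈ Finset.range (r + 1), (D.1 (i + 1) j - lowS E i r t j)
        + (∑ j ∈ Finset.range r, (loS E i j - E.1 i j) + (t - E.1 i r)) := by
    have : ∑ j ∈ Finset.range r, (loS E i j - E.1 i j) + (t - E.1 i r)
        = ∑ j ∈ Finset.range (r + 1), (lowS E i r t j - E.1 i j) := by
      rw [Finset.sum_range_succ]
      congr 1
      · refine Finset.sum_congr rfl fun j hj => ?_
        have := Finset.mem_range.1 hj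
        rw [lowS, if_neg (by omega)]
      · rw [lowS, if_pos rfl]
    rw [this, ← Finset.sum_add_distrib]
    refine Finset.sum_congr rfl fun j hj => ?_
    have hj := Finset.mem_range.1 hj
    have hs := siteOf_mem hD hi hag ht (show j ≤ r by omega)
    simp only [siteSet, Finset.mem_filter, Finset.mem_product, Finset.mem_Icc, siteOf] at hs
    have h1 := hs.1.1.1
    have h2 : E.1 i j ≤ lowS E i r t j := by
      unfold lowS
      split_ifs with h
      · subst j; exact (le_max_left _ _).trans ht'
      · exact le_max_left _ _
    omega
  rw [e1, e2, e3, e4]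
  omega

lemma wtP_fiber_right {n : ℕ} {la : ℕ → ℕ} {D E : Pat} (hD : IsPat n la D) {i r t : ℕ}
    (hi : i + 1 < n) (hr : r ≤ n) (hag : Agree i r D E) (ht : t ≤ D.1 (i + 1) r) :
    wtP n D (i + 1) = (tail n E (i + 1) (r + 1) +
        ∑ j ∈ Finset.range r, (loS E i j - E.1 i j)) +
      ∑ j ∈ Finset.range (r + 1),
        (hiS E i j - (siteOf D i j).1 + (siteOf D i j).2.2) := by
  have a2 : ∀ j, D.1 (i + 2) j = E.1 (i + 2) j := fun j => hag.1 _ _ (by omega)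
  have e1 : wtP n D (i + 1)
      = ∑ j ∈ Finset.range (r + 1), cnt D (i + 1) j + tail n E (i + 1) (r + 1) := by
    unfold wtP tail
    rw [← Finset.sum_range_add_sum_Ico _ (show r + 1 ≤ n + 1 by omega)]
    congr 1
    refine Finset.sum_congr rfl fun j hj => ?_
    have := (Finset.mem_Ico.1 hj).1
    unfold cnt
    rw [show i + 1 + 1 = i + 2 from rfl, a2, hag.1 (i + 1) j (by omega),
      hag.2 (i + 1) j (by omega) (by omega)]
  have e2 : ∑ j ∈ Finset.range r, (loS E i j - E.1 i j)
      = ∑ j ∈ Finset.range (r + 1), (E.1 (i + 2) j - hiS E i j) := by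
    rw [Finset.sum_range_succ']
    simp only [loS, hiS, if_true, Nat.sub_self, add_zero, Nat.add_sub_cancel,
      if_neg (Nat.succ_ne_zero _)]
    refine Finset.sum_congr rfl fun j _ => ?_
    omega
  rw [e1, e2, add_comm, add_assoc, ← Finset.sum_add_distrib]
  congr 1
  refine Finset.sum_congr rfl fun j hj => ?_
  have hj := Finset.mem_range.1 hj
  have hs := siteOf_mem hD hi hag ht (show j ≤ r by omega)
  simp only [siteSet, Finset.mem_filter, Finset.mem_product, Finset.mem_Icc, siteOf] at hs ⊢
  have h1 := hs.1.1.2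
  have h2 : hiS E i j ≤ E.1 (i + 2) j := by
    unfold hiS
    split_ifs with h
    · subst j; exact le_rfl
    · exact min_le_left _ _
  rw [cnt, show i + 1 + 1 = i + 2 from rfl, a2]
  omega

lemma siteSet_sum {R : Type*} [CommRing R] (X Y : R) (E : Pat) (i r t j : ℕ)
    (hlh : lowS E i r t j ≤ hiS E i j) :
    ∑ s ∈ siteSet E i r t j, (-X) ^ (s.1 - lowS E i r t j + s.2.1) *
        (-Y) ^ (hiS E i j - s.1 + s.2.2)
      = (-1) ^ (hiS E i j - lowS E i r t j) *
        ∑ z ∈ Finset.Icc (lowS E i r t j) (hiS E i j),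
          X ^ (z - lowS E i r t j) * Y ^ (hiS E i j - z) *
          (if (decide (0 < j)) = true ∧ z < E.1 i (j - 1) then 1 - X else 1) *
          (if E.1 (i + 2) (j + 1) < z then 1 - Y else 1) := by
  rw [siteSet, Finset.sum_filter, Finset.sum_product, Finset.mul_sum]
  refine Finset.sum_congr rfl fun z hz => ?_
  obtain ⟨h1, h2⟩ := Finset.mem_Icc.1 hz
  rw [Finset.sum_product]
  have hs : (-1 : R) ^ (hiS E i j - lowS E i r t j)
      = (-1) ^ (z - lowS E i r t j) * (-1) ^ (hiS E i j - z) := by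
    rw [← pow_add]; congr 1; omega
  simp only [Finset.sum_range_succ, Finset.sum_range_zero, hs, neg_pow X, neg_pow Y]
  by_cases c1 : 0 < j ∧ z < E.1 i (j - 1) <;> by_cases c2 : E.1 (i + 2) (j + 1) < z <;>
    simp [c1, c2] <;> ring

/-- The factors `1 - x` of neighbouring sites pair up: the upper factor of site `j + 1` is present
exactly when the lower factor of site `j` is, so only the last lower factor stays unpaired. -/
lemma prod_sites_swap {R : Type*} [CommRing R] (u w : R) (r : ℕ) (δ : ℕ → Prop)
    [DecidablePred δ] (c : Prop) [Decidable c] (s : ℕ → R) (f g : ℕ → R)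
    (hf0 : f 0 = 1) (hf : ∀ j, j < r → f (j + 1) = if δ j then u else 1)
    (hg : ∀ j, j < r → g j = if δ j then w else 1) (hgr : g r = if c then w else 1) :
    ∏ j ∈ Finset.range (r + 1), (f j * g j * s j)
      = (∏ j ∈ Finset.range r, if δ j then u * w else 1) *
        (∏ j ∈ Finset.range (r + 1), s j) * (if c then w else 1) := by
  rw [Finset.prod_mul_distrib, Finset.prod_mul_distrib, Finset.prod_range_succ' f,
    Finset.prod_range_succ g, hf0, hgr,
    Finset.prod_congr rfl (fun j hj => hf j (Finset.mem_range.1 hj)),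
    Finset.prod_congr rfl (fun j hj => hg j (Finset.mem_range.1 hj))]
  have : (∏ j ∈ Finset.range r, if δ j then u * w else 1)
      = (∏ j ∈ Finset.range r, if δ j then u else 1) *
        ∏ j ∈ Finset.range r, if δ j then w else 1 := by
    rw [← Finset.prod_mul_distrib]
    refine Finset.prod_congr rfl fun j _ => ?_
    split_ifs <;> simp
  rw [this]; ring

/-- The automorphism exchanging the variables number `a` and `b`. -/
noncomputable def swapVar {n : ℕ} (a b : Fin n) :
    MvPolynomial (Fin n) ℤ →ₐ[ℤ] MvPolynomial (Fin n) ℤ :=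
  MvPolynomial.rename (Equiv.swap a b)

open Classical in
/-- The sum of the signed monomials of the patterns that agree with `E` off the sites `j ≤ r` of
row `i + 1` and whose entry `(i + 1, r)` is at least `t`, up to a factor symmetric in the
variables number `i` and `i + 1`. -/
lemma fiber_sum {n : ℕ} {la : ℕ → ℕ} (hla : IsPart n la) {E : Pat} (hE : IsPat n la E)
    {i r t : ℕ} (hi : i + 1 < n) (hr : r ≤ n) (ht : t ≤ E.1 (i + 1) r) (ht' : loS E i r ≤ t)
    (a b : Fin n) (ha : (a : ℕ) = i) (hb : (b : ℕ) = i + 1) :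
    ∃ C : MvPolynomial (Fin n) ℤ, swapVar a b C = C ∧
      ∑ D ∈ (pats n la).filter (fun D => Agree i r D E ∧ t ≤ D.1 (i + 1) r), patTerm n D
        = C * MvPolynomial.X a ^ (tail n E i (r + 1) + E.2 i r + (t - E.1 i r)) *
            MvPolynomial.X b ^ tail n E (i + 1) (r + 1) *
            (if E.1 (i + 2) (r + 1) < t then 1 - MvPolynomial.X b else 1) := by
  set X : MvPolynomial (Fin n) ℤ := MvPolynomial.X a with hX
  set Y : MvPolynomial (Fin n) ℤ := MvPolynomial.X b with hY
  have hab : a ≠ b := fun h => by rw [h] at ha; omega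
  set c1 := tail n E i (r + 1) + E.2 i r + (t - E.1 i r) with hc1
  set c2 := tail n E (i + 1) (r + 1) with hc2
  set e := ∑ j ∈ Finset.range r, (loS E i j - E.1 i j) with he
  set K : MvPolynomial (Fin n) ℤ := (-1) ^ (∑ j ∈ Finset.range (n + 1), la j) *
    ∏ v ∈ (Finset.univ.erase a).erase b, (-MvPolynomial.X v) ^ wtP n E v with hK
  -- the product formula for the signed monomial of a member of the fiber
  have term : ∀ D, IsPat n la D → Agree i r D E → t ≤ D.1 (i + 1) r →
      patTerm n D = K * (-X) ^ (c1 + e) * (-Y) ^ (c2 + e) *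
        ∏ j ∈ Finset.range (r + 1),
          ((-X) ^ ((siteOf D i j).1 - lowS E i r t j + (siteOf D i j).2.1) *
           (-Y) ^ (hiS E i j - (siteOf D i j).1 + (siteOf D i j).2.2)) := by
    intro D hD hag htD
    rw [patTerm_eq hD, ← Finset.mul_prod_erase Finset.univ _ (Finset.mem_univ a),
      ← Finset.mul_prod_erase (Finset.univ.erase a) _
        (Finset.mem_erase.2 ⟨hab.symm, Finset.mem_univ b⟩), ha, hb,
      wtP_fiber_left hD hi hr hag htD ht', wtP_fiber_right hD hi hr hag htD,
      Finset.prod_mul_distrib, Finset.prod_pow_eq_pow_sum, Finset.prod_pow_eq_pow_sum]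
    have : ∏ v ∈ (Finset.univ.erase a).erase b, (-MvPolynomial.X v : MvPolynomial (Fin n) ℤ)
          ^ wtP n D v
        = ∏ v ∈ (Finset.univ.erase a).erase b, (-MvPolynomial.X v) ^ wtP n E v := by
      refine Finset.prod_congr rfl fun v hv => ?_
      simp only [Finset.mem_erase, Finset.mem_univ, and_true] at hv
      rw [wtP_agree hag]
      · rw [← ha]; exact fun h => hv.2 (Fin.ext h)
      · rw [← hb]; exact fun h => hv.1 (Fin.ext h)
    rw [this, pow_add _ (c1 + e), pow_add _ (c2 + e), hK]
    ring
  -- the fiber is a product of site sets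
  have hfib : ∑ D ∈ (pats n la).filter (fun D => Agree i r D E ∧ t ≤ D.1 (i + 1) r), patTerm n D
      = K * (-X) ^ (c1 + e) * (-Y) ^ (c2 + e) * ∏ j ∈ Finset.range (r + 1),
        ∑ s ∈ siteSet E i r t j, ((-X) ^ (s.1 - lowS E i r t j + s.2.1) *
          (-Y) ^ (hiS E i j - s.1 + s.2.2)) := by
    rw [← Fin.prod_univ_eq_prod_range (fun j => ∑ s ∈ siteSet E i r t j,
        ((-X) ^ (s.1 - lowS E i r t j + s.2.1) * (-Y) ^ (hiS E i j - s.1 + s.2.2))) (r + 1),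
      Finset.prod_univ_sum, Finset.mul_sum]
    let ext : (Fin (r + 1) → ℕ × ℕ × ℕ) → ℕ → ℕ × ℕ × ℕ := fun p j =>
      if h : j < r + 1 then p ⟨j, h⟩ else 0
    have hext : ∀ p (j : Fin (r + 1)), ext p j = p j := fun p j => dif_pos j.isLt
    have hmem : ∀ p ∈ Fintype.piFinset (fun j : Fin (r + 1) => siteSet E i r t j),
        ∀ j, j ≤ r → ext p j ∈ siteSet E i r t j := by
      intro p hp j hj
      have := Fintype.mem_piFinset.1 hp ⟨j, by omega⟩
      exact (hext p ⟨j, by omega⟩).symm ▸ this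
    refine Finset.sum_bij' (fun D _ => fun j : Fin (r + 1) => siteOf D i j)
      (fun p _ => glue E i r (ext p)) ?_ ?_ ?_ ?_ ?_
    · intro D hD
      obtain ⟨hD, hag, htD⟩ := Finset.mem_filter.1 hD
      refine Fintype.mem_piFinset.2 fun j => ?_
      exact siteOf_mem ((mem_pats hla).1 hD) hi hag htD (by omega)
    · intro p hp
      have := glue_isPat hE hi ht' (hmem p hp)
      exact Finset.mem_filter.2 ⟨(mem_pats hla).2 this.1, agree_glue _ _ _ _, this.2⟩
    · intro D hD
      obtain ⟨hD, hag, htD⟩ := Finset.mem_filter.1 hD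
      refine glue_siteOf hag fun j hj => ?_
      exact hext (fun j : Fin (r + 1) => siteOf D i j) ⟨j, by omega⟩
    · intro p hp
      funext j
      have hj : (j : ℕ) ≤ r := by omega
      simpa [hext] using siteOf_glue (hmem p hp) hj
    · intro D hD
      obtain ⟨hD, hag, htD⟩ := Finset.mem_filter.1 hD
      rw [term D ((mem_pats hla).1 hD) hag htD]
      congr 1
      exact (Fin.prod_univ_eq_prod_range (fun j =>
          ((-X) ^ ((siteOf D i j).1 - lowS E i r t j + (siteOf D i j).2.1) *
           (-Y) ^ (hiS E i j - (siteOf D i j).1 + (siteOf D i j).2.2))) (r + 1)).symm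
  have hEs : ∀ j, j ≤ r → lowS E i r t j ≤ E.1 (i + 1) j ∧ E.1 (i + 1) j ≤ hiS E i j := by
    intro j hj
    have := siteOf_mem hE hi (⟨fun _ _ _ => rfl, fun _ _ _ _ => rfl⟩ : Agree i r E E) ht hj
    simp only [siteSet, Finset.mem_filter, Finset.mem_product, Finset.mem_Icc, siteOf] at this
    exact this.1.1
  have hsite : ∀ j ∈ Finset.range (r + 1), ∑ s ∈ siteSet E i r t j,
        ((-X) ^ (s.1 - lowS E i r t j + s.2.1) * (-Y) ^ (hiS E i j - s.1 + s.2.2))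
      = (if (decide (0 < j)) = true ∧ hiS E i j < E.1 i (j - 1) then 1 - X else 1) *
        (if E.1 (i + 2) (j + 1) < lowS E i r t j then 1 - Y else 1) *
        ((-1) ^ (hiS E i j - lowS E i r t j) *
        symPart (decide (decide (0 < j) = false ∨ hiS E i j < E.1 i (j - 1)))
          (decide (E.1 (i + 2) (j + 1) < lowS E i r t j)) (hiS E i j - lowS E i r t j) X Y) := by
    intro j hj
    have hj := Finset.mem_range.1 hj
    have h12 := hEs j (by omega)
    rw [siteSet_sum X Y E i r t j (h12.1.trans h12.2), siteSum_eq _ _ _ _ _ _ _ (h12.1.trans h12.2)]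
    · ring
    · intro h
      have h : 0 < j := by simpa using h
      rw [hiS, if_neg h.ne']
      exact min_le_right _ _
    · unfold lowS
      split_ifs with h
      · subst j; exact (le_max_right _ _).trans ht'
      · exact le_max_right _ _
  rw [Finset.prod_congr rfl hsite] at hfib
  rw [prod_sites_swap (1 - X) (1 - Y) r (fun j => E.1 (i + 2) (j + 1) < E.1 i j)
    (E.1 (i + 2) (r + 1) < t)] at hfib
  · refine ⟨K * (X * Y) ^ e * (-1) ^ (c1 + c2) *
      ((∏ j ∈ Finset.range r, if E.1 (i + 2) (j + 1) < E.1 i j then (1 - X) * (1 - Y) else 1) *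
      ∏ j ∈ Finset.range (r + 1), ((-1) ^ (hiS E i j - lowS E i r t j) *
        symPart (decide (decide (0 < j) = false ∨ hiS E i j < E.1 i (j - 1)))
          (decide (E.1 (i + 2) (j + 1) < lowS E i r t j)) (hiS E i j - lowS E i r t j) X Y)),
      ?_, ?_⟩
    · have hsX : swapVar a b X = Y := by simp [swapVar, hX, hY]
      have hsY : swapVar a b Y = X := by simp [swapVar, hX, hY]
      have hsK : swapVar a b K = K := by
        rw [hK, map_mul, map_prod]
        congr 1
        · simp
        · refine Finset.prod_congr rfl fun v hv => ?_
          simp only [Finset.mem_erase, Finset.mem_univ, and_true] at hv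
          simp [swapVar, Equiv.swap_apply_of_ne_of_ne hv.2 hv.1]
      have hsp : ∀ p q m, swapVar a b (symPart p q m X Y) = symPart p q m X Y := by
        intro p q m
        rw [symPart_comm]
        conv_lhs => rw [symPart_comm]
        unfold symPart
        rw [map_sum]
        refine Finset.sum_congr rfl fun k _ => ?_
        simp only [map_mul, map_pow, hsX, hsY, apply_ite (swapVar a b), map_sub, map_one]
      simp only [map_mul, map_pow, map_prod, hsX, hsY, hsK, hsp, apply_ite (swapVar a b), map_sub,
        map_one, map_neg, mul_comm Y X, mul_comm (1 - Y) (1 - X)]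
    · rw [hfib, neg_pow X, neg_pow Y]
      have : (-1 : MvPolynomial (Fin n) ℤ) ^ (c1 + e) * (-1) ^ (c2 + e) = (-1) ^ (c1 + c2) := by
        rw [← pow_add, show c1 + e + (c2 + e) = c1 + c2 + 2 * e by ring, pow_add _ (c1 + c2),
          pow_mul]
        simp
      rw [← this, pow_add X, pow_add Y, mul_pow]
      ring
  · simp
  · intro j hj
    have h : (hiS E i (j + 1) < E.1 i j) ↔ (E.1 (i + 2) (j + 1) < E.1 i j) := by
      rw [hiS, if_neg (Nat.succ_ne_zero j)]; simp
    simp [h]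
  · intro j hj
    have h : (E.1 (i + 2) (j + 1) < lowS E i r t j) ↔ (E.1 (i + 2) (j + 1) < E.1 i j) := by
      rw [lowS, if_neg hj.ne, loS]; simp
    simp [h]
  · simp [lowS]

/-! ### Symmetry and antisymmetrization -/

/-- The antisymmetrizer of polynomials in `n` variables. -/
noncomputable def antisym {n : ℕ} (f : MvPolynomial (Fin n) ℤ) : MvPolynomial (Fin n) ℤ :=
  ∑ σ : Equiv.Perm (Fin n), (Equiv.Perm.sign σ : ℤ) • MvPolynomial.rename σ f

lemma antisym_sum {n : ℕ} {ι : Type*} (s : Finset ι) (f : ι → MvPolynomial (Fin n) ℤ) :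
    antisym (∑ x ∈ s, f x) = ∑ x ∈ s, antisym (f x) := by
  unfold antisym
  rw [Finset.sum_comm]
  refine Finset.sum_congr rfl fun σ _ => ?_
  rw [map_sum, Finset.smul_sum]

lemma antisym_mul {n : ℕ} {G : MvPolynomial (Fin n) ℤ}
    (hG : ∀ σ : Equiv.Perm (Fin n), MvPolynomial.rename σ G = G) (f : MvPolynomial (Fin n) ℤ) :
    antisym (G * f) = G * antisym f := by
  unfold antisym
  rw [Finset.mul_sum]
  refine Finset.sum_congr rfl fun σ _ => ?_
  rw [map_mul, hG, mul_smul_comm]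

lemma antisym_eq_zero {n : ℕ} {a b : Fin n} (hab : a ≠ b) {f : MvPolynomial (Fin n) ℤ}
    (hf : swapVar a b f = f) : antisym f = 0 := by
  have h : antisym f = - antisym f := by
    unfold antisym
    conv_lhs => rw [← Equiv.sum_comp (Equiv.mulRight (Equiv.swap a b))]
    rw [← Finset.sum_neg_distrib]
    refine Finset.sum_congr rfl fun σ _ => ?_
    have : MvPolynomial.rename (⇑(σ * Equiv.swap a b)) f = MvPolynomial.rename σ f := by
      conv_rhs => rw [← hf, swapVar, MvPolynomial.rename_rename]
      rfl
    rw [Equiv.coe_mulRight, this, Equiv.Perm.sign_mul, Equiv.Perm.sign_swap hab]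
    simp
  exact self_eq_neg.1 h

/-- The monomial with exponents `α v + v`, times the powers `(1 - X v) ^ (n - 1 - v)`. -/
noncomputable def base (n : ℕ) (α : ℕ → ℕ) : MvPolynomial (Fin n) ℤ :=
  ∏ v : Fin n, (MvPolynomial.X v ^ (α v + v) * (1 - MvPolynomial.X v) ^ (n - 1 - (v : ℕ)))

/-- The numerator of the bialternant formula for stable Grothendieck polynomials. -/
noncomputable def bialt (n : ℕ) (α : ℕ → ℕ) : MvPolynomial (Fin n) ℤ := antisym (base n α)

lemma patTerm_mul_base (n : ℕ) (D : Pat) (b : ℕ → ℕ) :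
    patTerm n D * base n b = (-1) ^ nmarks n D * base n (fun v => b v + wtP n D v) := by
  unfold patTerm base
  rw [mul_assoc, ← Finset.prod_mul_distrib]
  congr 1
  refine Finset.prod_congr rfl fun v _ => ?_
  ring

lemma rename_neg_one_pow {n : ℕ} (k : ℕ) (σ : Equiv.Perm (Fin n)) :
    MvPolynomial.rename σ ((-1 : MvPolynomial (Fin n) ℤ) ^ k) = (-1) ^ k := by
  simp

lemma tail_zero_of_le {n : ℕ} {la : ℕ → ℕ} (hla : IsPart n la) {D : Pat} (h : IsPat n la D)
    (v : ℕ) {r : ℕ} (hr : n ≤ r) : tail n D v r = 0 := by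
  refine Finset.sum_eq_zero fun j hj => ?_
  have := (Finset.mem_Ico.1 hj).1
  rw [cnt, h.eq_zero hla _ (by omega), h.mark_zero hla _ (by omega)]
  simp

lemma tail_succ {n : ℕ} {la : ℕ → ℕ} (hla : IsPart n la) {D : Pat} (h : IsPat n la D)
    (v r : ℕ) : tail n D v r = cnt D v r + tail n D v (r + 1) := by
  by_cases hr : r < n + 1
  · unfold tail
    rw [Finset.sum_eq_sum_Ico_succ_bot hr]
  · rw [tail_zero_of_le hla h _ (by omega), tail_zero_of_le hla h _ (by omega), cnt,
      h.eq_zero hla _ (by omega), h.mark_zero hla _ (by omega)]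
    simp

lemma Agree.refl (i r : ℕ) (D : Pat) : Agree i r D D := ⟨fun _ _ _ => rfl, fun _ _ _ _ => rfl⟩

lemma Agree.symm {i r : ℕ} {D E : Pat} (h : Agree i r D E) : Agree i r E D :=
  ⟨fun v j hv => (h.1 v j hv).symm, fun v j hv hv' => (h.2 v j hv hv').symm⟩

lemma Agree.trans {i r : ℕ} {D E F : Pat} (h : Agree i r D E) (h' : Agree i r E F) :
    Agree i r D F :=
  ⟨fun v j hv => (h.1 v j hv).trans (h'.1 v j hv),
   fun v j hv hv' => (h.2 v j hv hv').trans (h'.2 v j hv hv')⟩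

lemma grothP_swap {n : ℕ} {la : ℕ → ℕ} (hla : IsPart n la) (a b : Fin n)
    (hab : (b : ℕ) = a + 1) : swapVar a b (grothP n la) = grothP n la := by
  classical
  rw [grothP, map_sum, ← sub_eq_zero, ← Finset.sum_sub_distrib]
  let R : Setoid Pat := ⟨Agree a n, Agree.refl _ _, Agree.symm, Agree.trans⟩
  refine Finset.sum_cancels_of_partition_cancels R fun E hE => ?_
  have hE' := (mem_pats hla).1 hE
  have h0 : loS E a n = 0 := by
    rw [loS, hE'.eq_zero hla _ le_rfl, hE'.eq_zero hla _ (by omega)]; rfl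
  obtain ⟨C, hC, hs⟩ := fiber_sum hla hE' (i := a) (r := n) (t := 0) (by omega) le_rfl
    (Nat.zero_le _) h0.le a b rfl hab
  rw [tail_zero_of_le hla hE' _ (by omega), tail_zero_of_le hla hE' _ (by omega),
    hE'.mark_zero hla _ le_rfl] at hs
  simp only [Nat.zero_le, and_true, Nat.zero_sub, add_zero, pow_zero, mul_one, not_lt_zero,
    if_false] at hs
  rw [Finset.sum_sub_distrib, ← map_sum]
  change swapVar a b (∑ D ∈ (pats n la).filter (fun D => Agree a n D E), patTerm n D) -
    ∑ D ∈ (pats n la).filter (fun D => Agree a n D E), patTerm n D = 0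
  rw [hs, hC, sub_self]

lemma grothP_symm {n : ℕ} {la : ℕ → ℕ} (hla : IsPart n la) (σ : Equiv.Perm (Fin n)) :
    MvPolynomial.rename σ (grothP n la) = grothP n la := by
  cases n with
  | zero =>
    rw [Subsingleton.elim σ 1]
    exact MvPolynomial.rename_id_apply _
  | succ n =>
    have hσ : σ ∈ Submonoid.closure
        (Set.range fun i : Fin n ↦ Equiv.swap i.castSucc i.succ) := by
      rw [Equiv.Perm.mclosure_swap_castSucc_succ]; trivial
    induction hσ using Submonoid.closure_induction with
    | mem σ h =>
      obtain ⟨i, rfl⟩ := h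
      exact grothP_swap hla i.castSucc i.succ (by simp)
    | one => exact MvPolynomial.rename_id_apply _
    | mul σ τ _ _ h1 h2 =>
      rw [Equiv.Perm.coe_mul, ← MvPolynomial.rename_rename, h2, h1]

/-! ### Cancellation of non-dominant patterns -/

/-- The dominance condition fails for the letters `i`, `i + 1` at row `r`. -/
def Viol (n : ℕ) (b : ℕ → ℕ) (D : Pat) (i r : ℕ) : Prop :=
  b (i + 1) + tail n D (i + 1) (r + 1) < b i + tail n D i r

/-- Dominance with respect to `b`, for the word reading the rows from bottom to top and each row
from left to right. -/
def Dom (n : ℕ) (b : ℕ → ℕ) (D : Pat) : Prop :=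
  ∀ i, i + 1 < n → ∀ r, ¬ Viol n b D i r

/-- The first violation of dominance: in the largest violating row `r`, the smallest violating
letter `i`. -/
def First (n : ℕ) (b : ℕ → ℕ) (D : Pat) (i r : ℕ) : Prop :=
  i + 1 < n ∧ Viol n b D i r ∧ (∀ i', i' + 1 < n → ∀ r', r < r' → ¬ Viol n b D i' r') ∧
    ∀ i', i' < i → ¬ Viol n b D i' r

lemma First.unique {n : ℕ} {b : ℕ → ℕ} {D : Pat} {i r i' r' : ℕ} (h : First n b D i r)
    (h' : First n b D i' r') : i = i' ∧ r = r' := by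
  have hr : r = r' := by
    rcases lt_trichotomy r r' with c | c | c
    · exact absurd h'.2.1 (h.2.2.1 _ h'.1 _ c)
    · exact c
    · exact absurd h.2.1 (h'.2.2.1 _ h.1 _ c)
  subst hr
  refine ⟨?_, rfl⟩
  rcases lt_trichotomy i i' with c | c | c
  · exact absurd h.2.1 (h'.2.2.2 _ c)
  · exact c
  · exact absurd h'.2.1 (h.2.2.2 _ c)

lemma Viol.lt {n : ℕ} {la : ℕ → ℕ} (hla : IsPart n la) {b : ℕ → ℕ}
    (hb : ∀ v, v + 1 < n → b v ≤ b (v + 1))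
    {D : Pat} (hD : IsPat n la D) {i r : ℕ} (hi : i + 1 < n) (h : Viol n b D i r) : r < n := by
  by_contra hr
  have := hb i hi
  rw [Viol, tail_zero_of_le hla hD _ (by omega), tail_zero_of_le hla hD _ (by omega)] at h
  omega

lemma exists_first {n : ℕ} {la : ℕ → ℕ} (hla : IsPart n la) {b : ℕ → ℕ}
    (hb : ∀ v, v + 1 < n → b v ≤ b (v + 1)) {D : Pat} (hD : IsPat n la D) (h : ¬ Dom n b D) :
    ∃ i r, First n b D i r := by
  classical
  unfold Dom at h
  push Not at h
  obtain ⟨i, hi, r, hv⟩ := h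
  let P : ℕ → Prop := fun r => ∃ i, i + 1 < n ∧ Viol n b D i r
  have hP : P (Nat.findGreatest P n) :=
    Nat.findGreatest_spec (P := P) (hv.lt hla hb hD hi).le ⟨i, hi, hv⟩
  have hmax : ∀ r', P r' → r' ≤ Nat.findGreatest P n := by
    rintro r' ⟨i', hi', hv'⟩
    exact Nat.le_findGreatest (hv'.lt hla hb hD hi').le ⟨i', hi', hv'⟩
  set r := Nat.findGreatest P n
  refine ⟨Nat.find hP, r, (Nat.find_spec hP).1, (Nat.find_spec hP).2, ?_, ?_⟩
  · intro i' hi' r' hr' hv'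
    have := hmax r' ⟨i', hi', hv'⟩
    omega
  · intro i' hi' hv'
    have := (Nat.find_spec hP).1
    exact Nat.find_min hP hi' ⟨by omega, hv'⟩

/-- Tails are unchanged along a fiber when they avoid the varying sites. -/
lemma tail_agree {n i r : ℕ} {D E : Pat} (h : Agree i r D E) {v r' : ℕ}
    (hv : r < r' ∨ (v < i ∧ r ≤ r')) : tail n D v r' = tail n E v r' := by
  refine Finset.sum_congr rfl fun j hj => ?_
  have := (Finset.mem_Ico.1 hj).1
  unfold cnt
  rw [h.1 (v + 1) j (by omega), h.1 v j (by omega), h.2 v j (by omega) (by omega)]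

/-- The smallest value of the entry `(i + 1, r)` that produces a violation at `(i, r)`. -/
def thr (n : ℕ) (b : ℕ → ℕ) (E : Pat) (i r : ℕ) : ℕ :=
  b (i + 1) + tail n E (i + 1) (r + 1) + 1 + E.1 i r - (b i + tail n E i (r + 1) + E.2 i r)

lemma thr_spec {n : ℕ} {la : ℕ → ℕ} (hla : IsPart n la) {b : ℕ → ℕ}
    {E : Pat} (hE : IsPat n la E) {i r : ℕ} (hF : First n b E i r) :
    E.1 i r ≤ thr n b E i r ∧ E.1 (i + 2) (r + 1) < thr n b E i r ∧
    b i + (tail n E i (r + 1) + E.2 i r + (thr n b E i r - E.1 i r))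
      = b (i + 1) + tail n E (i + 1) (r + 1) + 1 := by
  have hnv := hF.2.2.1 i hF.1 (r + 1) (Nat.lt_succ_self r)
  have e1 := tail_succ hla hE (i + 1) (r + 1)
  have e2 := hE.cast_cnt hF.1 (r + 1)
  have e3 := hE.inter i (by have := hF.1; omega) r
  have e4 := hE.mle i r
  rw [Viol] at hnv
  rw [show i + 1 + 1 = i + 2 from rfl] at *
  unfold thr
  omega

lemma first_iff {n : ℕ} {la : ℕ → ℕ} (hla : IsPart n la) {b : ℕ → ℕ}
    {D E : Pat} (hD : IsPat n la D) {i r : ℕ} (hF : First n b E i r)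
    (hag : Agree i r D E) : First n b D i r ↔ thr n b E i r ≤ D.1 (i + 1) r := by
  have hi := hF.1
  have hv : Viol n b D i r ↔ thr n b E i r ≤ D.1 (i + 1) r := by
    have e1 := tail_succ hla hD i r
    have e2 := hD.cast_cnt (v := i) (by omega) r
    have e3 := tail_agree (n := n) hag (v := i) (r' := r + 1) (by omega)
    have e4 := tail_agree (n := n) hag (v := i + 1) (r' := r + 1) (by omega)
    have e5 := hag.1 i r (by omega)
    have e6 := hag.2 i r (by omega) (by omega)
    unfold Viol thr
    omega
  rw [← hv]
  refine ⟨fun h => h.2.1, fun h => ⟨hi, h, ?_, ?_⟩⟩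
  · intro i' hi' r' hr'
    rw [Viol, tail_agree hag (by omega), tail_agree hag (by omega)]
    exact hF.2.2.1 i' hi' r' hr'
  · intro i' hi'
    rw [Viol, tail_agree hag (by omega), tail_agree hag (by omega)]
    exact hF.2.2.2 i' hi'

/-- A fiber sum times `base` is invariant under the exchange of two adjacent variables. -/
lemma swap_base {n : ℕ} {i c1 c2 : ℕ} {b : ℕ → ℕ} {a a' : Fin n} (ha : (a : ℕ) = i)
    (ha' : (a' : ℕ) = i + 1) (hc : b i + c1 = b (i + 1) + c2 + 1)
    {C : MvPolynomial (Fin n) ℤ} (hC : swapVar a a' C = C) :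
    swapVar a a' (C * MvPolynomial.X a ^ c1 * MvPolynomial.X a' ^ c2 * (1 - MvPolynomial.X a')
      * base n b) = C * MvPolynomial.X a ^ c1 * MvPolynomial.X a' ^ c2 * (1 - MvPolynomial.X a')
      * base n b := by
  have haa : a ≠ a' := fun h => by rw [h] at ha; omega
  set X : MvPolynomial (Fin n) ℤ := MvPolynomial.X a with hX
  set Y : MvPolynomial (Fin n) ℤ := MvPolynomial.X a' with hY
  set K : MvPolynomial (Fin n) ℤ := ∏ v ∈ (Finset.univ.erase a).erase a',
    (MvPolynomial.X v ^ (b v + v) * (1 - MvPolynomial.X v) ^ (n - 1 - (v : ℕ))) with hK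
  have hsX : swapVar a a' X = Y := by simp [swapVar, hX, hY]
  have hsY : swapVar a a' Y = X := by simp [swapVar, hX, hY]
  have hsK : swapVar a a' K = K := by
    rw [hK, map_prod]
    refine Finset.prod_congr rfl fun v hv => ?_
    simp only [Finset.mem_erase, Finset.mem_univ, and_true] at hv
    simp [swapVar, Equiv.swap_apply_of_ne_of_ne hv.2 hv.1]
  have hb : base n b = X ^ (b i + i) * (1 - X) ^ (n - 1 - i) *
      (Y ^ (b (i + 1) + (i + 1)) * (1 - Y) ^ (n - 1 - (i + 1)) * K) := by
    rw [base, ← Finset.mul_prod_erase Finset.univ _ (Finset.mem_univ a),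
      ← Finset.mul_prod_erase (Finset.univ.erase a) _
        (Finset.mem_erase.2 ⟨haa.symm, Finset.mem_univ a'⟩), ha, ha']
  have : C * X ^ c1 * Y ^ c2 * (1 - Y) * base n b
      = C * K * (X * Y) ^ (b i + c1 + i) * ((1 - X) * (1 - Y)) ^ (n - 1 - i) := by
    have h2 := a'.isLt
    rw [hb, show n - 1 - i = n - 1 - (i + 1) + 1 by omega, mul_pow, mul_pow,
      show X ^ (b i + c1 + i) = X ^ c1 * X ^ (b i + i) by rw [← pow_add]; congr 1; omega,
      show Y ^ (b i + c1 + i) = Y ^ c2 * Y ^ (b (i + 1) + (i + 1)) by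
        rw [← pow_add]; congr 1; omega]
    ring
  rw [this]
  simp only [map_mul, map_pow, hsX, hsY, hsK, hC, map_sub, map_one, mul_comm Y X,
    mul_comm (1 - Y) (1 - X)]

open Classical in
/-- The contributions of non-dominant patterns cancel. -/
lemma sum_not_dom {n : ℕ} {la : ℕ → ℕ} (hla : IsPart n la) {b : ℕ → ℕ}
    (hb : ∀ v, v + 1 < n → b v ≤ b (v + 1)) :
    ∑ D ∈ (pats n la).filter (fun D => ¬ Dom n b D), antisym (patTerm n D * base n b) = 0 := by
  let R : Setoid Pat :=
    { r := fun D E => D = E ∨ ∃ i r, First n b D i r ∧ First n b E i r ∧ Agree i r D E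
      iseqv := by
        refine ⟨fun _ => Or.inl rfl, ?_, ?_⟩
        · rintro D E (h | ⟨i, r, h1, h2, h3⟩)
          · exact Or.inl h.symm
          · exact Or.inr ⟨i, r, h2, h1, h3.symm⟩
        · rintro D E F (rfl | ⟨i, r, h1, h2, h3⟩) h'
          · exact h'
          · rcases h' with rfl | ⟨i', r', h1', h2', h3'⟩
            · exact Or.inr ⟨i, r, h1, h2, h3⟩
            · obtain ⟨rfl, rfl⟩ := h2.unique h1'
              exact Or.inr ⟨i, r, h1, h2', h3.trans h3'⟩ }
  refine Finset.sum_cancels_of_partition_cancels R fun E hE => ?_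
  obtain ⟨hE, hnd⟩ := Finset.mem_filter.1 hE
  replace hE := (mem_pats hla).1 hE
  obtain ⟨i, r, hF⟩ := exists_first hla hb hE hnd
  have hi := hF.1
  have hset : ((pats n la).filter (fun D => ¬ Dom n b D)).filter (fun D => R.r D E)
      = (pats n la).filter (fun D => Agree i r D E ∧ thr n b E i r ≤ D.1 (i + 1) r) := by
    ext D
    simp only [Finset.mem_filter, and_assoc]
    refine and_congr_right fun hD => ?_
    replace hD := (mem_pats hla).1 hD
    constructor
    · rintro ⟨_, rfl | ⟨i', r', h1, h2, h3⟩⟩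
      · exact ⟨Agree.refl _ _ _, (first_iff hla hD hF (Agree.refl _ _ _)).1 hF⟩
      · obtain ⟨rfl, rfl⟩ := hF.unique h2
        exact ⟨h3, (first_iff hla hD hF h3).1 h1⟩
    · rintro ⟨h1, h2⟩
      have h3 := (first_iff hla hD hF h1).2 h2
      exact ⟨fun h => h i hi r h3.2.1, Or.inr ⟨i, r, h3, hF, h1⟩⟩
  rw [hset, ← antisym_sum, ← Finset.sum_mul]
  obtain ⟨h1, h2, h3⟩ := thr_spec hla hE hF
  have hr := Viol.lt hla hb hE hi hF.2.1
  obtain ⟨C, hC, hs⟩ := fiber_sum hla hE hi hr.le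
    ((first_iff hla hE hF (Agree.refl _ _ _)).1 hF) (max_le h1 h2.le)
    ⟨i, by omega⟩ ⟨i + 1, hi⟩ rfl rfl
  rw [hs, if_pos h2]
  refine antisym_eq_zero (a := ⟨i, by omega⟩) (b := ⟨i + 1, hi⟩) (by simp) ?_
  exact swap_base rfl rfl h3 hC

open Classical in
/-- The Pieri-type formula: multiplication of a bialternant by a Grothendieck polynomial. -/
lemma grothP_mul_bialt {n : ℕ} {la : ℕ → ℕ} (hla : IsPart n la) {b : ℕ → ℕ}
    (hb : ∀ v, v + 1 < n → b v ≤ b (v + 1)) :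
    grothP n la * bialt n b = ∑ D ∈ (pats n la).filter (fun D => Dom n b D),
      (-1) ^ nmarks n D * bialt n (fun v => b v + wtP n D v) := by
  rw [bialt, ← antisym_mul (grothP_symm hla), grothP, Finset.sum_mul, antisym_sum,
    ← Finset.sum_filter_add_sum_filter_not _ (fun D => Dom n b D), sum_not_dom hla hb, add_zero]
  refine Finset.sum_congr rfl fun D _ => ?_
  rw [patTerm_mul_base, antisym_mul (rename_neg_one_pow _), bialt]

/-! ### The bialternant formula and the product expansion for patterns -/

lemma sum_cnt {n : ℕ} {la : ℕ → ℕ} {D : Pat} (h : IsPat n la D) (j : ℕ) {k : ℕ} (hk : k ≤ n) :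
    ∑ v ∈ Finset.range k, cnt D v j = D.1 k j + ∑ v ∈ Finset.range k, D.2 v j := by
  induction k with
  | zero => simp [h.zero]
  | succ k ih =>
    rw [Finset.sum_range_succ, Finset.sum_range_succ, ih (by omega)]
    have := h.cast_cnt (v := k) (by omega) j
    omega

lemma tail_last_le {n : ℕ} {la : ℕ → ℕ} (hla : IsPart n la) {D : Pat} (h : IsPat n la D)
    {v : ℕ} (hv : v + 1 = n) (r : ℕ) : tail n D v r ≤ la r := by
  by_cases hr : n ≤ r
  · rw [tail_zero_of_le hla h v hr]; exact Nat.zero_le _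
  · refine Nat.decreasingInduction' (P := fun r => tail n D v r ≤ la r) (n := n) ?_ (by omega) ?_
    · intro k _ _ ih
      have e1 := tail_succ hla h v k
      have e2 := h.cast_cnt (v := v) (by omega) k
      have e3 := h.inter v (by omega) k
      rw [hv, h.top] at e2 e3
      omega
    · rw [tail_zero_of_le hla h v le_rfl]; exact Nat.zero_le _

lemma tail_le_of_dom {n : ℕ} {la : ℕ → ℕ} (hla : IsPart n la) {D : Pat} (h : IsPat n la D)
    (hd : Dom n (fun _ => 0) D) {d v : ℕ} (hv : v + d + 1 = n) (r : ℕ) :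
    tail n D v r ≤ la (r + d) := by
  induction d generalizing v r with
  | zero => exact tail_last_le hla h (by omega) r
  | succ d ih =>
    have h1 := hd v (by omega) r
    have h2 := ih (v := v + 1) (by omega) (r + 1)
    rw [show r + 1 + d = r + (d + 1) by omega] at h2
    simp only [Viol, zero_add] at h1
    omega

lemma sum_tail {n : ℕ} {la : ℕ → ℕ} {D : Pat} (h : IsPat n la D) (r : ℕ) :
    ∑ v ∈ Finset.range n, tail n D v r = ∑ j ∈ Finset.Ico r (n + 1), la j
      + ∑ j ∈ Finset.Ico r (n + 1), ∑ v ∈ Finset.range n, D.2 v j := by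
  unfold tail
  rw [Finset.sum_comm, ← Finset.sum_add_distrib]
  refine Finset.sum_congr rfl fun j _ => ?_
  rw [sum_cnt h j le_rfl, h.top]

lemma sum_shift {n : ℕ} {la : ℕ → ℕ} (hla : IsPart n la) (r : ℕ) :
    ∑ v ∈ Finset.range n, la (r + (n - 1 - v)) = ∑ j ∈ Finset.Ico r (n + 1), la j := by
  rw [Finset.sum_range_reflect (fun k => la (r + k)) n]
  have h1 : ∑ k ∈ Finset.range n, la (r + k) = ∑ j ∈ Finset.Ico r (r + n), la j := by
    rw [Finset.sum_Ico_eq_sum_range]; simp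
  have h2 : ∀ s, n ≤ s → ∑ j ∈ Finset.Ico r s, la j = ∑ j ∈ Finset.Ico r n, la j := by
    intro s hs
    symm
    refine Finset.sum_subset (Finset.Ico_subset_Ico le_rfl hs) fun j hj hj' => hla.2 j ?_
    simp only [Finset.mem_Ico] at hj hj'
    omega
  rw [h1, h2 (r + n) (by omega), h2 (n + 1) (by omega)]

/-- A pattern that is dominant with respect to `0` has no marks and the largest possible tails:
the tails are bounded termwise, and their sum is at least the sum of the bounds. -/
lemma dom_zero_tight {n : ℕ} {la : ℕ → ℕ} (hla : IsPart n la) {D : Pat} (h : IsPat n la D)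
    (hd : Dom n (fun _ => 0) D) (r : ℕ) :
    (∀ v, v < n → tail n D v r = la (r + (n - 1 - v))) ∧
    ∀ j ∈ Finset.Ico r (n + 1), ∀ v, v < n → D.2 v j = 0 := by
  have hle : ∀ v ∈ Finset.range n, tail n D v r ≤ la (r + (n - 1 - v)) := fun v hv => by
    have := Finset.mem_range.1 hv
    exact tail_le_of_dom hla h hd (by omega) r
  have hs := sum_tail h r
  have hle' := Finset.sum_le_sum hle
  rw [sum_shift hla r] at hle'
  have hz : ∑ j ∈ Finset.Ico r (n + 1), ∑ v ∈ Finset.range n, D.2 v j = 0 := by omega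
  constructor
  · intro v hv
    refine (Finset.sum_eq_sum_iff_of_le hle).1 ?_ v (Finset.mem_range.2 hv)
    rw [sum_shift hla r]; omega
  · intro j hj v hv
    have := Finset.sum_eq_zero_iff.1 hz j hj
    exact Finset.sum_eq_zero_iff.1 this v (Finset.mem_range.2 hv)

/-- The pattern of the tableau whose rotation is superstandard. -/
def topPat (n : ℕ) (la : ℕ → ℕ) : Pat :=
  (fun v r => if v ≤ n then la (r + (n - v)) else 0, fun _ _ => 0)

lemma topPat_isPat {n : ℕ} {la : ℕ → ℕ} (hla : IsPart n la) : IsPat n la (topPat n la) := by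
  refine ⟨fun r => ?_, fun r => ?_, fun v hv r => ?_, fun v hv r => rfl, fun v r => Nat.zero_le _,
    fun v hv r => ?_, fun v hv r => ?_⟩
  · simp only [topPat, Nat.zero_le, if_true]; exact hla.2 _ (by omega)
  · simp [topPat]
  · simp [topPat, not_le.2 hv]
  · simp only [topPat, if_pos hv.le, if_pos (Nat.succ_le_of_lt hv)]
    rw [show r + (n - v) = r + (n - (v + 1)) + 1 by omega]
    exact hla.1 _
  · simp only [topPat, if_pos hv.le, if_pos (Nat.succ_le_of_lt hv)]
    rw [show r + (n - v) = r + 1 + (n - (v + 1)) by omega]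
    omega

lemma topPat_tail {n : ℕ} {la : ℕ → ℕ} (hla : IsPart n la) {v : ℕ} (hv : v < n) (r : ℕ) :
    tail n (topPat n la) v r = la (r + (n - 1 - v)) := by
  have h := topPat_isPat hla
  by_cases hr : n ≤ r
  · rw [tail_zero_of_le hla h v hr, hla.2 _ (by omega)]
  · refine Nat.decreasingInduction' (P := fun r => tail n (topPat n la) v r = la (r + (n - 1 - v)))
      (n := n) ?_ (by omega) ?_
    · intro k _ _ ih
      have e1 := tail_succ hla h v k
      have e2 : cnt (topPat n la) v k = la (k + (n - (v + 1))) - la (k + (n - v)) := by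
        simp [cnt, topPat, hv.le, Nat.succ_le_of_lt hv]
      have e3 := hla.1 (k + (n - (v + 1)))
      rw [show k + (n - (v + 1)) + 1 = k + 1 + (n - 1 - v) by omega] at e3
      rw [show k + (n - v) = k + 1 + (n - 1 - v) by omega] at e2
      rw [show n - (v + 1) = n - 1 - v by omega] at *
      omega
    · rw [tail_zero_of_le hla h v le_rfl, hla.2 _ (by omega)]

lemma topPat_dom {n : ℕ} {la : ℕ → ℕ} (hla : IsPart n la) :
    Dom n (fun _ => 0) (topPat n la) := by
  intro i hi r
  rw [Viol, topPat_tail hla hi, topPat_tail hla (by omega : i < n),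
    show r + 1 + (n - 1 - (i + 1)) = r + (n - 1 - i) by omega]
  omega

lemma tail_zero_eq (n : ℕ) (D : Pat) (v : ℕ) : tail n D v 0 = wtP n D v := by
  rw [tail, wtP, Finset.range_eq_Ico]

lemma eq_topPat {n : ℕ} {la : ℕ → ℕ} (hla : IsPart n la) {D : Pat} (h : IsPat n la D)
    (hd : Dom n (fun _ => 0) D) : D = topPat n la := by
  have hm : ∀ v j, D.2 v j = 0 := by
    intro v j
    by_cases hv : n ≤ v
    · exact h.mout v hv j
    by_cases hj : n ≤ j
    · exact h.mark_zero hla v hj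
    exact (dom_zero_tight hla h hd 0).2 j (by simp; omega) v (by omega)
  have hc : ∀ v r, v < n → cnt D v r = cnt (topPat n la) v r := by
    intro v r hv
    have e1 := tail_succ hla h v r
    have e2 := tail_succ hla (topPat_isPat hla) v r
    rw [(dom_zero_tight hla h hd _).1 v hv, (dom_zero_tight hla h hd _).1 v hv] at e1
    rw [topPat_tail hla hv, topPat_tail hla hv] at e2
    omega
  refine Prod.ext ?_ ?_
  · funext v r
    by_cases hv : n < v
    · rw [h.out v hv, (topPat_isPat hla).out v hv]
    have e1 := sum_cnt h r (not_lt.1 hv)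
    have e2 := sum_cnt (topPat_isPat hla) r (not_lt.1 hv)
    rw [Finset.sum_congr rfl fun k hk =>
      hc k r (lt_of_lt_of_le (Finset.mem_range.1 hk) (not_lt.1 hv)), e2] at e1
    simp only [hm, topPat, Finset.sum_const_zero] at e1 ⊢
    omega
  · funext v r
    rw [hm]; rfl

lemma bialt_congr {n : ℕ} {α β : ℕ → ℕ} (h : ∀ v, v < n → α v = β v) :
    bialt n α = bialt n β := by
  unfold bialt base
  congr 1
  refine Finset.prod_congr rfl fun v _ => ?_
  rw [h v v.isLt]

/-- The bialternant formula. -/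
lemma grothP_bialt {n : ℕ} {la : ℕ → ℕ} (hla : IsPart n la) :
    grothP n la * bialt n (fun _ => 0) = bialt n (fun v => la (n - 1 - v)) := by
  classical
  rw [grothP_mul_bialt hla (fun _ _ => le_rfl)]
  have : (pats n la).filter (fun D => Dom n (fun _ => 0) D) = {topPat n la} := by
    ext D
    simp only [Finset.mem_filter, mem_pats hla, Finset.mem_singleton]
    constructor
    · rintro ⟨h1, h2⟩; exact eq_topPat hla h1 h2
    · rintro rfl; exact ⟨topPat_isPat hla, topPat_dom hla⟩
  rw [this, Finset.sum_singleton]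
  have h0 : nmarks n (topPat n la) = 0 := by simp [nmarks, topPat]
  rw [h0, pow_zero, one_mul]
  refine bialt_congr fun v hv => ?_
  rw [← tail_zero_eq, topPat_tail hla hv]
  simp

lemma bialt_zero_ne (n : ℕ) : bialt n (fun _ => 0) ≠ 0 := by
  have h : bialt n (fun _ => 0) = (Matrix.projVandermonde (fun i : Fin n => MvPolynomial.X i)
      (fun i => (1 - MvPolynomial.X i : MvPolynomial (Fin n) ℤ))).det := by
    rw [Matrix.det_apply', bialt, antisym]
    refine Finset.sum_congr rfl fun σ _ => ?_
    rw [base, map_prod, zsmul_eq_mul]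
    congr 1
    refine Finset.prod_congr rfl fun v _ => ?_
    simp [Matrix.projVandermonde_apply, Fin.val_rev, Nat.sub_sub, add_comm 1]
  rw [h, Matrix.det_projVandermonde, Finset.prod_ne_zero_iff]
  intro i _
  rw [Finset.prod_ne_zero_iff]
  intro j hj
  have hij : j ≠ i := (Finset.mem_Ioi.1 hj).ne'
  intro h0
  have : (MvPolynomial.X j : MvPolynomial (Fin n) ℤ) = MvPolynomial.X i := by
    linear_combination h0
  exact hij (MvPolynomial.X_injective this)

/-- The partition attached to a dominant pattern: the reversal of `b + wtP n D`, where `b` is the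
reversal of `mu`. -/
def nuOf (n : ℕ) (mu : ℕ → ℕ) (D : Pat) (r : ℕ) : ℕ :=
  if r < n then mu r + wtP n D (n - 1 - r) else 0

lemma nuOf_isPart {n : ℕ} {la mu : ℕ → ℕ} (hla : IsPart n la)
    {D : Pat} (hD : IsPat n la D) (hd : Dom n (fun v => mu (n - 1 - v)) D) :
    IsPart n (nuOf n mu D) := by
  refine ⟨fun r => ?_, fun r hr => if_neg (not_lt.2 hr)⟩
  unfold nuOf
  by_cases hr : r + 1 < n
  · rw [if_pos hr, if_pos (by omega)]
    have h1 := hd (n - 1 - (r + 1)) (by omega) 0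
    rw [Viol, show n - 1 - (r + 1) + 1 = n - 1 - r by omega,
      show n - 1 - (n - 1 - r) = r by omega,
      show n - 1 - (n - 1 - (r + 1)) = r + 1 by omega, tail_zero_eq] at h1
    have h2 := tail_succ hla hD (n - 1 - r) 0
    rw [tail_zero_eq] at h2
    rw [zero_add] at *
    omega
  · rw [if_neg hr]; exact Nat.zero_le _

open Classical in
/-- The product expansion, indexed by dominant patterns instead of contratableaux. -/
lemma grothP_mul {n : ℕ} {la mu : ℕ → ℕ} (hla : IsPart n la) (hmu : IsPart n mu) :
    grothP n la * grothP n mu =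
      ∑ D ∈ (pats n la).filter (fun D => Dom n (fun v => mu (n - 1 - v)) D),
        (-1) ^ nmarks n D * grothP n (nuOf n mu D) := by
  apply mul_right_cancel₀ (bialt_zero_ne n)
  rw [mul_assoc, grothP_bialt hmu, grothP_mul_bialt hla, Finset.sum_mul]
  · refine Finset.sum_congr rfl fun D hD => ?_
    obtain ⟨hD, hd⟩ := Finset.mem_filter.1 hD
    rw [mul_assoc, grothP_bialt (nuOf_isPart hla ((mem_pats hla).1 hD) hd)]
    congr 1
    refine bialt_congr fun v hv => ?_
    rw [nuOf, if_pos (by omega), show n - 1 - (n - 1 - v) = v by omega]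
  · intro v hv
    have := hmu.1 (n - 1 - (v + 1))
    rwa [show n - 1 - (v + 1) + 1 = n - 1 - v by omega] at this

/-! ### Set-valued tableaux and marked patterns -/

/-- A partition re-indexed from `0`. -/
def shift (lam : ℕ → ℕ) (r : ℕ) : ℕ := lam (r + 1)

lemma IsPartition.shift {n : ℕ} {lam : ℕ → ℕ} (h : IsPartition n lam) : IsPart n (shift lam) :=
  ⟨fun r => h.2.1 (r + 1) (by omega), fun r hr => h.2.2 (r + 1) (by omega)⟩

lemma IsPartition.le_one {n : ℕ} {lam : ℕ → ℕ} (h : IsPartition n lam) {i : ℕ} (hi : 1 ≤ i) :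
    lam i ≤ lam 1 := by
  have := h.shift.le_zero (i - 1)
  simpa [_root_.shift, Nat.sub_add_cancel hi] using this

/-- The set-valued tableau of a marked pattern. -/
def toT (n : ℕ) (D : Pat) (i c : ℕ) : Finset ℕ :=
  if i = 0 then ∅ else (Finset.Icc 1 n).filter fun v =>
    (D.1 (v - 1) (i - 1) < c ∧ c ≤ D.1 v (i - 1)) ∨
      (D.2 (v - 1) (i - 1) = 1 ∧ c = D.1 (v - 1) (i - 1))

lemma mem_toT {n : ℕ} {D : Pat} {r c w : ℕ} : w + 1 ∈ toT n D (r + 1) c ↔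
    w < n ∧ ((D.1 w r < c ∧ c ≤ D.1 (w + 1) r) ∨ (D.2 w r = 1 ∧ c = D.1 w r)) := by
  simp [toT]

lemma toT_subset {n : ℕ} {D : Pat} {i c : ℕ} : toT n D i c ⊆ Finset.Icc 1 n := by
  unfold toT
  split_ifs
  · simp
  · exact Finset.filter_subset _ _

lemma IsPat.mono' {n : ℕ} {la : ℕ → ℕ} {D : Pat} (h : IsPat n la D) {v w : ℕ} (hvw : v ≤ w)
    (hw : w ≤ n) (r : ℕ) : D.1 v r ≤ D.1 w r := by
  induction w, hvw using Nat.le_induction with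
  | base => exact le_rfl
  | succ w _ ih => exact (ih (by omega)).trans (h.mono w (by omega) r)

lemma toT_bounds {n : ℕ} {la : ℕ → ℕ} {D : Pat} (h : IsPat n la D) {r c w : ℕ}
    (hm : w + 1 ∈ toT n D (r + 1) c) :
    w < n ∧ 1 ≤ c ∧ D.1 w r ≤ c ∧ c ≤ D.1 (w + 1) r ∧ (D.1 w r = c → D.2 w r = 1) := by
  obtain ⟨hw, h1⟩ := mem_toT.1 hm
  have h2 := h.mono w hw r
  have h3 := h.inter w hw r
  omega

lemma exists_mem_toT {n : ℕ} {la : ℕ → ℕ} {D : Pat} (h : IsPat n la D) {r c v : ℕ} (hv : v ≤ n)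
    (hc : 1 ≤ c) (hcv : c ≤ D.1 v r) : ∃ x ∈ toT n D (r + 1) c, x ≤ v := by
  induction v with
  | zero => rw [h.zero] at hcv; omega
  | succ v ih =>
    by_cases h1 : c ≤ D.1 v r
    · obtain ⟨x, hx, hxv⟩ := ih (by omega) h1
      exact ⟨x, hx, by omega⟩
    · exact ⟨v + 1, mem_toT.2 ⟨by omega, by omega⟩, le_rfl⟩

lemma toT_pos {n : ℕ} {D : Pat} {i c a : ℕ} (ha : a ∈ toT n D i c) :
    ∃ r w, i = r + 1 ∧ a = w + 1 := by
  have h1 := Finset.mem_Icc.1 (toT_subset ha)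
  have h2 : i ≠ 0 := by
    rintro rfl
    simp [toT] at ha
  exact ⟨i - 1, a - 1, by omega, by omega⟩

lemma toT_isSSVT {n : ℕ} {lam : ℕ → ℕ} {D : Pat} (h : IsPat n (shift lam) D) :
    IsSSVT n (ShapeBox lam) (toT n D) := by
  refine ⟨?_, fun i j _ => toT_subset, ?_, ?_, ?_⟩
  · rintro i c ⟨hi, hc, hcl⟩
    obtain ⟨r, rfl⟩ := Nat.exists_eq_add_of_le' hi
    obtain ⟨x, hx, _⟩ := exists_mem_toT h (r := r) le_rfl hc (by rw [h.top]; exact hcl)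
    exact ⟨x, hx⟩
  · intro i c hb
    rw [Finset.eq_empty_iff_forall_notMem]
    intro a ha
    obtain ⟨r, w, rfl, rfl⟩ := toT_pos ha
    obtain ⟨h1, h2, h3, h4, h5⟩ := toT_bounds h ha
    exact hb ⟨by omega, h2, h4.trans (h.le_top _ _)⟩
  · intro i c _ _ a ha b hb
    obtain ⟨r, w, rfl, rfl⟩ := toT_pos ha
    obtain ⟨r', w', h0, rfl⟩ := toT_pos hb
    obtain rfl : r = r' := by omega
    obtain ⟨h1, h2, h3, h4, h5⟩ := toT_bounds h ha
    obtain ⟨h1', h2', h3', h4', h5'⟩ := toT_bounds h hb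
    by_contra hlt
    have := h.mono' (show w' + 1 ≤ w by omega) (by omega) r
    omega
  · intro i c _ _ a ha b hb
    obtain ⟨r, w, rfl, rfl⟩ := toT_pos ha
    obtain ⟨r', w', h0, rfl⟩ := toT_pos hb
    obtain rfl : r' = r + 1 := by omega
    obtain ⟨h1, h2, h3, h4, h5⟩ := toT_bounds h ha
    obtain ⟨h1', h2', h3', h4', h5'⟩ := toT_bounds h hb
    by_contra hlt
    have e1 := h.mono' (show w' + 1 ≤ w + 1 by omega) (by omega) (r + 1)
    have e2 := h.inter w h1 r
    omega

open Classical in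
/-- The columns among `1, …, W` whose box in row `r + 1` has an entry at most `v`. -/
noncomputable def rowSet (W : ℕ) (T : ℕ → ℕ → Finset ℕ) (v r : ℕ) : Finset ℕ :=
  (Finset.Icc 1 W).filter fun c => ∃ x ∈ T (r + 1) c, x ≤ v

lemma mem_rowSet {W : ℕ} {T : ℕ → ℕ → Finset ℕ} {v r c : ℕ} :
    c ∈ rowSet W T v r ↔ c ∈ Finset.Icc 1 W ∧ ∃ x ∈ T (r + 1) c, x ≤ v := by
  simp [rowSet]

open Classical in
/-- The marked pattern of a set-valued tableau with columns `1, …, W`. -/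
noncomputable def patOf (n W : ℕ) (T : ℕ → ℕ → Finset ℕ) : Pat :=
  (fun v r => if v ≤ n then (rowSet W T v r).card else 0,
   fun v r => if ∃ c, v + 1 ∈ T (r + 1) c ∧ ∃ x ∈ T (r + 1) c, x ≤ v then 1 else 0)

lemma le_card_iff {W : ℕ} {S : Finset ℕ} (hS : S ⊆ Finset.Icc 1 W)
    (hd : ∀ c ∈ S, ∀ c', 1 ≤ c' → c' ≤ c → c' ∈ S) {c : ℕ} (hc : 1 ≤ c) :
    c ≤ S.card ↔ c ∈ S := by
  constructor
  · intro h
    by_contra hcS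
    have : S ⊆ Finset.Icc 1 (c - 1) := by
      intro x hx
      have h1 := (Finset.mem_Icc.1 (hS hx)).1
      have h2 : ¬ c ≤ x := fun h' => hcS (hd x hx c hc h')
      exact Finset.mem_Icc.2 ⟨h1, by omega⟩
    have := Finset.card_le_card this
    simp at this
    omega
  · intro h
    have : Finset.Icc 1 c ⊆ S := by
      intro x hx
      obtain ⟨h1, h2⟩ := Finset.mem_Icc.1 hx
      exact hd c h x h1 h2
    simpa using Finset.card_le_card this

section
variable {n : ℕ} {lam : ℕ → ℕ} {T : ℕ → ℕ → Finset ℕ}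

lemma IsSSVT.box (hT : IsSSVT n (ShapeBox lam) T) {i c a : ℕ} (ha : a ∈ T i c) :
    ShapeBox lam i c ∧ 1 ≤ a ∧ a ≤ n := by
  have hb : ShapeBox lam i c := by
    by_contra hb
    rw [hT.2.2.1 i c hb] at ha
    simp at ha
  exact ⟨hb, Finset.mem_Icc.1 (hT.2.1 i c hb ha)⟩

lemma IsSSVT.row (hT : IsSSVT n (ShapeBox lam) T) {i c c' a b : ℕ} (hcc : c < c')
    (ha : a ∈ T i c) (hb : b ∈ T i c') : a ≤ b := by
  induction c', hcc using Nat.le_induction generalizing b with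
  | base => exact hT.2.2.2.1 i c (hT.box ha).1 (hT.box hb).1 a ha b hb
  | succ d hd ih =>
    have h1 := (hT.box hb).1
    have h2 : ShapeBox lam i d := ⟨h1.1, by omega, by have := h1.2.2; omega⟩
    obtain ⟨x, hx⟩ := hT.1 i d h2
    exact (ih hx).trans (hT.2.2.2.1 i d h2 h1 x hx b hb)

lemma le_patOf (hlam : IsPartition n lam) (hT : IsSSVT n (ShapeBox lam) T) {v r c : ℕ}
    (hv : v ≤ n) (hc : 1 ≤ c) :
    c ≤ (patOf n (lam 1) T).1 v r ↔ ∃ x ∈ T (r + 1) c, x ≤ v := by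
  have hbox : ∀ c, (∃ x ∈ T (r + 1) c, x ≤ v) → ShapeBox lam (r + 1) c :=
    fun c ⟨x, hx, _⟩ => (hT.box hx).1
  simp only [patOf, if_pos hv]
  rw [le_card_iff (fun x hx => (mem_rowSet.1 hx).1) _ hc, mem_rowSet]
  · refine ⟨fun h => h.2, fun h => ⟨?_, h⟩⟩
    exact Finset.mem_Icc.2 ⟨hc, (hbox c h).2.2.trans (hlam.le_one (by omega))⟩
  · intro d hd d' h1 h2
    obtain ⟨hd, x, hx, hxv⟩ := mem_rowSet.1 hd
    have hbd := hbox d ⟨x, hx, hxv⟩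
    refine mem_rowSet.2 ⟨?_, ?_⟩
    · have := Finset.mem_Icc.1 hd
      exact Finset.mem_Icc.2 ⟨h1, by omega⟩
    · rcases h2.eq_or_lt with rfl | h2
      · exact ⟨x, hx, hxv⟩
      · obtain ⟨y, hy⟩ := hT.1 (r + 1) d' ⟨hbd.1, h1, by have := hbd.2.2; omega⟩
        exact ⟨y, hy, (hT.row h2 hy hx).trans hxv⟩

/-- A letter marked in a row sits in the last box whose minimum is a smaller letter. -/
lemma mark_col (hlam : IsPartition n lam) (hT : IsSSVT n (ShapeBox lam) T) {v r c x : ℕ}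
    (hv : v + 1 ∈ T (r + 1) c) (hx : x ∈ T (r + 1) c) (hxv : x ≤ v) :
    c = (patOf n (lam 1) T).1 v r := by
  have hb := hT.box hv
  have h1 : c ≤ (patOf n (lam 1) T).1 v r :=
    (le_patOf hlam hT (by omega) hb.1.2.1).2 ⟨x, hx, hxv⟩
  rcases h1.eq_or_lt with h1 | h1
  · exact h1
  · obtain ⟨y, hy, hyv⟩ := (le_patOf hlam hT (by omega) (by omega)).1 h1
    have := hT.row (Nat.lt_succ_self c) hv hy
    omega

lemma patOf_isPat (hlam : IsPartition n lam) (hT : IsSSVT n (ShapeBox lam) T) :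
    IsPat n (shift lam) (patOf n (lam 1) T) := by
  have key := fun {v r c : ℕ} => le_patOf (v := v) (r := r) (c := c) hlam hT
  have ext1 : ∀ a b : ℕ, (∀ c, 1 ≤ c → (c ≤ a → c ≤ b)) → a ≤ b := by
    intro a b h
    rcases Nat.eq_zero_or_pos a with rfl | ha
    · exact Nat.zero_le _
    · exact h a ha le_rfl
  refine ⟨fun r => ?_, fun r => ?_, fun v hv r => ?_, fun v hv r => ?_, fun v r => ?_,
    fun v hv r => ?_, fun v hv r => ?_⟩
  · refine Nat.le_zero.1 (ext1 _ _ fun c hc h => ?_)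
    obtain ⟨x, hx, hx0⟩ := (key (Nat.zero_le n) hc).1 h
    have := hT.box hx
    omega
  · refine le_antisymm (ext1 _ _ fun c hc h => ?_) (ext1 _ _ fun c hc h => ?_)
    · obtain ⟨x, hx, _⟩ := (key le_rfl hc).1 h
      exact (hT.box hx).1.2.2
    · obtain ⟨x, hx⟩ := hT.1 (r + 1) c ⟨by omega, hc, h⟩
      exact (key le_rfl hc).2 ⟨x, hx, (hT.box hx).2.2⟩
  · simp [patOf, not_le.2 hv]
  · simp only [patOf]
    rw [if_neg]
    rintro ⟨c, hc, _⟩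
    have := hT.box hc
    omega
  · simp only [patOf]
    split_ifs <;> omega
  · refine ext1 _ _ fun c hc h => ?_
    obtain ⟨x, hx, hxv⟩ := (key hv.le hc).1 h
    exact (key hv hc).2 ⟨x, hx, by omega⟩
  · have hle : (patOf n (lam 1) T).1 (v + 1) (r + 1) ≤ (patOf n (lam 1) T).1 v r := by
      refine ext1 _ _ fun c hc h => ?_
      obtain ⟨x, hx, hxv⟩ := (key hv hc).1 h
      have hb := (hT.box hx).1
      have hb' : ShapeBox lam (r + 1) c :=
        ⟨by omega, hc, hb.2.2.trans (hlam.2.1 (r + 1) (by omega))⟩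
      obtain ⟨y, hy⟩ := hT.1 _ _ hb'
      have := hT.2.2.2.2 _ _ hb' hb y hy x hx
      exact (key hv.le hc).2 ⟨y, hy, by omega⟩
    by_cases hm : ∃ c, v + 1 ∈ T (r + 1) c ∧ ∃ x ∈ T (r + 1) c, x ≤ v
    · obtain ⟨c, hc, x, hx, hxv⟩ := hm
      have h1 := mark_col hlam hT hc hx hxv
      have h2 : (patOf n (lam 1) T).2 v r = 1 := by
        simp only [patOf]
        rw [if_pos ⟨c, hc, x, hx, hxv⟩]
      have hb := hT.box hc
      have h3 : ¬ c ≤ (patOf n (lam 1) T).1 (v + 1) (r + 1) := by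
        intro h
        obtain ⟨y, hy, hyv⟩ := (key hv hb.1.2.1).1 h
        have := hT.2.2.2.2 _ _ hb.1 (hT.box hy).1 _ hc y hy
        omega
      omega
    · have h2 : (patOf n (lam 1) T).2 v r = 0 := by
        simp only [patOf]
        rw [if_neg hm]
      omega

lemma toT_patOf (hlam : IsPartition n lam) (hT : IsSSVT n (ShapeBox lam) T) :
    toT n (patOf n (lam 1) T) = T := by
  have key := fun {v r c : ℕ} => le_patOf (v := v) (r := r) (c := c) hlam hT
  have hP := patOf_isPat hlam hT
  funext i c
  ext a
  constructor
  · intro ha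
    obtain ⟨r, w, rfl, rfl⟩ := toT_pos ha
    have hc := (toT_bounds hP ha).2.1
    obtain ⟨hw, ⟨h1, h2⟩ | ⟨h1, h2⟩⟩ := mem_toT.1 ha
    · obtain ⟨x, hx, hxv⟩ := (key hw hc).1 h2
      have : ¬ x ≤ w := fun h => by
        have := (key hw.le hc).2 ⟨x, hx, h⟩
        omega
      obtain rfl : x = w + 1 := by omega
      exact hx
    · simp only [patOf] at h1
      split_ifs at h1 with hm
      obtain ⟨d, hd, x, hx, hxw⟩ := hm
      rw [h2, ← mark_col hlam hT hd hx hxw]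
      exact hd
  · intro ha
    obtain ⟨hb, ha1, han⟩ := hT.box ha
    obtain ⟨r, rfl⟩ := Nat.exists_eq_add_of_le' hb.1
    obtain ⟨w, rfl⟩ := Nat.exists_eq_add_of_le' ha1
    refine mem_toT.2 ⟨han, ?_⟩
    by_cases hx : ∃ x ∈ T (r + 1) c, x ≤ w
    · obtain ⟨x, hx, hxw⟩ := hx
      refine Or.inr ⟨?_, mark_col hlam hT ha hx hxw⟩
      simp only [patOf]
      rw [if_pos ⟨c, ha, x, hx, hxw⟩]
    · refine Or.inl ⟨?_, (key han hb.2.1).2 ⟨w + 1, ha, le_rfl⟩⟩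
      by_contra h
      exact hx ((key (by omega) hb.2.1).1 (not_lt.1 h))

end

lemma patOf_toT {n : ℕ} {lam : ℕ → ℕ} (hlam : IsPartition n lam) {D : Pat}
    (h : IsPat n (shift lam) D) : patOf n (lam 1) (toT n D) = D := by
  have hT := toT_isSSVT h
  have hmem : ∀ v r c, v ≤ n → 1 ≤ c → ((∃ x ∈ toT n D (r + 1) c, x ≤ v) ↔ c ≤ D.1 v r) := by
    intro v r c hv hc
    constructor
    · rintro ⟨x, hx, hxv⟩
      obtain ⟨r', w, h0, rfl⟩ := toT_pos hx
      have h1 := toT_bounds h hx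
      have := h.mono' hxv hv r
      omega
    · exact exists_mem_toT h hv hc
  refine Prod.ext ?_ ?_
  · funext v r
    by_cases hv : v ≤ n
    · have : ∀ c, 1 ≤ c → (c ≤ (patOf n (lam 1) (toT n D)).1 v r ↔ c ≤ D.1 v r) :=
        fun c hc => (le_patOf hlam hT hv hc).trans (hmem v r c hv hc)
      have h1 := this ((patOf n (lam 1) (toT n D)).1 v r)
      have h2 := this (D.1 v r)
      omega
    · rw [h.out v (not_le.1 hv)]
      simp [patOf, hv]
  · funext w r
    simp only [patOf]
    have hle := h.mle w r
    split_ifs with hm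
    · obtain ⟨c, hc, x, hx, hxw⟩ := hm
      have h1 := toT_bounds h hc
      have h2 := (hmem w r c (by omega) h1.2.1).1 ⟨x, hx, hxw⟩
      exact (h1.2.2.2.2 (by omega)).symm
    · by_contra hne
      have h1 : D.2 w r = 1 := by omega
      have hw : w < n := by
        by_contra hw
        rw [h.mout w (not_lt.1 hw)] at h1
        omega
      have h2 := h.inter w hw r
      exact hm ⟨D.1 w r, mem_toT.2 ⟨hw, Or.inr ⟨h1, rfl⟩⟩,
        (hmem w r _ hw.le (by omega)).2 le_rfl⟩

/-! ### Weights and the two forms of the Grothendieck polynomial -/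

lemma rowOcc_toT {n : ℕ} {lam : ℕ → ℕ} (hlam : IsPartition n lam) {D : Pat}
    (h : IsPat n (shift lam) D) {w : ℕ} (hw : w < n) (r : ℕ) :
    rowOcc (lam 1) (toT n D) (r + 1) (w + 1) = cnt D w r := by
  have h1 := h.mono w hw r
  have h2 := h.inter w hw r
  have h3 := h.mle w r
  have h4 : D.1 (w + 1) r ≤ lam 1 := (h.le_top _ _).trans (hlam.le_one (by omega))
  rw [rowOcc, ← Finset.card_filter]
  have hset : (Finset.Icc 1 (lam 1)).filter (fun c => w + 1 ∈ toT n D (r + 1) c)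
      = Finset.Ioc (D.1 w r - D.2 w r) (D.1 (w + 1) r) := by
    ext c
    simp only [Finset.mem_filter, Finset.mem_Icc, mem_toT, Finset.mem_Ioc]
    omega
  rw [hset, Nat.card_Ioc, cnt]
  omega

lemma wtT_toT {n : ℕ} {lam : ℕ → ℕ} (hlam : IsPartition n lam) {D : Pat}
    (h : IsPat n (shift lam) D) {w : ℕ} (hw : w < n) :
    wtT n (lam 1) (toT n D) (w + 1) = wtP n D w := by
  rw [wtT, wtP, Finset.sum_range_succ, cnt, h.eq_zero hlam.shift _ le_rfl,
    h.mark_zero hlam.shift _ le_rfl, ← Finset.Ico_add_one_right_eq_Icc,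
    Finset.sum_Ico_eq_sum_range]
  simp only [Nat.zero_sub, add_zero, Nat.add_sub_cancel]
  refine Finset.sum_congr rfl fun r _ => ?_
  rw [add_comm 1 r, rowOcc_toT hlam h hw]

lemma sum_shift_eq {n : ℕ} {lam : ℕ → ℕ} (hlam : IsPartition n lam) :
    ∑ j ∈ Finset.range (n + 1), shift lam j = sumParts n lam := by
  rw [Finset.sum_range_succ, hlam.shift.2 n le_rfl, add_zero, sumParts,
    ← Finset.Ico_add_one_right_eq_Icc, Finset.sum_Ico_eq_sum_range]
  simp only [Nat.add_sub_cancel, add_comm 1]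
  rfl

lemma prod_Icc_fin {M : Type*} [CommMonoid M] (n : ℕ) (f : ℕ → M) :
    ∏ k ∈ Finset.Icc 1 n, f k = ∏ v : Fin n, f (v + 1) := by
  rw [Fin.prod_univ_eq_prod_range (fun v => f (v + 1)), ← Finset.Ico_add_one_right_eq_Icc,
    Finset.prod_Ico_eq_prod_range]
  simp only [Nat.add_sub_cancel, add_comm 1]

lemma sum_Icc_range {M : Type*} [AddCommMonoid M] (n : ℕ) (f : ℕ → M) :
    ∑ k ∈ Finset.Icc 1 n, f k = ∑ v ∈ Finset.range n, f (v + 1) := by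
  rw [← Finset.Ico_add_one_right_eq_Icc, Finset.sum_Ico_eq_sum_range]
  simp only [Nat.add_sub_cancel, add_comm 1]

lemma sizeT_toT {n : ℕ} {lam : ℕ → ℕ} (hlam : IsPartition n lam) {D : Pat}
    (h : IsPat n (shift lam) D) :
    sizeT n (lam 1) (toT n D) = sumParts n lam + nmarks n D := by
  rw [← sum_shift_eq hlam, ← sum_wtP h, sizeT]
  have h1 : ∀ r c, (toT n D r c).card = ∑ v ∈ Finset.Icc 1 n, if v ∈ toT n D r c then 1 else 0 := by
    intro r c
    rw [← Finset.card_filter]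
    congr 1
    ext v
    simp only [Finset.mem_filter]
    exact ⟨fun hv => ⟨toT_subset hv, hv⟩, fun hv => hv.2⟩
  simp only [h1]
  have h2 : ∀ r ∈ Finset.Icc 1 n, ∑ c ∈ Finset.Icc 1 (lam 1), ∑ v ∈ Finset.Icc 1 n,
      (if v ∈ toT n D r c then 1 else 0) = ∑ v ∈ Finset.Icc 1 n, rowOcc (lam 1) (toT n D) r v :=
    fun r _ => Finset.sum_comm
  rw [Finset.sum_congr rfl h2, Finset.sum_comm, sum_Icc_range]
  refine Finset.sum_congr rfl fun w hw => ?_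
  exact wtT_toT hlam h (Finset.mem_range.1 hw)

lemma toT_bijOn {n : ℕ} {lam : ℕ → ℕ} (hlam : IsPartition n lam) :
    Set.BijOn (toT n) {D | IsPat n (shift lam) D} {T | IsSSVT n (ShapeBox lam) T} := by
  refine Set.InvOn.bijOn (f' := patOf n (lam 1)) ⟨?_, ?_⟩ ?_ ?_
  · intro D hD; exact patOf_toT hlam hD
  · intro T hT; exact toT_patOf hlam hT
  · intro D hD; exact toT_isSSVT hD
  · intro T hT; exact patOf_isPat hlam hT

lemma groth_eq {n : ℕ} {lam : ℕ → ℕ} (hlam : IsPartition n lam) :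
    Groth n lam = MvPolynomial.rename (fun v : Fin n => (v : ℕ) + 1) (grothP n (shift lam)) := by
  rw [Groth, ← finsum_mem_eq_of_bijOn (f := fun D => MvPolynomial.rename
    (fun v : Fin n => (v : ℕ) + 1) (patTerm n D)) (toT n) (toT_bijOn hlam)]
  · rw [grothP, map_sum, ← finsum_mem_coe_finset]
    congr 1
    funext D
    have : D ∈ {D | IsPat n (shift lam) D} ↔ D ∈ (pats n (shift lam) : Set Pat) := by
      simp [mem_pats hlam.shift]
    simp only [this]
  · intro D hD
    rw [sizeT_toT hlam hD, Nat.add_sub_cancel_left, patTerm, map_mul, map_prod, prod_Icc_fin]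
    congr 1
    · simp
    · refine Finset.prod_congr rfl fun v _ => ?_
      rw [wtT_toT hlam hD v.isLt]
      simp

/-! ### Rotating set-valued tableaux into contratableaux -/

/-- Rotation by 180 degrees combined with the reversal `v ↦ n + 1 - v` of the alphabet. Rows of
contratableaux are indexed from the bottom, so only the columns `1, …, W` are reversed. -/
def flipT (n W : ℕ) (T : ℕ → ℕ → Finset ℕ) (j c : ℕ) : Finset ℕ :=
  (Finset.Icc 1 n).filter fun v => 1 ≤ c ∧ c ≤ W ∧ n + 1 - v ∈ T j (W + 1 - c)

lemma mem_flipT {n W : ℕ} {T : ℕ → ℕ → Finset ℕ} {j c v : ℕ} : v ∈ flipT n W T j c ↔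
    (1 ≤ v ∧ v ≤ n) ∧ 1 ≤ c ∧ c ≤ W ∧ n + 1 - v ∈ T j (W + 1 - c) := by
  simp [flipT]

lemma contraBox_iff {n : ℕ} {lam : ℕ → ℕ} (hlam : IsPartition n lam) {j c : ℕ} :
    ContraBox n lam j c ↔ 1 ≤ c ∧ c ≤ lam 1 ∧ ShapeBox lam j (lam 1 + 1 - c) := by
  unfold ContraBox ShapeBox
  rcases Nat.eq_zero_or_pos j with rfl | hj
  · omega
  · have h1 := hlam.le_one hj
    have h2 : n < j → lam j = 0 := hlam.2.2 j
    omega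

lemma shapeBox_iff {n : ℕ} {lam : ℕ → ℕ} (hlam : IsPartition n lam) {j c : ℕ} :
    ShapeBox lam j c ↔ 1 ≤ c ∧ c ≤ lam 1 ∧ ContraBox n lam j (lam 1 + 1 - c) := by
  rw [contraBox_iff hlam]
  constructor
  · rintro ⟨h1, h2, h3⟩
    have := hlam.le_one h1
    exact ⟨h2, by omega, by omega, by omega, h1, by omega, by omega⟩
  · rintro ⟨h1, h2, h3, h4, h5, h6, h7⟩
    exact ⟨h5, h1, by omega⟩

lemma IsSVCT.box {n : ℕ} {lam : ℕ → ℕ} {S : ℕ → ℕ → Finset ℕ} (hS : IsSVCT n lam S) {i c a : ℕ}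
    (ha : a ∈ S i c) : ContraBox n lam i c ∧ 1 ≤ a ∧ a ≤ n := by
  have hb : ContraBox n lam i c := by
    by_contra hb
    rw [hS.2.2.1 i c hb] at ha
    simp at ha
  exact ⟨hb, Finset.mem_Icc.1 (hS.2.1 i c hb ha)⟩

lemma flipT_isSVCT {n : ℕ} {lam : ℕ → ℕ} (hlam : IsPartition n lam) {T : ℕ → ℕ → Finset ℕ}
    (hT : IsSSVT n (ShapeBox lam) T) : IsSVCT n lam (flipT n (lam 1) T) := by
  refine ⟨?_, ?_, ?_, ?_, ?_⟩
  · intro j c hb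
    obtain ⟨h1, h2, h3⟩ := (contraBox_iff hlam).1 hb
    obtain ⟨a, ha⟩ := hT.1 _ _ h3
    have hab := (hT.box ha).2
    refine ⟨n + 1 - a, mem_flipT.2 ⟨by omega, h1, h2, ?_⟩⟩
    rwa [show n + 1 - (n + 1 - a) = a by omega]
  · intro j c _
    exact Finset.filter_subset _ _
  · intro j c hb
    rw [Finset.eq_empty_iff_forall_notMem]
    intro a ha
    obtain ⟨_, h2, h3, h4⟩ := mem_flipT.1 ha
    exact hb ((contraBox_iff hlam).2 ⟨h2, h3, (hT.box h4).1⟩)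
  · intro j c _ _ a ha b hb
    obtain ⟨h1, h2, h3, h4⟩ := mem_flipT.1 ha
    obtain ⟨h1', h2', h3', h4'⟩ := mem_flipT.1 hb
    have := hT.row (show lam 1 + 1 - (c + 1) < lam 1 + 1 - c by omega) h4' h4
    omega
  · intro j c _ _ a ha b hb
    obtain ⟨h1, h2, h3, h4⟩ := mem_flipT.1 ha
    obtain ⟨h1', h2', h3', h4'⟩ := mem_flipT.1 hb
    have := hT.2.2.2.2 _ _ (hT.box h4').1 (hT.box h4).1 _ h4' _ h4
    omega

lemma flipT_isSSVT {n : ℕ} {lam : ℕ → ℕ} (hlam : IsPartition n lam) {S : ℕ → ℕ → Finset ℕ}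
    (hS : IsSVCT n lam S) : IsSSVT n (ShapeBox lam) (flipT n (lam 1) S) := by
  refine ⟨?_, ?_, ?_, ?_, ?_⟩
  · intro j c hb
    obtain ⟨h1, h2, h3⟩ := (shapeBox_iff hlam).1 hb
    obtain ⟨a, ha⟩ := hS.1 _ _ h3
    have hab := (hS.box ha).2
    refine ⟨n + 1 - a, mem_flipT.2 ⟨by omega, h1, h2, ?_⟩⟩
    rwa [show n + 1 - (n + 1 - a) = a by omega]
  · intro j c _
    exact Finset.filter_subset _ _
  · intro j c hb
    rw [Finset.eq_empty_iff_forall_notMem]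
    intro a ha
    obtain ⟨_, h2, h3, h4⟩ := mem_flipT.1 ha
    exact hb ((shapeBox_iff hlam).2 ⟨h2, h3, (hS.box h4).1⟩)
  · intro j c _ _ a ha b hb
    obtain ⟨h1, h2, h3, h4⟩ := mem_flipT.1 ha
    obtain ⟨h1', h2', h3', h4'⟩ := mem_flipT.1 hb
    rw [show lam 1 + 1 - c = lam 1 + 1 - (c + 1) + 1 by omega] at h4
    have := hS.2.2.2.1 _ _ (hS.box h4').1 (hS.box h4).1 _ h4' _ h4
    omega
  · intro j c _ _ a ha b hb
    obtain ⟨h1, h2, h3, h4⟩ := mem_flipT.1 ha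
    obtain ⟨h1', h2', h3', h4'⟩ := mem_flipT.1 hb
    have := hS.2.2.2.2 _ _ (hS.box h4).1 (hS.box h4').1 _ h4' _ h4
    omega

lemma flipT_flipT {n W : ℕ} {T : ℕ → ℕ → Finset ℕ}
    (hT : ∀ j c, ∀ a ∈ T j c, (1 ≤ a ∧ a ≤ n) ∧ 1 ≤ c ∧ c ≤ W) :
    flipT n W (flipT n W T) = T := by
  funext j c
  ext a
  simp only [mem_flipT]
  constructor
  · rintro ⟨h1, h2, h3, h4, h5, h6, h7⟩
    rwa [show n + 1 - (n + 1 - a) = a by omega, show W + 1 - (W + 1 - c) = c by omega] at h7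
  · intro ha
    obtain ⟨h1, h2, h3⟩ := hT j c a ha
    refine ⟨h1, h2, h3, by omega, by omega, by omega, ?_⟩
    rwa [show n + 1 - (n + 1 - a) = a by omega, show W + 1 - (W + 1 - c) = c by omega]

lemma flipT_bijOn {n : ℕ} {lam : ℕ → ℕ} (hlam : IsPartition n lam) :
    Set.BijOn (flipT n (lam 1)) {T | IsSSVT n (ShapeBox lam) T} {S | IsSVCT n lam S} := by
  refine Set.InvOn.bijOn (f' := flipT n (lam 1)) ⟨?_, ?_⟩ ?_ ?_
  · intro T hT
    refine flipT_flipT fun j c a ha => ?_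
    have h1 := IsSSVT.box hT ha
    have h2 := (shapeBox_iff hlam).1 h1.1
    exact ⟨h1.2, h2.1, h2.2.1⟩
  · intro S hS
    refine flipT_flipT fun j c a ha => ?_
    have h1 := IsSVCT.box hS ha
    have h2 := (contraBox_iff hlam).1 h1.1
    exact ⟨h1.2, h2.1, h2.2.1⟩
  · intro T hT; exact flipT_isSVCT hlam hT
  · intro S hS; exact flipT_isSSVT hlam hS

lemma rowOcc_flipT {n W : ℕ} {T : ℕ → ℕ → Finset ℕ} {j v : ℕ} (h1 : 1 ≤ v) (h2 : v ≤ n) :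
    rowOcc W (flipT n W T) j v = rowOcc W T j (n + 1 - v) := by
  unfold rowOcc
  refine Finset.sum_nbij' (fun c => W + 1 - c) (fun c => W + 1 - c) ?_ ?_ ?_ ?_ ?_
  · intro c hc; simp only [Finset.mem_Icc] at hc ⊢; omega
  · intro c hc; simp only [Finset.mem_Icc] at hc ⊢; omega
  · intro c hc; simp only [Finset.mem_Icc] at hc; omega
  · intro c hc; simp only [Finset.mem_Icc] at hc; omega
  · intro c hc
    obtain ⟨h3, h4⟩ := Finset.mem_Icc.1 hc
    simp [mem_flipT, h1, h2, h3, h4]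

lemma rowOcc_flipT_of_lt {n W : ℕ} {T : ℕ → ℕ → Finset ℕ} {j v : ℕ} (h : n < v) :
    rowOcc W (flipT n W T) j v = 0 := by
  unfold rowOcc
  refine Finset.sum_eq_zero fun c _ => if_neg fun hc => ?_
  have := (mem_flipT.1 hc).1
  omega

/-! ### Dominance of row words -/

lemma exists_split {B : List ℕ} (hB : B.Pairwise (· ≥ ·)) (i : ℕ) :
    ∃ B1 B2, B = B1 ++ B2 ∧ (∀ x ∈ B1, i < x) ∧ ∀ x ∈ B2, x ≤ i := by
  induction B with
  | nil => exact ⟨[], [], by simp⟩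
  | cons x B ih =>
    obtain ⟨hx, hB'⟩ := List.pairwise_cons.1 hB
    by_cases h : i < x
    · obtain ⟨B1, B2, rfl, h1, h2⟩ := ih hB'
      exact ⟨x :: B1, B2, rfl, by simpa [h] using h1, h2⟩
    · refine ⟨[], x :: B, rfl, by simp, fun y hy => ?_⟩
      rcases List.mem_cons.1 hy with rfl | hy
      · omega
      · have : y ≤ x := hx y hy
        omega

/-- Appending a weakly decreasing block: all letters `i + 1` of the block are read before the
letters `i`, so for each `i` only one new inequality has to be checked. -/
lemma dominant_append_iff {w B : List ℕ} (hB : B.Pairwise (· ≥ ·)) :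
    Dominant (w ++ B) ↔ Dominant w ∧ ∀ i, 1 ≤ i → (w ++ B).count (i + 1) ≤ w.count i := by
  constructor
  · intro h
    refine ⟨fun t i hi => ?_, fun i hi => ?_⟩
    · have h1 := h (min t w.length) i hi
      rw [List.take_append_of_le_length (min_le_right _ _)] at h1
      rcases le_total t w.length with h2 | h2
      · rwa [min_eq_left h2] at h1
      · rw [min_eq_right h2, List.take_length] at h1
        rwa [List.take_of_length_le h2]
    · obtain ⟨B1, B2, rfl, h1, h2⟩ := exists_split hB i
      have h3 := h (w ++ B1).length i hi
      rw [← List.append_assoc, List.take_left] at h3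
      have h4 : B1.count i = 0 := List.count_eq_zero.2 fun hm => by
        have := h1 i hm
        omega
      have h5 : B2.count (i + 1) = 0 := List.count_eq_zero.2 fun hm => by
        have := h2 _ hm
        omega
      simp only [List.count_append] at h3 ⊢
      omega
  · rintro ⟨hw, h⟩ t i hi
    rcases le_total t w.length with h2 | h2
    · rw [List.take_append_of_le_length h2]
      exact hw t i hi
    · obtain ⟨k, rfl⟩ := Nat.exists_eq_add_of_le h2
      have h1 := h i hi
      rw [List.take_length_add_append]
      have h3 := (List.take_sublist k B).count_le (i + 1)
      simp only [List.count_append] at h1 ⊢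
      omega

/-- Dominance of a word followed by weakly decreasing blocks, read in the order
`f (m - 1), …, f 0`. -/
lemma dominant_blocks_iff (f : ℕ → List ℕ) (hf : ∀ k, (f k).Pairwise (· ≥ ·)) (m : ℕ)
    (w : List ℕ) : Dominant (w ++ ((List.range m).reverse.map f).flatten) ↔
      Dominant w ∧ ∀ j, j < m → ∀ i, 1 ≤ i →
        w.count (i + 1) + ∑ k ∈ Finset.Ico j m, (f k).count (i + 1) ≤
          w.count i + ∑ k ∈ Finset.Ico (j + 1) m, (f k).count i := by
  induction m generalizing w with
  | zero => simp
  | succ m ih =>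
    rw [List.range_succ, List.reverse_append, List.reverse_singleton, List.singleton_append,
      List.map_cons, List.flatten_cons, ← List.append_assoc, ih, dominant_append_iff (hf m),
      and_assoc]
    refine and_congr_right fun _ => ?_
    simp only [List.count_append]
    constructor
    · rintro ⟨h1, h2⟩ j hj i hi
      rcases Nat.lt_succ_iff_lt_or_eq.1 hj with hj' | rfl
      · have := h2 j hj' i hi
        rw [Finset.sum_Ico_succ_top hj'.le,
          Finset.sum_Ico_succ_top (show j + 1 ≤ m from hj')]
        omega
      · have := h1 i hi
        simpa using this
    · intro h
      refine ⟨fun i hi => by simpa using h m (by omega) i hi, fun j hj i hi => ?_⟩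
      have := h j (by omega) i hi
      rw [Finset.sum_Ico_succ_top hj.le,
        Finset.sum_Ico_succ_top (show j + 1 ≤ m from hj)] at this
      omega

lemma superWord_succ (m : ℕ) (mu : ℕ → ℕ) :
    superWord (m + 1) mu = superWord m mu ++ List.replicate (mu (m + 1)) (m + 1) := by
  simp [superWord, List.range_succ]

lemma count_superWord (m : ℕ) (mu : ℕ → ℕ) (i : ℕ) :
    (superWord m mu).count i = if 1 ≤ i ∧ i ≤ m then mu i else 0 := by
  induction m with
  | zero => rw [if_neg (by omega)]; simp [superWord]
  | succ m ih =>
    rw [superWord_succ, List.count_append, ih, List.count_replicate]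
    by_cases h : m + 1 = i
    · subst h
      simp
    · have h1 : (m + 1 == i) = false := by simpa using h
      rw [h1]
      have : (1 ≤ i ∧ i ≤ m + 1) ↔ (1 ≤ i ∧ i ≤ m) := by omega
      simp [this]

lemma superWord_dominant {n : ℕ} {mu : ℕ → ℕ} (hmu : IsPartition n mu) (m : ℕ) :
    Dominant (superWord m mu) := by
  induction m with
  | zero => intro t i hi; simp [superWord]
  | succ m ih =>
    rw [superWord_succ, dominant_append_iff (List.pairwise_replicate.2 (Or.inr le_rfl))]
    refine ⟨ih, fun i hi => ?_⟩
    rw [← superWord_succ, count_superWord, count_superWord]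
    have := hmu.2.1 i hi
    split_ifs <;> omega

lemma cellWord_pairwise (s : Finset ℕ) : (cellWord s).Pairwise (· ≥ ·) := by
  rw [cellWord, List.pairwise_reverse]
  exact Finset.pairwise_sort s (· ≤ ·)

lemma mem_cellWord {s : Finset ℕ} {x : ℕ} : x ∈ cellWord s ↔ x ∈ s := by
  simp [cellWord]

lemma count_cellWord (s : Finset ℕ) (x : ℕ) : (cellWord s).count x = if x ∈ s then 1 else 0 := by
  rw [cellWord, List.count_reverse]
  split_ifs with h
  · exact List.count_eq_one_of_mem (Finset.sort_nodup s (· ≤ ·)) (by simpa using h)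
  · exact List.count_eq_zero.2 (by simpa using h)

/-- The reading word of the row `j + 1` of a tableau. -/
def rowBlock (W : ℕ) (S : ℕ → ℕ → Finset ℕ) (j : ℕ) : List ℕ :=
  (((List.range W).reverse).map (fun c => cellWord (S (j + 1) (c + 1)))).flatten

lemma count_rowBlock (W : ℕ) (S : ℕ → ℕ → Finset ℕ) (j v : ℕ) :
    (rowBlock W S j).count v = rowOcc W S (j + 1) v := by
  unfold rowBlock
  rw [rowOcc, sum_Icc_range]
  induction W with
  | zero => simp
  | succ W ih =>
    rw [List.range_succ, List.reverse_append, List.reverse_singleton, List.singleton_append,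
      List.map_cons, List.flatten_cons, List.count_append, ih, Finset.sum_range_succ,
      count_cellWord, add_comm]

lemma IsSVCT.row {n : ℕ} {lam : ℕ → ℕ} {S : ℕ → ℕ → Finset ℕ}
    (hS : IsSVCT n lam S) {i c c' a b : ℕ} (hcc : c < c')
    (ha : a ∈ S i c) (hb : b ∈ S i c') : a ≤ b := by
  induction c', hcc using Nat.le_induction generalizing b with
  | base => exact hS.2.2.2.1 i c (hS.box ha).1 (hS.box hb).1 a ha b hb
  | succ d hd ih =>
    have h0 := (hS.box ha).1
    have h1 := (hS.box hb).1
    have h2 : ContraBox n lam i d := by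
      unfold ContraBox at *
      omega
    obtain ⟨x, hx⟩ := hS.1 i d h2
    exact (ih hx).trans (hS.2.2.2.1 i d h2 h1 x hx b hb)

lemma rowBlock_pairwise {n : ℕ} {lam : ℕ → ℕ}
    {S : ℕ → ℕ → Finset ℕ} (hS : IsSVCT n lam S) (W j : ℕ) :
    (rowBlock W S j).Pairwise (· ≥ ·) := by
  rw [rowBlock, List.pairwise_flatten]
  refine ⟨?_, ?_⟩
  · intro l hl
    obtain ⟨c, _, rfl⟩ := List.mem_map.1 hl
    exact cellWord_pairwise _
  · rw [List.pairwise_map, List.pairwise_reverse]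
    refine List.pairwise_lt_range.imp fun {c c'} hc x hx y hy => ?_
    exact hS.row (Nat.succ_lt_succ hc) (mem_cellWord.1 hy) (mem_cellWord.1 hx)

lemma lamDominant_iff {n : ℕ} {lam mu : ℕ → ℕ}
    (hmu : IsPartition n mu) {S : ℕ → ℕ → Finset ℕ} (hS : IsSVCT n lam S) (W : ℕ) :
    LamDominant n mu (contraRowWord n W S) ↔ ∀ j, j < n → ∀ i, 1 ≤ i →
      mu (i + 1) + ∑ k ∈ Finset.Ico j n, rowOcc W S (k + 1) (i + 1) ≤
        mu i + ∑ k ∈ Finset.Ico (j + 1) n, rowOcc W S (k + 1) i := by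
  have h := dominant_blocks_iff (rowBlock W S) (rowBlock_pairwise hS W) n (superWord n mu)
  have hc : ∀ i, 1 ≤ i → (superWord n mu).count i = mu i := by
    intro i hi
    rw [count_superWord]
    split_ifs with h
    · rfl
    · exact (hmu.2.2 i (by omega)).symm
  refine h.trans ((and_iff_right (superWord_dominant hmu n)).trans ?_)
  simp only [count_rowBlock]
  refine forall_congr' fun j => forall_congr' fun _ => forall_congr' fun i =>
    forall_congr' fun hi => ?_
  rw [hc i hi, hc (i + 1) (by omega)]

lemma tail_eq {n : ℕ} {la : ℕ → ℕ} {D : Pat} (hla : IsPart n la) (h : IsPat n la D) (v : ℕ)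
    {r : ℕ} (hr : r ≤ n) : tail n D v r = ∑ k ∈ Finset.Ico r n, cnt D v k := by
  rw [tail, Finset.sum_Ico_succ_top hr, cnt, h.eq_zero hla _ le_rfl, h.mark_zero hla _ le_rfl]
  simp

/-- The rotated tableau of a marked pattern is `mu`-dominant exactly when the pattern is
dominant with respect to the reversal of `mu`. -/
lemma lamDominant_flipT_iff {n : ℕ} {lam mu : ℕ → ℕ} (hlam : IsPartition n lam)
    (hmu : IsPartition n mu) {D : Pat} (hD : IsPat n (shift lam) D) :
    LamDominant n mu (contraRowWord n (lam 1) (flipT n (lam 1) (toT n D))) ↔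
      Dom n (fun v => shift mu (n - 1 - v)) D := by
  have hS := flipT_isSVCT hlam (toT_isSSVT hD)
  have hocc : ∀ k i, i < n →
      rowOcc (lam 1) (flipT n (lam 1) (toT n D)) (k + 1) (n - i) = cnt D i k := by
    intro k i hi
    rw [rowOcc_flipT (by omega) (by omega), show n + 1 - (n - i) = i + 1 by omega,
      rowOcc_toT hlam hD hi]
  rw [lamDominant_iff hmu hS]
  constructor
  · intro h i hi r hv
    have hr : r < n := by
      refine Viol.lt hlam.shift ?_ hD hi hv
      intro v hv
      simp only [shift]
      rw [show n - 1 - v + 1 = n - 1 - (v + 1) + 1 + 1 by omega]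
      exact hmu.2.1 _ (by omega)
    have h1 := h r hr (n - (i + 1)) (by omega)
    rw [show n - (i + 1) + 1 = n - i by omega] at h1
    simp only [hocc _ i (by omega), hocc _ (i + 1) hi] at h1
    rw [← tail_eq hlam.shift hD _ hr.le, ← tail_eq hlam.shift hD _ (show r + 1 ≤ n from hr)] at h1
    simp only [Viol, shift] at hv
    rw [show n - 1 - i + 1 = n - i by omega, show n - 1 - (i + 1) + 1 = n - (i + 1) by omega] at hv
    omega
  · intro h j hj i hi
    by_cases hin : i < n
    · have h1 := h (n - (i + 1)) (by omega) j
      obtain ⟨k, hk⟩ : ∃ k, k = n - (i + 1) := ⟨_, rfl⟩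
      have hi1 : i + 1 = n - k := by omega
      have hi2 : i = n - (k + 1) := by omega
      rw [← hk] at h1
      rw [hi1, hi2]
      simp only [hocc _ k (by omega), hocc _ (k + 1) (by omega)]
      rw [← tail_eq hlam.shift hD _ hj.le, ← tail_eq hlam.shift hD _ (show j + 1 ≤ n from hj)]
      simp only [Viol, shift] at h1
      rw [show n - 1 - k + 1 = n - k by omega,
        show n - 1 - (k + 1) + 1 = n - (k + 1) by omega] at h1
      omega
    · rw [hmu.2.2 (i + 1) (by omega),
        Finset.sum_eq_zero fun k _ => rowOcc_flipT_of_lt (by omega)]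
      omega

/-! ### The product formula -/

/-- The partition `nuOf` attached to a dominant pattern, indexed from `1`. -/
def nuP (n : ℕ) (mu : ℕ → ℕ) (D : Pat) (i : ℕ) : ℕ :=
  if i = 0 then 0 else nuOf n (shift mu) D (i - 1)

lemma shift_nuP (n : ℕ) (mu : ℕ → ℕ) (D : Pat) : shift (nuP n mu D) = nuOf n (shift mu) D := by
  funext r
  simp [shift, nuP]

lemma nuP_isPartition {n : ℕ} {lam mu : ℕ → ℕ} (hlam : IsPartition n lam) {D : Pat}
    (hD : IsPat n (shift lam) D) (hd : Dom n (fun v => shift mu (n - 1 - v)) D) :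
    IsPartition n (nuP n mu D) := by
  have h := nuOf_isPart hlam.shift hD hd
  refine ⟨by simp [nuP], fun i hi => ?_, fun i hi => ?_⟩
  · have := h.1 (i - 1)
    rw [Nat.sub_add_cancel hi] at this
    simpa [nuP, show i ≠ 0 by omega] using this
  · simpa [nuP, show i ≠ 0 by omega] using h.2 (i - 1) (by omega)

lemma nuP_apply {n : ℕ} {mu : ℕ → ℕ} {D : Pat} {w : ℕ} (hw : w < n) :
    nuP n mu D (n - w) = mu (n - w) + wtP n D w := by
  rw [nuP, if_neg (by omega), nuOf, if_pos (by omega), shift,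
    show n - w - 1 + 1 = n - w by omega, show n - 1 - (n - w - 1) = w by omega]

lemma sumParts_eq (n : ℕ) (f : ℕ → ℕ) : sumParts n f = ∑ w ∈ Finset.range n, f (n - w) := by
  rw [sumParts, sum_Icc_range, ← Finset.sum_range_reflect]
  refine Finset.sum_congr rfl fun w hw => ?_
  rw [show n - 1 - w + 1 = n - w by have := Finset.mem_range.1 hw; omega]

lemma sumParts_nuP {n : ℕ} {lam mu : ℕ → ℕ} (hlam : IsPartition n lam) {D : Pat}
    (hD : IsPat n (shift lam) D) :
    sumParts n (nuP n mu D) - (sumParts n lam + sumParts n mu) = nmarks n D := by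
  have h1 : sumParts n (nuP n mu D) = sumParts n mu + ∑ w ∈ Finset.range n, wtP n D w := by
    rw [sumParts_eq, sumParts_eq, ← Finset.sum_add_distrib]
    exact Finset.sum_congr rfl fun w hw => nuP_apply (Finset.mem_range.1 hw)
  rw [h1, sum_wtP hD, sum_shift_eq hlam]
  omega

lemma wtT_flipT_toT {n : ℕ} {lam : ℕ → ℕ} (hlam : IsPartition n lam) {D : Pat}
    (hD : IsPat n (shift lam) D) {w : ℕ} (hw : w < n) :
    wtT n (lam 1) (flipT n (lam 1) (toT n D)) (n - w) = wtP n D w := by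
  rw [← wtT_toT hlam hD hw]
  refine Finset.sum_congr rfl fun r _ => ?_
  rw [rowOcc_flipT (by omega) (by omega), show n + 1 - (n - w) = w + 1 by omega]

lemma weight_iff {n : ℕ} {lam mu nu : ℕ → ℕ} (hlam : IsPartition n lam)
    (hnu : IsPartition n nu) {D : Pat} (hD : IsPat n (shift lam) D)
    (hd : Dom n (fun v => shift mu (n - 1 - v)) D) :
    (∀ i, 1 ≤ i → i ≤ n →
      mu i + wtT n (lam 1) (flipT n (lam 1) (toT n D)) i = nu i) ↔ nuP n mu D = nu := by
  have key : ∀ i, 1 ≤ i → i ≤ n →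
      mu i + wtT n (lam 1) (flipT n (lam 1) (toT n D)) i = nuP n mu D i := by
    intro i h1 h2
    rw [show i = n - (n - i) by omega, wtT_flipT_toT hlam hD (by omega), nuP_apply (by omega)]
  constructor
  · intro h
    have hP := nuP_isPartition hlam hD hd
    funext i
    rcases Nat.eq_zero_or_pos i with rfl | hi
    · rw [hP.1, hnu.1]
    · by_cases hin : i ≤ n
      · rw [← key i hi hin, h i hi hin]
      · rw [hP.2.2 i (by omega), hnu.2.2 i (by omega)]
  · rintro rfl
    exact key

open Classical in
/-- The structure constant counts the dominant marked patterns with image `nu` under `nuP`. -/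
lemma ncard_eq {n : ℕ} {lam mu nu : ℕ → ℕ} (hlam : IsPartition n lam) (hmu : IsPartition n mu)
    (hnu : IsPartition n nu) :
    Set.ncard {S : ℕ → ℕ → Finset ℕ |
        IsSVCT n lam S ∧ LamDominant n mu (contraRowWord n (lam 1) S) ∧
          ∀ i, 1 ≤ i → i ≤ n → mu i + wtT n (lam 1) S i = nu i} =
      (((pats n (shift lam)).filter (fun D => Dom n (fun v => shift mu (n - 1 - v)) D)).filter
        fun D => nuP n mu D = nu).card := by
  have hb := (flipT_bijOn hlam).comp (toT_bijOn hlam)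
  rw [← Set.ncard_coe_finset]
  symm
  refine Set.ncard_congr (fun D _ => flipT n (lam 1) (toT n D)) ?_ ?_ ?_
  · intro D hD
    simp only [Finset.coe_filter, Finset.mem_filter, Set.mem_ofPred_eq, mem_pats hlam.shift] at hD
    obtain ⟨⟨h1, h2⟩, h3⟩ := hD
    exact ⟨hb.mapsTo h1, (lamDominant_flipT_iff hlam hmu h1).2 h2,
      (weight_iff hlam hnu h1 h2).2 h3⟩
  · intro D D' hD hD' he
    simp only [Finset.coe_filter, Finset.mem_filter, Set.mem_ofPred_eq, mem_pats hlam.shift]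
      at hD hD'
    exact hb.injOn hD.1.1 hD'.1.1 he
  · rintro S ⟨h1, h2, h3⟩
    obtain ⟨D, hD, rfl⟩ := hb.surjOn h1
    simp only [Function.comp] at h2 h3
    have hd := (lamDominant_flipT_iff hlam hmu hD).1 h2
    refine ⟨D, ?_, rfl⟩
    simp only [Finset.coe_filter, Finset.mem_filter, Set.mem_ofPred_eq, mem_pats hlam.shift]
    exact ⟨⟨hD, hd⟩, (weight_iff hlam hnu hD hd).1 h3⟩

/-- The product of stable Grothendieck polynomials in `n`
variables expands as
`G_lam · G_mu = Σ_{nu ∈ P[n]} (-1)^{|nu|-|lam|-|mu|} C^nu_{lam,mu} G_nu`,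
where `C^nu_{lam,mu}` is the number of `mu`-dominant set-valued
contratableaux of shape `lam` with entries `≤ n` and weight `nu - mu`. -/
theorem groth_mul_expansion (n : ℕ) (hn : 0 < n) (lam mu : ℕ → ℕ)
    (hlam : IsPartition n lam) (hmu : IsPartition n mu) :
    Groth n lam * Groth n mu =
    ∑ᶠ nu ∈ {nu : ℕ → ℕ | IsPartition n nu},
      (-1 : MvPolynomial ℕ ℤ) ^ (sumParts n nu - (sumParts n lam + sumParts n mu)) *
        (Set.ncard {S : ℕ → ℕ → Finset ℕ |
            IsSVCT n lam S ∧
            LamDominant n mu (contraRowWord n (lam 1) S) ∧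
            ∀ i, 1 ≤ i → i ≤ n → mu i + wtT n (lam 1) S i = nu i} : MvPolynomial ℕ ℤ) *
        Groth n nu := by

  classical
  set A := (pats n (shift lam)).filter (fun D => Dom n (fun v => shift mu (n - 1 - v)) D) with hA
  have hmem : ∀ D ∈ A, IsPat n (shift lam) D ∧ Dom n (fun v => shift mu (n - 1 - v)) D := by
    intro D hD
    rw [hA, Finset.mem_filter, mem_pats hlam.shift] at hD
    exact hD
  have hcard : ∀ nu, IsPartition n nu → Set.ncard {S : ℕ → ℕ → Finset ℕ |
      IsSVCT n lam S ∧ LamDominant n mu (contraRowWord n (lam 1) S) ∧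
        ∀ i, 1 ≤ i → i ≤ n → mu i + wtT n (lam 1) S i = nu i} =
      (A.filter fun D => nuP n mu D = nu).card := by
    intro nu hnu
    rw [ncard_eq hlam hmu hnu, hA]
  have hL : Groth n lam * Groth n mu =
      ∑ D ∈ A, (-1 : MvPolynomial ℕ ℤ) ^ nmarks n D * Groth n (nuP n mu D) := by
    rw [groth_eq hlam, groth_eq hmu, ← map_mul, grothP_mul hlam.shift hmu.shift, map_sum]
    refine Finset.sum_congr (by rw [hA]) fun D hD => ?_
    obtain ⟨h1, h2⟩ := hmem D (by rw [hA]; convert hD)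
    rw [groth_eq (nuP_isPartition hlam h1 h2), shift_nuP]
    simp
  -- Only the partitions `nuP n mu D` with `D` dominant have a nonzero coefficient.
  rw [hL, finsum_mem_eq_sum_of_inter_support_eq (t := A.image (nuP n mu)),
    ← Finset.sum_fiberwise_of_maps_to (g := nuP n mu) (t := A.image (nuP n mu))
      fun D hD => Finset.mem_image_of_mem _ hD]
  · refine Finset.sum_congr rfl fun nu hnu => ?_
    obtain ⟨D₀, hD₀, rfl⟩ := Finset.mem_image.1 hnu
    rw [hcard _ (nuP_isPartition hlam (hmem _ hD₀).1 (hmem _ hD₀).2)]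
    rw [Finset.sum_congr rfl (g := fun _ => (-1 : MvPolynomial ℕ ℤ) ^
      (sumParts n (nuP n mu D₀) - (sumParts n lam + sumParts n mu)) * Groth n (nuP n mu D₀))]
    · rw [Finset.sum_const, nsmul_eq_mul]
      ring
    · intro D hD
      obtain ⟨h1, h2⟩ := Finset.mem_filter.1 hD
      rw [← h2, sumParts_nuP hlam (hmem D h1).1]
  · ext nu
    simp only [Set.mem_inter_iff, Function.mem_support, Set.mem_ofPred_eq, Finset.coe_image]
    refine and_congr_left fun hne => ?_
    constructor
    · intro hnu
      by_contra himg
      apply hne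
      rw [hcard nu hnu, Finset.filter_eq_empty_iff.2]
      · simp
      · intro D hD h
        exact himg ⟨D, hD, h⟩
    · rintro ⟨D, hD, rfl⟩
      exact nuP_isPartition hlam (hmem D hD).1 (hmem D hD).2
end

section
/- For every positive integer n and every λ ∈ P[n], the map Ω : MGT_Z(λ) → SVCT_n(λ), defined by (Y,M) ↦ Y^{(n)} via the recursive insertion procedure, is a bijection between the set of marked Gelfand–Tsetlin patterns with bottom row λ and the set of set-valued contratableaux of shape λ with entries ≤ n. -/
/-! ### Elementary properties of GT patterns -/

lemma lam_le_one {n : ℕ} {lam : ℕ → ℕ} (h : IsPartition n lam) :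
    ∀ j, 1 ≤ j → lam j ≤ lam 1 := by
  intro j hj
  induction j, hj using Nat.le_induction with
  | base => exact le_rfl
  | succ k hk ih => exact (h.2.1 k hk).trans ih

section GT

variable {n : ℕ} {lam : ℕ → ℕ} {y : ℕ → ℕ → ℤ}

lemma GT_nonneg (h : IsGTZ n lam y) (i j : ℕ) : 0 ≤ y i j := by
  by_cases hi : i ≤ n
  · induction hi using Nat.decreasingInduction generalizing j with
    | self =>
      by_cases hj : 1 ≤ j ∧ j ≤ n
      · rw [h.2 j hj.1 hj.2]; positivity
      · exact (h.1.2 n j (by omega)).ge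
    | of_succ k hk ih =>
      by_cases hj : 1 ≤ j ∧ j ≤ k
      · exact (ih (j + 1)).trans (h.1.1 (k + 1) j hj.1 (by omega) (by omega)).2
      · exact (h.1.2 k j (by omega)).ge
  · exact (h.1.2 i j (by omega)).ge

lemma GT_step (h : IsGTZ n lam y) {i j : ℕ} (hi : i < n) : y i j ≤ y (i + 1) j := by
  by_cases hj : 1 ≤ j ∧ j ≤ i
  · exact (h.1.1 (i + 1) j hj.1 (by omega) (by omega)).1
  · rw [h.1.2 i j (by omega)]; exact GT_nonneg h _ _

lemma GT_mono (h : IsGTZ n lam y) {i k j : ℕ} (hik : i ≤ k) (hk : k ≤ n) : y i j ≤ y k j := by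
  induction k, hik using Nat.le_induction with
  | base => exact le_rfl
  | succ m hm ih => exact (ih (by omega)).trans (GT_step h (by omega))

lemma GT_SE (h : IsGTZ n lam y) {i j : ℕ} (hi : i < n) (hj : 1 ≤ j) :
    y (i + 1) (j + 1) ≤ y i j := by
  by_cases hji : j ≤ i
  · exact (h.1.1 (i + 1) j hj (by omega) (by omega)).2
  · rw [h.1.2 (i + 1) (j + 1) (by omega)]; exact GT_nonneg h _ _

lemma GT_le_lam (hlam : IsPartition n lam) (h : IsGTZ n lam y) (i j : ℕ) :
    y i j ≤ lam 1 := by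
  by_cases hij : 1 ≤ j ∧ j ≤ i ∧ i ≤ n
  · have h1 := GT_mono (j := j) h hij.2.2 le_rfl
    rw [h.2 j hij.1 (by omega)] at h1
    have := lam_le_one hlam j hij.1
    omega
  · rw [h.1.2 i j hij]; positivity

/-- A position `d` with `0 < d ≤ y i j` is added to row `j` at some level `k + 1 ≤ i`. -/
lemma GT_exists_level (h : IsGTZ n lam y) {j : ℕ} {d : ℤ} (hd : 0 < d) :
    ∀ i, d ≤ y i j → ∃ k, k < i ∧ y k j < d ∧ d ≤ y (k + 1) j := by
  intro i
  induction i with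
  | zero =>
    intro hi
    rw [h.1.2 0 j (by omega)] at hi
    omega
  | succ m ih =>
    intro hi
    by_cases hm : d ≤ y m j
    · obtain ⟨k, hk, h1⟩ := ih hm
      exact ⟨k, by omega, h1⟩
    · exact ⟨m, by omega, by omega, hi⟩

end GT

/-! ### The map Ω -/

section Omega

variable {n : ℕ} {lam : ℕ → ℕ} {y : ℕ → ℕ → ℤ} {M : Finset (ℕ × ℕ)}

/-- Membership in `Ω(y, M)` in terms of the level `i + 1` of the entry `n - i`. -/
lemma mem_omega {i j c : ℕ} (hi : i < n) :
    n - i ∈ Omega n lam y M j c ↔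
      (y i j < (lam 1 : ℤ) + 1 - c ∧ (lam 1 : ℤ) + 1 - c ≤ y (i + 1) j) ∨
        ((i + 1, j) ∈ M ∧ (lam 1 : ℤ) + 1 - c = y i j) := by
  have h1 : n - (n - i) = i := by omega
  have h2 : n + 1 - (n - i) = i + 1 := by omega
  simp only [Omega, Finset.mem_filter, Finset.mem_Icc, h1, h2]
  exact ⟨fun h => h.2, fun h => ⟨by omega, h⟩⟩

lemma exists_level_of_mem {v j c : ℕ} (hv : v ∈ Omega n lam y M j c) :
    ∃ i, i < n ∧ v = n - i := by
  simp only [Omega, Finset.mem_filter, Finset.mem_Icc] at hv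
  exact ⟨n - v, by omega, by omega⟩

lemma mark_valid (h : IsMGTZ n lam y M) {i j : ℕ} (hM : (i + 1, j) ∈ M) :
    1 ≤ j ∧ j ≤ i ∧ i < n ∧ y (i + 1) (j + 1) < y i j := by
  have := h.2 _ hM
  simp only [Nat.add_sub_cancel] at this
  omega

/-- An entry of level `i + 1` at position `d` forces `y i j ≤ d ≤ y (i + 1) j` and `0 < d`. -/
lemma mem_omega_bounds (h : IsMGTZ n lam y M) {i j c : ℕ} (hi : i < n)
    (hv : n - i ∈ Omega n lam y M j c) :
    0 < (lam 1 : ℤ) + 1 - c ∧ y i j ≤ (lam 1 : ℤ) + 1 - c ∧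
      (lam 1 : ℤ) + 1 - c ≤ y (i + 1) j := by
  have h0 := GT_nonneg h.1 i j
  have h1 := GT_step (j := j) h.1 hi
  rcases (mem_omega hi).1 hv with hv | ⟨hM, hd⟩
  · omega
  · have := mark_valid h hM
    have := GT_nonneg h.1 (i + 1) (j + 1)
    omega

lemma omega_exists_iff (h : IsMGTZ n lam y M) {i j c : ℕ} (hi : i ≤ n)
    (hc : c ≤ lam 1) :
    (∃ v ∈ Omega n lam y M j c, n + 1 - i ≤ v) ↔ (lam 1 : ℤ) + 1 - c ≤ y i j := by
  constructor
  · rintro ⟨v, hv, hiv⟩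
    obtain ⟨k, hk, rfl⟩ := exists_level_of_mem hv
    have h1 := mem_omega_bounds h hk hv
    have h2 := GT_mono (j := j) h.1 (show k + 1 ≤ i by omega) hi
    omega
  · intro hd
    obtain ⟨k, hk, hkd⟩ := GT_exists_level h.1 (by omega) i hd
    exact ⟨n - k, (mem_omega (by omega)).2 (Or.inl hkd), by omega⟩

lemma mark_iff (hlam : IsPartition n lam) (h : IsMGTZ n lam y M) {i j : ℕ} :
    (i + 1, j) ∈ M ↔
      i < n ∧ 1 ≤ y i j ∧ n - i ∈ Omega n lam y M j ((lam 1 : ℤ) + 1 - y i j).toNat := by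
  have hle := GT_le_lam hlam h.1 i j
  constructor
  · intro hM
    have := mark_valid h hM
    have := GT_nonneg h.1 (i + 1) (j + 1)
    exact ⟨by omega, by omega, (mem_omega (by omega)).2 (Or.inr ⟨hM, by omega⟩)⟩
  · rintro ⟨hi, h1, hv⟩
    rcases (mem_omega hi).1 hv with hv | hv
    · omega
    · exact hv.1

lemma omega_isSVCT (hlam : IsPartition n lam) (h : IsMGTZ n lam y M) :
    IsSVCT n lam (Omega n lam y M) := by
  refine ⟨?_, ?_, ?_, ?_, ?_⟩
  · rintro j c ⟨hj, hjn, hc, hc'⟩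
    have hy := h.1.2 j hj hjn
    have := lam_le_one hlam j hj
    obtain ⟨v, hv, -⟩ := (omega_exists_iff h (j := j) le_rfl hc').2 (by omega)
    exact ⟨v, hv⟩
  · intro j c _
    exact Finset.filter_subset _ _
  · intro j c hb
    rw [Finset.eq_empty_iff_forall_notMem]
    intro v hv
    obtain ⟨i, hi, rfl⟩ := exists_level_of_mem hv
    obtain ⟨h1, -, h2⟩ := mem_omega_bounds h hi hv
    have h3 := GT_mono (j := j) h.1 (show i + 1 ≤ n by omega) le_rfl
    by_cases hj : 1 ≤ j ∧ j ≤ n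
    · rw [h.1.2 j hj.1 hj.2] at h3
      have := lam_le_one hlam j hj.1
      exact hb ⟨hj.1, hj.2, by omega, by omega⟩
    · rw [h.1.1.2 n j (by omega)] at h3
      omega
  · intro j c _ _ a ha b hb
    obtain ⟨i, hi, rfl⟩ := exists_level_of_mem ha
    obtain ⟨k, hk, rfl⟩ := exists_level_of_mem hb
    by_contra hlt
    have h1 := mem_omega_bounds h hi ha
    have h2 := mem_omega_bounds h hk hb
    have h3 := GT_mono (j := j) h.1 (show i + 1 ≤ k by omega) (by omega)
    push_cast at h2
    omega
  · rintro j c ⟨hj, -⟩ _ a ha b hb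
    obtain ⟨i, hi, rfl⟩ := exists_level_of_mem ha
    obtain ⟨k, hk, rfl⟩ := exists_level_of_mem hb
    by_contra hlt
    have h1 := mem_omega_bounds h hi ha
    have h2 := GT_SE h.1 hi hj
    have h3 := GT_mono (j := j) h.1 (show i ≤ k by omega) hk.le
    have h4 := GT_mono (j := j + 1) h.1 (show i + 1 ≤ k + 1 by omega) hk
    rcases (mem_omega hk).1 hb with hb | ⟨hM, hd⟩
    · omega
    · have := mark_valid h hM
      omega

lemma omega_inj_pattern {y' : ℕ → ℕ → ℤ} {M' : Finset (ℕ × ℕ)} (hlam : IsPartition n lam)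
    (h : IsMGTZ n lam y M) (h' : IsMGTZ n lam y' M')
    (he : Omega n lam y M = Omega n lam y' M') (i j : ℕ) : y i j ≤ y' i j := by
  by_cases hi : i ≤ n
  · have h0 := GT_nonneg h.1 i j
    have h0' := GT_nonneg h'.1 i j
    have h1 := GT_le_lam hlam h.1 i j
    by_contra hlt
    -- compare the two patterns at position `d = y i j`
    have hc : ((lam 1 : ℤ) + 1 - y i j).toNat ≤ lam 1 := by omega
    have h2 := (omega_exists_iff h (j := j) hi hc).2 (by omega)
    rw [he] at h2
    have h3 := (omega_exists_iff h' (j := j) hi hc).1 h2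
    omega
  · rw [h.1.1.2 i j (by omega), h'.1.1.2 i j (by omega)]

lemma omega_inj {y' : ℕ → ℕ → ℤ} {M' : Finset (ℕ × ℕ)} (hlam : IsPartition n lam)
    (h : IsMGTZ n lam y M) (h' : IsMGTZ n lam y' M')
    (he : Omega n lam y M = Omega n lam y' M') : y = y' ∧ M = M' := by
  have hy : y = y' := by
    funext i j
    exact le_antisymm (omega_inj_pattern hlam h h' he i j)
      (omega_inj_pattern hlam h' h he.symm i j)
  subst hy
  refine ⟨rfl, ?_⟩
  ext ⟨i, j⟩
  cases i with
  | zero =>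
    constructor
    · intro hM
      have := h.2 _ hM
      simp at this
    · intro hM
      have := h'.2 _ hM
      simp at this
  | succ i => rw [mark_iff hlam h, mark_iff hlam h', he]

end Omega

/-! ### The inverse construction -/

/-- An upward closed predicate on `{1, …, W}` holds exactly on the last `m` elements,
for some `m ≤ W`. -/
lemma exists_threshold (W : ℕ) (P : ℕ → Prop)
    (hP : ∀ c, 1 ≤ c → c < W → P c → P (c + 1)) :
    ∃ m, m ≤ W ∧ ∀ c, 1 ≤ c → c ≤ W → (P c ↔ W + 1 ≤ c + m) := by
  classical
  have hex : ∃ c, 1 ≤ c ∧ (W < c ∨ P c) := ⟨W + 1, by omega, Or.inl (by omega)⟩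
  have hs := Nat.find_spec hex
  have hmin : ∀ c, 1 ≤ c → c ≤ W → P c → Nat.find hex ≤ c :=
    fun c h1 _ h3 => Nat.find_min' hex ⟨h1, Or.inr h3⟩
  generalize Nat.find hex = a at hs hmin
  refine ⟨W + 1 - a, by omega, fun c h1 h2 => ⟨fun h => ?_, fun h => ?_⟩⟩
  · have := hmin c h1 h2 h
    omega
  · have hac : a ≤ c := by omega
    have hPa : P a := by
      rcases hs.2 with h | h
      · omega
      · exact h
    clear h h1
    induction c, hac using Nat.le_induction with
    | base => exact hPa
    | succ k hk ih => exact hP k (by omega) (by omega) (ih (by omega))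

section Inverse

variable {n : ℕ} {lam : ℕ → ℕ} {T : ℕ → ℕ → Finset ℕ}

lemma SVCT_box (h : IsSVCT n lam T) {j c v : ℕ} (hv : v ∈ T j c) : ContraBox n lam j c := by
  by_contra hb
  rw [h.2.2.1 j c hb] at hv
  simp at hv

lemma SVCT_entry (h : IsSVCT n lam T) {j c v : ℕ} (hv : v ∈ T j c) : 1 ≤ v ∧ v ≤ n :=
  Finset.mem_Icc.1 (h.2.1 j c (SVCT_box h hv) hv)

/-- The box below an occupied box contains an entry, and all its entries are larger. -/
lemma SVCT_below (hlam : IsPartition n lam) (h : IsSVCT n lam T) {j c v : ℕ} (hj : 1 ≤ j)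
    (hv : v ∈ T (j + 1) c) : (T j c).Nonempty ∧ ∀ b ∈ T j c, v < b := by
  have hb := SVCT_box h hv
  have hb' : ContraBox n lam j c := by
    obtain ⟨h1, h2, h3, h4⟩ := hb
    have := hlam.2.1 j hj
    exact ⟨hj, by omega, by omega, h4⟩
  exact ⟨h.1 j c hb', h.2.2.2.2 j c hb' hb v hv⟩

/-- Entries of row `j` from the bottom have level at least `j`. -/
lemma SVCT_entry_bound (hlam : IsPartition n lam) (h : IsSVCT n lam T) {j c v : ℕ}
    (hv : v ∈ T j c) : v + j ≤ n + 1 := by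
  induction j generalizing v with
  | zero => have := SVCT_entry h hv; omega
  | succ j ih =>
    rcases Nat.eq_zero_or_pos j with rfl | hj
    · have := SVCT_entry h hv; omega
    · obtain ⟨⟨b, hb⟩, hlt⟩ := SVCT_below hlam h hj hv
      have := ih hb
      have := hlt b hb
      omega

lemma SVCT_right (h : IsSVCT n lam T) {j c v : ℕ} (hc : c < lam 1) (hv : v ∈ T j c) :
    ∃ w ∈ T j (c + 1), v ≤ w := by
  have hb := SVCT_box h hv
  have hb' : ContraBox n lam j (c + 1) := by
    obtain ⟨h1, h2, h3, h4⟩ := hb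
    exact ⟨h1, h2, by omega, by omega⟩
  obtain ⟨w, hw⟩ := h.1 _ _ hb'
  exact ⟨w, hw, h.2.2.2.1 j c hb hb' v hv w hw⟩

/-- For every level `i` and row `j`, the boxes with an entry of level at most `i` are the
rightmost `m` ones, for some `m`. -/
lemma SVCT_threshold (h : IsSVCT n lam T) (i j : ℕ) :
    ∃ m, m ≤ lam 1 ∧ ∀ c, 1 ≤ c → c ≤ lam 1 →
      ((∃ v ∈ T j c, n + 1 - i ≤ v) ↔ lam 1 + 1 ≤ c + m) := by
  refine exists_threshold (lam 1) _ ?_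
  rintro c - hc ⟨v, hv, hiv⟩
  obtain ⟨w, hw, hvw⟩ := SVCT_right h hc hv
  exact ⟨w, hw, hiv.trans hvw⟩

lemma omega_surj (hlam : IsPartition n lam) (h : IsSVCT n lam T) :
    ∃ y M, IsMGTZ n lam y M ∧ Omega n lam y M = T := by
  classical
  choose Y hYle hY using SVCT_threshold h
  -- column `lam 1 + 1 - Y i j` is the leftmost one with an entry of level at most `i`
  have key : ∀ i j, 1 ≤ Y i j → ∃ v ∈ T j (lam 1 + 1 - Y i j), n + 1 - i ≤ v := by
    intro i j h1
    have := hYle i j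
    exact (hY i j _ (by omega) (by omega)).2 (by omega)
  have hYzero : ∀ i j, ¬ (1 ≤ j ∧ j ≤ i) → i ≤ n → Y i j = 0 := by
    intro i j hij hi
    by_contra h0
    obtain ⟨v, hv, hvi⟩ := key i j (by omega)
    have h1 := SVCT_entry_bound hlam h hv
    have h2 := (SVCT_box h hv).1
    omega
  have hYbot : ∀ j, 1 ≤ j → j ≤ n → Y n j = lam j := by
    intro j hj hjn
    have hle := hYle n j
    have hl := lam_le_one hlam j hj
    apply le_antisymm
    · by_contra hlt
      obtain ⟨v, hv, -⟩ := key n j (by omega)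
      have := (SVCT_box h hv).2.2
      omega
    · by_contra hlt
      obtain ⟨v, hv⟩ := h.1 j (lam 1 + 1 - lam j) ⟨hj, hjn, by omega, by omega⟩
      have h1 := (hY n j (lam 1 + 1 - lam j) (by omega) (by omega)).1
        ⟨v, hv, by have := SVCT_entry h hv; omega⟩
      omega
  have hYstep : ∀ i j, Y i j ≤ Y (i + 1) j := by
    intro i j
    rcases Nat.eq_zero_or_pos (Y i j) with h0 | h0
    · omega
    · obtain ⟨v, hv, hvi⟩ := key i j h0
      have hle := hYle i j
      have h1 := (hY (i + 1) j _ (by omega) (by omega)).1 ⟨v, hv, by omega⟩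
      omega
  have hYSE : ∀ i j, 1 ≤ j → i < n → Y (i + 1) (j + 1) ≤ Y i j := by
    intro i j hj hi
    rcases Nat.eq_zero_or_pos (Y (i + 1) (j + 1)) with h0 | h0
    · omega
    · obtain ⟨v, hv, hvi⟩ := key (i + 1) (j + 1) h0
      have hle := hYle (i + 1) (j + 1)
      obtain ⟨⟨b, hb⟩, hlt⟩ := SVCT_below hlam h hj hv
      have := hlt b hb
      have h1 := (hY i j _ (by omega) (by omega)).1 ⟨b, hb, by omega⟩
      omega
  let y : ℕ → ℕ → ℤ := fun i j => if i ≤ n then (Y i j : ℤ) else 0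
  have hy : ∀ i j, i ≤ n → y i j = Y i j := fun i j hi => if_pos hi
  let M : Finset (ℕ × ℕ) := (Finset.Icc 1 n ×ˢ Finset.Icc 1 n).filter
    (fun p => 1 ≤ Y (p.1 - 1) p.2 ∧ n + 1 - p.1 ∈ T p.2 (lam 1 + 1 - Y (p.1 - 1) p.2))
  have hM : ∀ i j, (i + 1, j) ∈ M ↔ (i < n ∧ 1 ≤ j ∧ j ≤ n) ∧ 1 ≤ Y i j ∧
      n - i ∈ T j (lam 1 + 1 - Y i j) := by
    intro i j
    have h1 : n + 1 - (i + 1) = n - i := by omega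
    simp only [M, Finset.mem_filter, Finset.mem_product, Finset.mem_Icc, Nat.add_sub_cancel, h1]
    refine and_congr_left fun _ => ?_
    omega
  refine ⟨y, M, ⟨⟨⟨?_, ?_⟩, ?_⟩, ?_⟩, ?_⟩
  · intro i j hj hji hi
    obtain ⟨i, rfl⟩ : ∃ k, i = k + 1 := ⟨i - 1, by omega⟩
    rw [Nat.add_sub_cancel, hy _ _ hi, hy _ _ hi, hy _ _ (by omega : i ≤ n)]
    have := hYstep i j
    have := hYSE i j hj (by omega)
    omega
  · intro i j hij
    by_cases hi : i ≤ n
    · rw [hy _ _ hi, hYzero i j (by omega) hi]; rfl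
    · exact if_neg hi
  · intro j hj hjn
    rw [hy _ _ le_rfl, hYbot j hj hjn]
  · rintro ⟨i, j⟩ hp
    obtain ⟨i, rfl⟩ : ∃ k, i = k + 1 := by
      refine ⟨i - 1, ?_⟩
      have := (Finset.mem_Icc.1 (Finset.mem_product.1 (Finset.mem_filter.1 hp).1).1).1
      simp only at this
      omega
    obtain ⟨⟨hi, hj, hjn⟩, h1, hv⟩ := (hM i j).1 hp
    have hji : j ≤ i := by
      by_contra hlt
      have := hYzero i j (by omega) hi.le
      omega
    simp only [Nat.add_sub_cancel]
    refine ⟨hj, by omega, by omega, ?_⟩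
    rw [hy _ _ hi.le, hy (i + 1) _ hi]
    by_contra hlt
    -- otherwise the box above the marked one has an entry of level at most `i + 1`,
    -- contradicting strictness of the column
    have hle := hYle i j
    obtain ⟨w, hw, hwi⟩ := (hY (i + 1) (j + 1) (lam 1 + 1 - Y i j) (by omega) (by omega)).2
      (by omega)
    have := (SVCT_below hlam h hj hw).2 _ hv
    omega
  · funext j c
    ext v
    constructor
    · intro hv
      obtain ⟨i, hi, rfl⟩ := exists_level_of_mem hv
      have hle := hYle i j
      have hle' := hYle (i + 1) j
      rw [mem_omega hi, hM, hy _ _ hi.le, hy (i + 1) _ hi] at hv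
      rcases hv with hv | ⟨⟨-, h1, hv⟩, hd⟩
      · obtain ⟨w, hw, hwi⟩ := (hY (i + 1) j c (by omega) (by omega)).2 (by omega)
        have hnot : ¬ ∃ v ∈ T j c, n + 1 - i ≤ v := fun hex => by
          have := (hY i j c (by omega) (by omega)).1 hex
          omega
        have : w = n - i := by
          by_contra hne
          exact hnot ⟨w, hw, by omega⟩
        exact this ▸ hw
      · have : lam 1 + 1 - Y i j = c := by omega
        exact this ▸ hv
    · intro hv
      have hb := SVCT_box h hv
      have hve := SVCT_entry h hv
      obtain ⟨i, hi, rfl⟩ : ∃ i, i < n ∧ v = n - i := ⟨n - v, by omega, by omega⟩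
      have hle := hYle i j
      obtain ⟨hj, hjn, hc, hc'⟩ := hb
      have h1 := (hY (i + 1) j c (by omega) hc').1 ⟨_, hv, by omega⟩
      rw [mem_omega hi, hM, hy _ _ hi.le, hy (i + 1) _ hi]
      by_cases hlt : Y i j + c < lam 1 + 1
      · left; omega
      · right
        have heq : Y i j + c = lam 1 + 1 := by
          by_contra hne
          -- the box to the left would have an entry exceeding `n - i`
          obtain ⟨w, hw, hwi⟩ := (hY i j (c - 1) (by omega) (by omega)).2 (by omega)
          have hcc : c - 1 + 1 = c := by omega
          have := h.2.2.2.1 j (c - 1) (SVCT_box h hw)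
            (by rw [hcc]; exact SVCT_box h hv) w hw (n - i) (by rw [hcc]; exact hv)
          omega
        have hcc : lam 1 + 1 - Y i j = c := by omega
        exact ⟨⟨⟨hi, hj, hjn⟩, by omega, by rw [hcc]; exact hv⟩, by omega⟩

end Inverse

/-- For every `n > 0` and `lam ∈ P[n]`, the map
`Ω : MGT_ℤ(lam) → SVCT_n(lam)` is a bijection between the set of marked GT
patterns with bottom row `lam` and the set of set-valued contratableaux of
shape `lam` with entries `≤ n`. -/
theorem omega_bijOn (n : ℕ) (hn : 0 < n) (lam : ℕ → ℕ) (hlam : IsPartition n lam) :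
    Set.BijOn (fun p : (ℕ → ℕ → ℤ) × Finset (ℕ × ℕ) => Omega n lam p.1 p.2)
      {p | IsMGTZ n lam p.1 p.2}
      {S | IsSVCT n lam S} := by
  refine ⟨fun p hp => omega_isSVCT hlam hp, ?_, ?_⟩
  · rintro ⟨y, M⟩ h ⟨y', M'⟩ h' he
    obtain ⟨rfl, rfl⟩ := omega_inj hlam h h' he
    rfl
  · intro T hT
    obtain ⟨y, M, h, he⟩ := omega_surj hlam hT
    exact ⟨(y, M), h, he⟩
end

section
/- For every positive integer n and every λ ∈ P[n], the bijection Ω : MGT_Z(λ) → SVCT_n(λ) restricts to a bijection between GT_Z(λ) (identified with the marked GT patterns having empty marking set) and Cont_n(λ), the set of contratableaux of shape λ with entries ≤ n. -/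
/-! ### Gelfand–Tsetlin patterns -/

lemma partition_le_one {n : ℕ} {lam : ℕ → ℕ} (h : IsPartition n lam) (j : ℕ) :
    lam j ≤ lam 1 := by
  rcases Nat.eq_zero_or_pos j with rfl | hj
  · rw [h.1]; exact Nat.zero_le _
  · induction j, hj using Nat.le_induction with
    | base => exact le_rfl
    | succ k hk ih => exact (h.2.1 k hk).trans ih

/-- Moving down-right in the triangle decreases the entries and ends on the bottom row, whose
entries are parts of `lam`. -/
lemma gt_nonneg {n : ℕ} {lam : ℕ → ℕ} {x : ℕ → ℕ → ℤ} (h : IsGTZ n lam x) (i j : ℕ) :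
    0 ≤ x i j := by
  by_cases hin : 1 ≤ j ∧ j ≤ i ∧ i ≤ n
  · obtain ⟨k, hk⟩ : ∃ k, n = i + k := ⟨n - i, by omega⟩
    induction k generalizing i j with
    | zero =>
      obtain rfl : n = i := by omega
      rw [h.2 j hin.1 hin.2.1]; positivity
    | succ k ih =>
      have h1 := (h.1.1 (i + 1) j hin.1 (by omega) (by omega)).2
      have h2 := ih (i + 1) (j + 1) (by omega) (by omega)
      simp only [Nat.add_sub_cancel] at h1
      exact h2.trans h1
  · exact (h.1.2 i j hin).ge

lemma gt_step {n : ℕ} {lam : ℕ → ℕ} {x : ℕ → ℕ → ℤ} (h : IsGTZ n lam x) (i j : ℕ)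
    (hi : i + 1 ≤ n) : x i j ≤ x (i + 1) j := by
  by_cases hin : 1 ≤ j ∧ j ≤ i
  · simpa using (h.1.1 (i + 1) j hin.1 (by omega) hi).1
  · rw [h.1.2 i j (by omega)]; exact gt_nonneg h _ _

lemma gt_mono {n : ℕ} {lam : ℕ → ℕ} {x : ℕ → ℕ → ℤ} (h : IsGTZ n lam x) {i i' : ℕ} (j : ℕ)
    (hi : i ≤ i') (hn : i' ≤ n) : x i j ≤ x i' j := by
  induction i', hi using Nat.le_induction with
  | base => exact le_rfl
  | succ k hk ih => exact (ih (by omega)).trans (gt_step h k j hn)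

lemma gt_le_part {n : ℕ} {lam : ℕ → ℕ} {x : ℕ → ℕ → ℤ} (h : IsGTZ n lam x) (i j : ℕ) :
    x i j ≤ lam j := by
  by_cases hin : 1 ≤ j ∧ j ≤ i ∧ i ≤ n
  · rw [← h.2 j hin.1 (by omega)]; exact gt_mono h j hin.2.2 le_rfl
  · rw [h.1.2 i j hin]; positivity

/-! ### The tableau of a pattern -/

lemma mem_omega_empty {n : ℕ} {lam : ℕ → ℕ} {x : ℕ → ℕ → ℤ} {j c v : ℕ} :
    v ∈ Omega n lam x ∅ j c ↔ (1 ≤ v ∧ v ≤ n) ∧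
      x (n - v) j < (lam 1 : ℤ) + 1 - c ∧ (lam 1 : ℤ) + 1 - c ≤ x (n + 1 - v) j := by
  simp [Omega]

/-- The entries `≥ n + 1 - i` of row `j` of `Ω(x)` occupy the `x i j` rightmost boxes. -/
lemma le_iff_exists_mem_omega {n : ℕ} {lam : ℕ → ℕ} {x : ℕ → ℕ → ℤ} (h : IsGTZ n lam x)
    {i j c : ℕ} (hi : i ≤ n) (hc : c ≤ lam 1) :
    (lam 1 : ℤ) + 1 - c ≤ x i j ↔ ∃ v ∈ Omega n lam x ∅ j c, n + 1 - i ≤ v := by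
  constructor
  · intro hd
    classical
    -- the entry is `n + 1 - k` for the least `k` with `d ≤ x k j`
    have hex : ∃ k, (lam 1 : ℤ) + 1 - c ≤ x k j := ⟨i, hd⟩
    have hk := Nat.find_spec hex
    have hki := Nat.find_min' hex hd
    have hmin := fun m => Nat.find_min (m := m) hex
    generalize Nat.find hex = k at hk hki hmin
    have hk0 : k ≠ 0 := by
      rintro rfl
      rw [h.1.2 0 j (by omega)] at hk
      omega
    refine ⟨n + 1 - k, mem_omega_empty.2 ⟨by omega, ?_, ?_⟩, by omega⟩
    · have := hmin (k - 1) (by omega)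
      rw [show n - (n + 1 - k) = k - 1 by omega]
      omega
    · rwa [show n + 1 - (n + 1 - k) = k by omega]
  · rintro ⟨v, hv, hiv⟩
    rw [mem_omega_empty] at hv
    exact hv.2.2.trans (gt_mono h j (by omega) hi)

lemma omega_box {n : ℕ} {lam : ℕ → ℕ} {x : ℕ → ℕ → ℤ} (hlam : IsPartition n lam)
    (h : IsGTZ n lam x) {j c v : ℕ} (hv : v ∈ Omega n lam x ∅ j c) : ContraBox n lam j c := by
  rw [mem_omega_empty] at hv
  obtain ⟨⟨h1, h2⟩, h3, h4⟩ := hv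
  have h5 := gt_nonneg h (n - v) j
  have h6 := gt_le_part h (n + 1 - v) j
  have h7 := partition_le_one hlam j
  have hin : 1 ≤ j ∧ j ≤ n + 1 - v ∧ n + 1 - v ≤ n := by
    by_contra hcon
    have := h.1.2 _ _ hcon
    omega
  refine ⟨hin.1, by omega, by omega, by omega⟩

/-- Used with the roles of `a` and `b` exchanged, this says that a box has at most one entry. -/
lemma omega_unique {n : ℕ} {lam : ℕ → ℕ} {x : ℕ → ℕ → ℤ} (h : IsGTZ n lam x) {j c a b : ℕ}
    (ha : a ∈ Omega n lam x ∅ j c) (hb : b ∈ Omega n lam x ∅ j c) : a ≤ b := by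
  rw [mem_omega_empty] at ha hb
  by_contra hcon
  have := gt_mono h (i := n + 1 - a) (i' := n - b) j (by omega) (by omega)
  omega

lemma omega_mem_target {n : ℕ} {lam : ℕ → ℕ} {x : ℕ → ℕ → ℤ} (hlam : IsPartition n lam)
    (h : IsGTZ n lam x) :
    IsSVCT n lam (Omega n lam x ∅) ∧
      ∀ j c, ContraBox n lam j c → (Omega n lam x ∅ j c).card = 1 := by
  have hne : ∀ j c, ContraBox n lam j c → (Omega n lam x ∅ j c).Nonempty := by
    rintro j c ⟨h1, h2, h3, h4⟩
    have h5 := h.2 j h1 h2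
    obtain ⟨v, hv, -⟩ := (le_iff_exists_mem_omega h (i := n) (j := j) le_rfl h4).1 (by omega)
    exact ⟨v, hv⟩
  refine ⟨⟨hne, fun j c _ => Finset.filter_subset _ _, ?_, ?_, ?_⟩, ?_⟩
  · intro j c hb
    rw [Finset.eq_empty_iff_forall_notMem]
    exact fun v hv => hb (omega_box hlam h hv)
  · intro j c _ _ a ha b hb
    rw [mem_omega_empty] at ha hb
    by_contra hcon
    have := gt_mono h (i := n + 1 - a) (i' := n - b) j (by omega) (by omega)
    push_cast at hb
    omega
  · intro j c hj _ a ha b hb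
    have hja := (omega_box hlam h hb).2.2.2
    rw [mem_omega_empty] at ha hb
    have hlt : j < n + 1 - a := by
      by_contra hcon
      have := h.1.2 (n + 1 - a) (j + 1) (by omega)
      omega
    have hint := (h.1.1 (n + 1 - a) j hj.1 hlt (by omega)).2
    rw [show n + 1 - a - 1 = n - a by omega] at hint
    by_contra hcon
    have := gt_mono h (i := n - a) (i' := n - b) j (by omega) (by omega)
    omega
  · intro j c hb
    obtain ⟨v, hv⟩ := hne j c hb
    rw [Finset.card_eq_one]
    refine ⟨v, Finset.eq_singleton_iff_unique_mem.2 ⟨hv, fun w hw => ?_⟩⟩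
    exact le_antisymm (omega_unique h hw hv) (omega_unique h hv hw)

/-! ### The pattern of a tableau -/

/-- The columns of the boxes in row `j` of `S` having an entry `≥ n + 1 - i`. -/
def bigCols (n L : ℕ) (S : ℕ → ℕ → Finset ℕ) (i j : ℕ) : Finset ℕ :=
  (Finset.Icc 1 L).filter (fun c => ∃ v ∈ S j c, n + 1 - i ≤ v)

/-- The candidate inverse of `Ω`: the entry `(i, j)` counts the boxes in row `j` of `S` having an
entry `≥ n + 1 - i`.  The vanishing for `j = 0` and for `i < j` is not imposed: it holds for
contratableaux. -/
def countPattern (n L : ℕ) (S : ℕ → ℕ → Finset ℕ) : ℕ → ℕ → ℤ :=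
  fun i j => if i ≤ n then ((bigCols n L S i j).card : ℤ) else 0

/-- A set of columns in `[1, L]` closed under moving one step to the right consists of the
rightmost columns, so membership is read off from its cardinality. -/
lemma mem_iff_le_card {L : ℕ} {F : Finset ℕ} (hF : F ⊆ Finset.Icc 1 L)
    (hs : ∀ c ∈ F, c + 1 ≤ L → c + 1 ∈ F) {c : ℕ} (hcL : c ≤ L) :
    L + 1 - c ≤ F.card ↔ c ∈ F := by
  have hup : ∀ a ∈ F, ∀ b, a ≤ b → b ≤ L → b ∈ F := by
    intro a ha b hab
    induction b, hab using Nat.le_induction with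
    | base => exact fun _ => ha
    | succ k hk ih => exact fun hkL => hs k (ih (by omega)) hkL
  constructor
  · intro hcard
    by_contra hcF
    have hsub : F ⊆ Finset.Icc (c + 1) L := by
      intro b hb
      have h1 := Finset.mem_Icc.1 (hF hb)
      rw [Finset.mem_Icc]
      refine ⟨?_, h1.2⟩
      by_contra hcon
      exact hcF (hup b hb c (by omega) hcL)
    have := Finset.card_le_card hsub
    rw [Nat.card_Icc] at this
    omega
  · intro hcF
    have hsub : Finset.Icc c L ⊆ F := by
      intro b hb
      rw [Finset.mem_Icc] at hb
      exact hup c hcF b hb.1 hb.2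
    have := Finset.card_le_card hsub
    rwa [Nat.card_Icc] at this

lemma svct_box {n : ℕ} {lam : ℕ → ℕ} {S : ℕ → ℕ → Finset ℕ} (hS : IsSVCT n lam S) {j c v : ℕ}
    (hv : v ∈ S j c) : ContraBox n lam j c := by
  by_contra hcon
  rw [hS.2.2.1 j c hcon] at hv
  simp at hv

lemma contraBox_below {n : ℕ} {lam : ℕ → ℕ} (hlam : IsPartition n lam) {j c : ℕ} (hj : 1 ≤ j)
    (h : ContraBox n lam (j + 1) c) : ContraBox n lam j c := by
  obtain ⟨h1, h2, h3, h4⟩ := h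
  have := hlam.2.1 j hj
  exact ⟨hj, by omega, by omega, h4⟩

/-- Each of the `j - 1` boxes below a box in row `j` has larger entries, all at most `n`. -/
lemma svct_entry_le {n : ℕ} {lam : ℕ → ℕ} {S : ℕ → ℕ → Finset ℕ} (hlam : IsPartition n lam)
    (hS : IsSVCT n lam S) {j c v : ℕ} (hv : v ∈ S j c) : v + j ≤ n + 1 := by
  have hj := (svct_box hS hv).1
  induction j, hj using Nat.le_induction generalizing v with
  | base =>
    have := Finset.mem_Icc.1 (hS.2.1 _ _ (svct_box hS hv) hv)
    omega
  | succ k hk ih =>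
    have hb := svct_box hS hv
    have hb' := contraBox_below hlam hk hb
    obtain ⟨w, hw⟩ := hS.1 k c hb'
    have h1 := hS.2.2.2.2 k c hb' hb v hv w hw
    have := ih hw
    omega

lemma le_countPattern_iff {n : ℕ} {lam : ℕ → ℕ} {S : ℕ → ℕ → Finset ℕ} (hS : IsSVCT n lam S)
    {i j c : ℕ} (hi : i ≤ n) (hc : 1 ≤ c) (hcL : c ≤ lam 1) :
    (lam 1 : ℤ) + 1 - c ≤ countPattern n (lam 1) S i j ↔ ∃ v ∈ S j c, n + 1 - i ≤ v := by
  have key := mem_iff_le_card (F := bigCols n (lam 1) S i j) (Finset.filter_subset _ _) ?_ hcL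
  · have hmem : c ∈ bigCols n (lam 1) S i j ↔ ∃ v ∈ S j c, n + 1 - i ≤ v := by
      simp [bigCols, hc, hcL]
    rw [← hmem, ← key, countPattern, if_pos hi]
    omega
  · intro a ha haL
    simp only [bigCols, Finset.mem_filter, Finset.mem_Icc] at ha ⊢
    obtain ⟨-, v, hv, hiv⟩ := ha
    have hb := svct_box hS hv
    have hb' : ContraBox n lam j (a + 1) := by
      obtain ⟨h1, h2, h3, h4⟩ := hb
      exact ⟨h1, h2, by omega, haL⟩
    obtain ⟨w, hw⟩ := hS.1 _ _ hb'
    exact ⟨⟨by omega, haL⟩, w, hw, hiv.trans (hS.2.2.2.1 j a hb hb' v hv w hw)⟩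

lemma countPattern_isGTZ {n : ℕ} {lam : ℕ → ℕ} {S : ℕ → ℕ → Finset ℕ}
    (hlam : IsPartition n lam) (hS : IsSVCT n lam S) :
    IsGTZ n lam (countPattern n (lam 1) S) := by
  refine ⟨⟨?_, ?_⟩, ?_⟩
  · intro i j hj hji hin
    simp only [countPattern, if_pos hin, if_pos (show i - 1 ≤ n by omega)]
    constructor
    · refine Nat.cast_le.2 (Finset.card_le_card fun c hc => ?_)
      simp only [bigCols, Finset.mem_filter] at hc ⊢
      obtain ⟨hc, v, hv, hiv⟩ := hc
      exact ⟨hc, v, hv, by omega⟩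
    · refine Nat.cast_le.2 (Finset.card_le_card fun c hc => ?_)
      simp only [bigCols, Finset.mem_filter] at hc ⊢
      obtain ⟨hc, v, hv, hiv⟩ := hc
      have hb := svct_box hS hv
      have hb' := contraBox_below hlam hj hb
      obtain ⟨w, hw⟩ := hS.1 _ _ hb'
      have := hS.2.2.2.2 j c hb' hb v hv w hw
      exact ⟨hc, w, hw, by omega⟩
  · intro i j hij
    by_cases hin : i ≤ n
    · rw [countPattern, if_pos hin, Nat.cast_eq_zero, Finset.card_eq_zero,
        Finset.eq_empty_iff_forall_notMem]
      intro c hc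
      simp only [bigCols, Finset.mem_filter] at hc
      obtain ⟨hc, v, hv, hiv⟩ := hc
      have h1 := svct_entry_le hlam hS hv
      have h2 := (svct_box hS hv).1
      omega
    · rw [countPattern, if_neg hin]
  · intro j hj hjn
    have hle := partition_le_one hlam j
    have hset : bigCols n (lam 1) S n j = Finset.Icc (lam 1 - lam j + 1) (lam 1) := by
      ext c
      simp only [bigCols, Finset.mem_filter, Finset.mem_Icc]
      constructor
      · rintro ⟨hc, v, hv, -⟩
        obtain ⟨-, -, h3, h4⟩ := svct_box hS hv
        omega
      · intro hc
        have hb : ContraBox n lam j c := ⟨hj, hjn, by omega, hc.2⟩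
        obtain ⟨v, hv⟩ := hS.1 _ _ hb
        have := Finset.mem_Icc.1 (hS.2.1 _ _ hb hv)
        exact ⟨by omega, v, hv, by omega⟩
    rw [countPattern, if_pos le_rfl, hset, Nat.card_Icc]
    omega

lemma omega_countPattern {n : ℕ} {lam : ℕ → ℕ} {S : ℕ → ℕ → Finset ℕ}
    (hlam : IsPartition n lam) (hS : IsSVCT n lam S)
    (hcard : ∀ j c, ContraBox n lam j c → (S j c).card = 1) :
    Omega n lam (countPattern n (lam 1) S) ∅ = S := by
  have hGT := countPattern_isGTZ hlam hS
  funext j c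
  by_cases hb : ContraBox n lam j c
  · obtain ⟨w, hw⟩ := Finset.card_eq_one.1 (hcard j c hb)
    have hwn : 1 ≤ w ∧ w ≤ n := Finset.mem_Icc.1 (hS.2.1 j c hb (by simp [hw]))
    obtain ⟨-, -, hb3, hb4⟩ := hb
    have key : ∀ i, i ≤ n →
        ((lam 1 : ℤ) + 1 - c ≤ countPattern n (lam 1) S i j ↔ n + 1 - i ≤ w) := by
      intro i hi
      rw [le_countPattern_iff hS hi (by omega) hb4, hw]
      simp
    ext v
    rw [mem_omega_empty, hw, Finset.mem_singleton]
    constructor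
    · rintro ⟨hv, h1, h2⟩
      rw [key _ (by omega)] at h2
      rw [← not_le, key _ (by omega)] at h1
      omega
    · rintro rfl
      refine ⟨hwn, ?_, ?_⟩
      · rw [← not_le, key _ (by omega)]
        omega
      · rw [key _ (by omega)]
        omega
  · rw [hS.2.2.1 j c hb, Finset.eq_empty_iff_forall_notMem]
    exact fun v hv => hb (omega_box hlam hGT hv)

/-- For every `n > 0` and `lam ∈ P[n]`, the bijection `Ω`
restricts to a bijection between `GT_ℤ(lam)` (marked GT patterns with empty
marking set) and `Cont_n(lam)`, the set of contratableaux of shape `lam` with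
entries `≤ n` (set-valued contratableaux all of whose cells are singletons). -/
theorem omega_restrict_bijOn (n : ℕ) (hn : 0 < n) (lam : ℕ → ℕ)
    (hlam : IsPartition n lam) :
    Set.BijOn (fun x : ℕ → ℕ → ℤ => Omega n lam x ∅)
      {x | IsGTZ n lam x}
      {S | IsSVCT n lam S ∧ ∀ j c, ContraBox n lam j c → (S j c).card = 1} := by
  refine ⟨fun x hx => omega_mem_target hlam hx, ?_, ?_⟩
  · intro x hx y hy hxy
    simp only [Set.mem_ofPred_eq] at hx hy hxy
    have key : ∀ i j, ∀ c : ℕ, i ≤ n → c ≤ lam 1 →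
        ((lam 1 : ℤ) + 1 - c ≤ x i j ↔ (lam 1 : ℤ) + 1 - c ≤ y i j) := by
      intro i j c hi hc
      rw [le_iff_exists_mem_omega hx hi hc, le_iff_exists_mem_omega hy hi hc, hxy]
    have hle : ∀ j, lam j ≤ lam 1 := partition_le_one hlam
    funext i j
    by_cases hi : i ≤ n
    · have h1 := gt_nonneg hx i j
      have h2 := gt_nonneg hy i j
      have h3 := gt_le_part hx i j
      have h4 := gt_le_part hy i j
      have h5 := hle j
      -- compare at the columns in positions `x i j` and `y i j` from the right; position `0`
      -- lies outside the tableau, but a zero entry is bounded by the other one anyway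
      have hxy' : x i j ≤ y i j := by
        rcases h1.eq_or_lt with h0 | h0
        · omega
        · have := (key i j (lam 1 + 1 - (x i j).toNat) hi (by omega)).1 (by omega)
          omega
      have hyx' : y i j ≤ x i j := by
        rcases h2.eq_or_lt with h0 | h0
        · omega
        · have := (key i j (lam 1 + 1 - (y i j).toNat) hi (by omega)).2 (by omega)
          omega
      exact le_antisymm hxy' hyx'
    · rw [hx.1.2 i j (by omega), hy.1.2 i j (by omega)]
  · rintro S ⟨hS, hcard⟩
    exact ⟨countPattern n (lam 1) S, countPattern_isGTZ hlam hS,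
      omega_countPattern hlam hS hcard⟩
end
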